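/- arXiv:1307.0313 — 5 statements merged into one kernel-verified Lean document; each statement's English description precedes it below -/
import Mathlib

section
/- (Shargorodsky) Let A be a self-adjoint operator with domain D(A) in a separable complex Hilbert space H, and let 𝓛 ⊆ D(A) be a nonzero finite-dimensional subspace. If μ ∈ Spec₂(A, 𝓛), then the closed interval [Re(μ) − |Im(μ)|, Re(μ) + |Im(μ)|] intersects Spec(A); that is, there exists λ ∈ Spec(A) with |λ − Re(μ)| ≤ |Im(μ)|. -/
open scoped InnerProductSpace

variable {H : Type*} [NormedAddCommGroup H] [InnerProductSpace ℂ H] [CompleteSpace H]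

/-- `z` belongs to the resolvent set of the (possibly unbounded) operator `T`. -/
def HasBoundedResolvent (T : H →ₗ.[ℂ] H) (z : ℂ) : Prop :=
  ∃ R : H →L[ℂ] H,
    (∀ y : H, ∃ h : R y ∈ T.domain, z • R y - T ⟨R y, h⟩ = y) ∧
    (∀ x : T.domain, R (z • (x : H) - T x) = (x : H))

/-- The spectrum of a (possibly unbounded) operator given as a `LinearPMap`. -/
def pSpectrum (T : H →ₗ.[ℂ] H) : Set ℂ :=
  {z : ℂ | ¬ HasBoundedResolvent T z}

/-- The second order spectrum of `T` relative to a subspace `L ⊆ D(T)`. -/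
def secondOrderSpectrum (T : H →ₗ.[ℂ] H) (L : Submodule ℂ T.domain) : Set ℂ :=
  {z : ℂ | ∃ u : L, u ≠ 0 ∧ ∀ v : L,
    ⟪T (u : T.domain) - z • ((u : T.domain) : H),
      T (v : T.domain) - (starRingEnd ℂ z) • ((v : T.domain) : H)⟫_ℂ = 0}

theorem pm_symm_aux {T : H →ₗ.[ℂ] H} (hT : IsSelfAdjoint T) (x y : T.domain) :
    ⟪T x, (y : H)⟫_ℂ = ⟪(x : H), T y⟫_ℂ := by
  have h := LinearPMap.adjoint_isFormalAdjoint (T := T) hT.dense_domain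
  rw [LinearPMap.isSelfAdjoint_def.mp hT] at h
  exact h x y

theorem exists_real_spec_aux [Nontrivial H] (R : H →L[ℂ] H) (hR : IsSelfAdjoint R) :
    ∃ s : ℝ, (s : ℂ) ∈ spectrum ℂ R ∧ |s| = ‖R‖ := by
  obtain ⟨z, hz, hzn⟩ := spectrum.exists_nnnorm_eq_spectralRadius R
  rw [hR.spectralRadius_eq_nnnorm] at hzn
  have h1 : ‖z‖ = ‖R‖ := by
    have : ‖z‖₊ = ‖R‖₊ := by exact_mod_cast hzn
    exact congrArg NNReal.toReal this
  have h2 : z = (z.re : ℂ) := hR.mem_spectrum_eq_re hz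
  refine ⟨z.re, h2 ▸ hz, ?_⟩
  rw [← h1]
  conv_rhs => rw [h2]
  rw [Complex.norm_real, Real.norm_eq_abs]

theorem resolvent_aux (T : H →ₗ.[ℂ] H) (a lam s : ℂ) (hs : s ≠ 0) (hal : s * (a - lam) = 1)
    (R : H →L[ℂ] H)
    (hR1 : ∀ y : H, ∃ h : R y ∈ T.domain, a • R y - T ⟨R y, h⟩ = y)
    (hR2 : ∀ x : T.domain, R (a • (x : H) - T x) = (x : H))
    (hl : HasBoundedResolvent T lam) : s ∉ spectrum ℂ R := by
  obtain ⟨S, hS1, hS2⟩ := hl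
  have e1 : ∀ y, s • R y + R (S y) = s • S y := by
    intro y
    obtain ⟨h, hy⟩ := hS1 y
    have h3 := hR2 ⟨S y, h⟩
    have h4 : s • (a • S y - T ⟨S y, h⟩) = s • y + S y := by
      have : s • (a • S y - T ⟨S y, h⟩)
          = s • (lam • S y - T ⟨S y, h⟩) + (s * (a - lam)) • S y := by module
      rw [this, hal, hy, one_smul]
    rw [← map_smul, ← map_add, ← h4, map_smul]
    exact congrArg (s • ·) h3
  have e2 : ∀ y, s • S y = s • R y + S (R y) := by
    intro y
    obtain ⟨h, hy⟩ := hR1 y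
    have h3 := hS2 ⟨R y, h⟩
    have h4 : s • (lam • R y - T ⟨R y, h⟩) = s • y - R y := by
      have : s • (lam • R y - T ⟨R y, h⟩)
          = s • (a • R y - T ⟨R y, h⟩) - (s * (a - lam)) • R y := by module
      rw [this, hal, hy, one_smul]
    have h5 : s • S y - S (R y) = s • R y := by
      rw [← map_smul, ← map_sub, ← h4, map_smul]
      exact congrArg (s • ·) h3
    rw [← h5]; abel
  rw [spectrum.notMem_iff]
  have hu : ∀ U V : H →L[ℂ] H, U * V = 1 → V * U = 1 → IsUnit U :=
    fun U V h1 h2 => ⟨⟨U, V, h1, h2⟩, rfl⟩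
  refine hu _ ((s⁻¹ * s⁻¹) • (algebraMap ℂ (H →L[ℂ] H) s + S)) ?_ ?_
  · ext y
    have h := e1 y
    simp only [Algebra.algebraMap_eq_smul_one, mul_apply_eq_comp,
      _root_.sub_apply, _root_.smul_apply,
      _root_.add_apply, one_apply_eq_self, map_smul, map_add]
    have : (s⁻¹ * s⁻¹) • (s • (s • y - R y) + (s • S y - R (S y)))
        = (s⁻¹ * s * (s⁻¹ * s)) • y := by
      rw [← h]; module
    rw [this, inv_mul_cancel₀ hs]; simp
  · ext y
    have h := e2 y
    simp only [Algebra.algebraMap_eq_smul_one, mul_apply_eq_comp,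
      _root_.sub_apply, _root_.smul_apply,
      _root_.add_apply, one_apply_eq_self, map_smul, map_sub]
    have : s • (s⁻¹ * s⁻¹) • (s • y + S y) - (s⁻¹ * s⁻¹) • (s • R y + S (R y))
        = (s⁻¹ * s * (s⁻¹ * s)) • y := by
      rw [← h]; module
    rw [this, inv_mul_cancel₀ hs]; simp

theorem norm_aux (p u : H) (b : ℝ) (hsym : ⟪p, u⟫_ℂ = ⟪u, p⟫_ℂ)
    (h : ⟪p - ((b : ℂ) * Complex.I) • u, p + ((b : ℂ) * Complex.I) • u⟫_ℂ = 0) :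
    ‖p‖ = |b| * ‖u‖ := by
  have hre : (⟪u, p⟫_ℂ).im = 0 := by
    have h1 := inner_conj_symm (𝕜 := ℂ) u p
    rw [hsym] at h1
    exact Complex.conj_eq_iff_im.mp h1
  simp only [inner_sub_left, inner_add_right, inner_smul_left, inner_smul_right, hsym,
    inner_self_eq_norm_sq_to_K] at h
  have h2 := congrArg Complex.re h
  simp [hre, ← Complex.ofReal_pow] at h2
  have h3 : ‖p‖ ^ 2 = (|b| * ‖u‖) ^ 2 := by
    rw [mul_pow, sq_abs]; nlinarith
  exact (pow_left_inj₀ (norm_nonneg _) (by positivity) two_ne_zero).mp h3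

/-- Shargorodsky: if `μ ∈ Spec₂(A, 𝓛)` then the interval
`[Re μ − |Im μ|, Re μ + |Im μ|]` intersects `Spec(A)`. -/
theorem shargorodsky
    [TopologicalSpace.SeparableSpace H]
    (T : H →ₗ.[ℂ] H) (hT : IsSelfAdjoint T)
    (L : Submodule ℂ T.domain) (hL : L ≠ ⊥) (hfd : FiniteDimensional ℂ L)
    (μ : ℂ) (hμ : μ ∈ secondOrderSpectrum T L) :
    ∃ lam : ℝ, (lam : ℂ) ∈ pSpectrum T ∧ |lam - μ.re| ≤ |μ.im| := by
  by_cases ha : HasBoundedResolvent T (μ.re : ℂ)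
  swap
  · exact ⟨μ.re, ha, by simp⟩
  obtain ⟨u, hu0, hu⟩ := hμ
  have huv := hu u
  obtain ⟨R, hR1, hR2⟩ := ha
  set x : T.domain := (u : T.domain) with hx
  have hx0 : (x : H) ≠ 0 := by
    intro h
    apply hu0
    ext
    exact h
  have : Nontrivial H := ⟨⟨(x : H), 0, hx0⟩⟩
  set p : H := T x - (μ.re : ℂ) • (x : H) with hp
  have hnorm : ‖p‖ = |μ.im| * ‖(x : H)‖ := by
    apply norm_aux
    · simp only [hp, inner_sub_left, inner_sub_right, inner_smul_left, inner_smul_right,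
        pm_symm_aux hT, Complex.conj_ofReal]
    · rw [← huv]
      congr 1
      · conv_rhs => rw [← Complex.re_add_im μ]
        rw [hp]; module
      · have : (starRingEnd ℂ) μ = (μ.re : ℂ) - μ.im * Complex.I := by
          apply Complex.ext <;> simp
        rw [this, hp]; module
  have hRsa : IsSelfAdjoint R := by
    rw [ContinuousLinearMap.isSelfAdjoint_iff_isSymmetric]
    intro y w
    obtain ⟨h1, hy⟩ := hR1 y
    obtain ⟨h2, hw⟩ := hR1 w
    have h3 := pm_symm_aux hT ⟨R y, h1⟩ ⟨R w, h2⟩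
    simp only at h3
    change ⟪R y, w⟫_ℂ = ⟪y, R w⟫_ℂ
    conv_lhs => rw [← hw]
    conv_rhs => rw [← hy]
    simp only [inner_sub_left, inner_sub_right, inner_smul_left, inner_smul_right,
      Complex.conj_ofReal, h3]
  have hxpos : 0 < ‖(x : H)‖ := norm_pos_iff.mpr hx0
  have hRp : ‖(x : H)‖ ≤ ‖R‖ * (|μ.im| * ‖(x : H)‖) := by
    have h := R.le_opNorm ((μ.re : ℂ) • (x : H) - T x)
    rw [hR2 x, norm_sub_rev, ← hp, hnorm] at h
    exact h
  have hb : 1 ≤ ‖R‖ * |μ.im| := by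
    by_contra hc
    push Not at hc
    nlinarith
  obtain ⟨s, hs, hsn⟩ := exists_real_spec_aux R hRsa
  rw [← hsn] at hb
  have hs0 : s ≠ 0 := by
    rintro rfl
    simp at hb
    linarith
  refine ⟨μ.re - s⁻¹, fun hl => ?_, ?_⟩
  · refine resolvent_aux T μ.re _ s (by exact_mod_cast hs0) ?_ R hR1 hR2 hl hs
    push_cast
    have : (s : ℂ) ≠ 0 := by exact_mod_cast hs0
    rw [sub_sub_cancel, mul_inv_cancel₀ this]
  · have : μ.re - s⁻¹ - μ.re = -s⁻¹ := by ring
    rw [this, abs_neg, abs_inv]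
    have hsp : 0 < |s| := abs_pos.mpr hs0
    rw [inv_le_iff_one_le_mul₀ hsp, mul_comm]
    exact hb
end

section
/- Let A be a self-adjoint operator with domain D(A) in a separable complex Hilbert space H and 𝓛 ⊆ D(A) a finite-dimensional subspace. Suppose μ = α + iβ with α, β ∈ ℝ, β ≠ 0, and suppose u ∈ 𝓛 is nonzero and satisfies ⟨(μ−A)u, (μ̄−A)v⟩ = 0 for all v ∈ 𝓛. Then β² = ‖(α−A)u‖²/‖u‖² and ⟨(A−α)u, u⟩ = 0. -/
open scoped InnerProductSpace

variable {H : Type*} [NormedAddCommGroup H] [InnerProductSpace ℂ H] [CompleteSpace H]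

/-- if `μ = α + iβ` with `β ≠ 0` and `0 ≠ u ∈ 𝓛` satisfies
`⟨(μ−A)u, (μ̄−A)v⟩ = 0` for all `v ∈ 𝓛`, then `β² = ‖(α−A)u‖²/‖u‖²` and
`⟨(A−α)u, u⟩ = 0`. -/
theorem beta_sq_eq_residual
    [TopologicalSpace.SeparableSpace H]
    (T : H →ₗ.[ℂ] H) (hT : IsSelfAdjoint T)
    (L : Submodule ℂ T.domain) (hfd : FiniteDimensional ℂ L)
    (α β : ℝ) (hβ : β ≠ 0)
    (u : L) (hu : u ≠ 0)
    (horth : ∀ v : L,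
      ⟪((α : ℂ) + (β : ℂ) * Complex.I) • ((u : T.domain) : H) - T (u : T.domain),
        ((α : ℂ) - (β : ℂ) * Complex.I) • ((v : T.domain) : H) - T (v : T.domain)⟫_ℂ = 0) :
    β ^ 2 = ‖(α : ℂ) • ((u : T.domain) : H) - T (u : T.domain)‖ ^ 2 / ‖((u : T.domain) : H)‖ ^ 2
    ∧ ⟪T (u : T.domain) - (α : ℂ) • ((u : T.domain) : H), ((u : T.domain) : H)⟫_ℂ = 0 := by
  have hd : Dense (T.domain : Set H) := hT.dense_domain
  have hfa := LinearPMap.adjoint_isFormalAdjoint hd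
  have hadj : T.adjoint = T := hT
  rw [hadj] at hfa
  have hs := hfa (u : T.domain) (u : T.domain)
  have h0 := horth u
  have hx : ((u : T.domain) : H) ≠ 0 := by
    simpa using hu
  generalize T (u : T.domain) = y at *
  generalize ((u : T.domain) : H) = x at *
  clear horth
  obtain ⟨w, rfl⟩ : ∃ w, y = (α : ℂ) • x - w := ⟨(α : ℂ) • x - y, by abel⟩
  have hs' : ⟪w, x⟫_ℂ = ⟪x, w⟫_ℂ := by
    simp only [inner_sub_left, inner_sub_right, inner_smul_left, inner_smul_right,
      Complex.conj_ofReal] at hs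
    exact sub_right_injective hs
  have e1 : ((α : ℂ) + (β : ℂ) * Complex.I) • x - ((α : ℂ) • x - w)
      = w + ((β : ℂ) * Complex.I) • x := by module
  have e2 : ((α : ℂ) - (β : ℂ) * Complex.I) • x - ((α : ℂ) • x - w)
      = w - ((β : ℂ) * Complex.I) • x := by module
  have e3 : (α : ℂ) • x - ((α : ℂ) • x - w) = w := by abel
  have e4 : (α : ℂ) • x - w - (α : ℂ) • x = -w := by abel
  rw [e1, e2] at h0
  rw [e3, e4]
  have him : (⟪w, x⟫_ℂ).im = 0 := by
    rw [← Complex.conj_eq_iff_im, inner_conj_symm, hs']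
  obtain ⟨r, hr⟩ : ∃ r : ℝ, ⟪w, x⟫_ℂ = r := ⟨_, Complex.ext rfl (by simp [him])⟩
  simp only [inner_sub_right, inner_add_left, inner_smul_left, inner_smul_right, ← hs', hr,
    inner_self_eq_norm_sq_to_K] at h0
  have hre := congrArg Complex.re h0
  have him2 := congrArg Complex.im h0
  simp [← Complex.ofReal_pow] at hre him2
  have hn : ‖x‖ ^ 2 ≠ 0 := by simpa using hx
  have hr0 : r = 0 := by
    have : β * r = 0 := by linarith
    simpa [hβ] using this
  refine ⟨?_, by rw [inner_neg_left, hr, hr0]; simp⟩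
  rw [eq_div_iff hn]
  linarith
end

section
/- (Mapping lemma) Let A be a self-adjoint operator with domain D(A) in a separable complex Hilbert space H, let 𝓛 ⊆ D(A) be a finite-dimensional subspace, and let a ∈ ℝ \ Spec(A). Set B = (A − a)^{−1} (a bounded self-adjoint operator), 𝓖 = (A − a)𝓛, and for z ≠ a set w = (z − a)^{−1}. Then z, z̄ ∈ Spec₂(A, 𝓛) if and only if w, w̄ ∈ Spec₂(B, 𝓖). -/
open scoped InnerProductSpace

variable {H : Type*} [NormedAddCommGroup H] [InnerProductSpace ℂ H] [CompleteSpace H]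

/-- The second order spectrum of a bounded operator `B` relative to a subspace `G ⊆ H`. -/
def secondOrderSpectrumCLM (B : H →L[ℂ] H) (G : Submodule ℂ H) : Set ℂ :=
  {z : ℂ | ∃ u : G, u ≠ 0 ∧ ∀ v : G,
    ⟪B (u : H) - z • ((u : G) : H), B (v : H) - (starRingEnd ℂ z) • ((v : G) : H)⟫_ℂ = 0}

theorem mapping_aux
    (T : H →ₗ.[ℂ] H) (L : Submodule ℂ T.domain)
    (a : ℝ) (B : H →L[ℂ] H)
    (hB1 : ∀ x : T.domain, B (T x - (a : ℂ) • (x : H)) = (x : H))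
    (G : Submodule ℂ H)
    (hG : G = Submodule.map (T.toFun - (a : ℂ) • T.domain.subtype) L)
    (z : ℂ) (hz : z ≠ (a : ℂ)) :
    z ∈ secondOrderSpectrum T L ↔ (z - a)⁻¹ ∈ secondOrderSpectrumCLM B G := by
  have hmem : ∀ y : H, y ∈ G ↔ ∃ x ∈ L, T x - (a : ℂ) • (x : H) = y := by
    intro y
    rw [hG, Submodule.mem_map]
    rfl
  have hne : z - a ≠ 0 := sub_ne_zero.mpr hz
  have key : ∀ (c : ℂ), c - a ≠ 0 → ∀ x : T.domain,
      B (T x - (a : ℂ) • (x : H)) - (c - a)⁻¹ • (T x - (a : ℂ) • (x : H))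
        = (-(c - a)⁻¹) • (T x - c • (x : H)) := by
    intro c hc x
    rw [hB1]
    have h1 : (x : H) = (c - a)⁻¹ • ((c - a) • (x : H)) := by
      rw [smul_smul, inv_mul_cancel₀ hc, one_smul]
    nth_rewrite 1 [h1]
    rw [← smul_sub, neg_smul, ← smul_neg]
    congr 1
    rw [sub_smul]
    abel
  have hne2 : (starRingEnd ℂ) z - a ≠ 0 := by
    intro h
    apply hne
    have := congrArg (starRingEnd ℂ) h
    simpa using this
  have hconj : (starRingEnd ℂ) ((z - a)⁻¹) = ((starRingEnd ℂ) z - a)⁻¹ := by simp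
  have keyi : ∀ x y : T.domain,
      ⟪B (T x - (a : ℂ) • (x : H)) - (z - a)⁻¹ • (T x - (a : ℂ) • (x : H)),
        B (T y - (a : ℂ) • (y : H)) -
          (starRingEnd ℂ) ((z - a)⁻¹) • (T y - (a : ℂ) • (y : H))⟫_ℂ = 0 ↔
      ⟪T x - z • (x : H), T y - (starRingEnd ℂ z) • (y : H)⟫_ℂ = 0 := by
    intro x y
    rw [hconj, key z hne, key _ hne2, inner_smul_left, inner_smul_right]
    have e1 : (starRingEnd ℂ) (-(z - a)⁻¹) ≠ 0 := by
      rw [map_ne_zero]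
      exact neg_ne_zero.mpr (inv_ne_zero hne)
    have e2 : -((starRingEnd ℂ) z - a)⁻¹ ≠ 0 := neg_ne_zero.mpr (inv_ne_zero hne2)
    rw [mul_eq_zero, mul_eq_zero]
    tauto
  constructor
  · rintro ⟨u, hu, h⟩
    refine ⟨⟨T u.1 - (a : ℂ) • ((u : T.domain) : H), (hmem _).2 ⟨u.1, u.2, rfl⟩⟩, ?_, ?_⟩
    · intro h0
      apply hu
      have h1 : T u.1 - (a : ℂ) • ((u : T.domain) : H) = 0 := congrArg Subtype.val h0
      have h2 := hB1 u.1
      rw [h1, map_zero] at h2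
      exact Subtype.ext (Subtype.ext h2.symm)
    · rintro ⟨v, hv⟩
      obtain ⟨y, hy, rfl⟩ := (hmem v).1 hv
      exact (keyi u.1 y).2 (h ⟨y, hy⟩)
  · rintro ⟨⟨u, hu'⟩, hu, h⟩
    obtain ⟨x, hx, rfl⟩ := (hmem u).1 hu'
    refine ⟨⟨x, hx⟩, ?_, ?_⟩
    · intro h0
      apply hu
      have h1 : x = 0 := congrArg Subtype.val h0
      apply Subtype.ext
      simp [h1]
    · rintro ⟨y, hy⟩
      exact (keyi x y).1 (h ⟨_, (hmem _).2 ⟨y, hy, rfl⟩⟩)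

/-- Mapping lemma: for `a ∈ ℝ \ Spec(A)`, `B = (A − a)⁻¹`,
`𝓖 = (A − a)𝓛` and `w = (z − a)⁻¹` (for `z ≠ a`):
`z, z̄ ∈ Spec₂(A, 𝓛)` iff `w, w̄ ∈ Spec₂(B, 𝓖)`. -/
theorem mapping_lemma
    [TopologicalSpace.SeparableSpace H]
    (T : H →ₗ.[ℂ] H) (hT : IsSelfAdjoint T)
    (L : Submodule ℂ T.domain) (hfd : FiniteDimensional ℂ L)
    (a : ℝ) (B : H →L[ℂ] H)
    (hB1 : ∀ x : T.domain, B (T x - (a : ℂ) • (x : H)) = (x : H))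
    (hB2 : ∀ y : H, ∃ h : B y ∈ T.domain, T ⟨B y, h⟩ - (a : ℂ) • B y = y)
    (G : Submodule ℂ H)
    (hG : G = Submodule.map (T.toFun - (a : ℂ) • T.domain.subtype) L)
    (z : ℂ) (hz : z ≠ (a : ℂ)) :
    (z ∈ secondOrderSpectrum T L ∧ (starRingEnd ℂ z) ∈ secondOrderSpectrum T L) ↔
      ((z - a)⁻¹ ∈ secondOrderSpectrumCLM B G ∧
        (starRingEnd ℂ) ((z - a)⁻¹) ∈ secondOrderSpectrumCLM B G) := by
  have hz2 : (starRingEnd ℂ) z ≠ (a : ℂ) := by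
    intro h
    apply hz
    have := congrArg (starRingEnd ℂ) h
    simpa using this
  have hconj : (starRingEnd ℂ) ((z - a)⁻¹) = ((starRingEnd ℂ) z - a)⁻¹ := by simp
  rw [hconj, mapping_aux T L a B hB1 G hG z hz, mapping_aux T L a B hB1 G hG _ hz2]
end

section
/- Let V : ℝ → ℝ be continuous, bounded below by b₀ > 0, with V(x) → ∞ as |x| → ∞ and |V(x)| ≤ k_b e^{b|x|} for every b > 0 and suitable k_b > 0. Let ψ_1, …, ψ_j be L²(ℝ)-orthonormal functions with −ψ_k'' + Vψ_k = λ_kψ_k and satisfying |ψ_k(x)|, |ψ_k'(x)|, |ψ_k''(x)| ≤ c e^{−a|x|} for all x (with c, a > 0). Let h_L : ℝ → [0,1] be the smooth cutoff equal to 1 on [−L, L], equal to 0 outside [−2L, 2L], and equal to exp(1 − 1/(1 − (x/L − 1)²)) on [L, 2L] and exp(1 − 1/(1 − (x/L + 1)²)) on [−2L, −L]. Set ψ_k^L = h_Lψ_k and U_j(L) = span{ψ_1^L, …, ψ_j^L}. Then there exist L_j > 0 and c_j > 0 such that for all L > L_j: (1) dim U_j(L) = j; and (2) for every v ∈ U_j(L)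 with ‖v‖_{L²} = 1 there exists φ ∈ span{ψ_1, …, ψ_j} with ‖φ‖_{L²} = 1 and ∫_ℝ (|v'(x) − φ'(x)|² + V(x)|v(x) − φ(x)|²) dx ≤ c_j e^{−2aL}. -/
open MeasureTheory

/-- The smooth cutoff `h_L`, equal to `1` on `[−L, L]` and `0` outside `[−2L, 2L]`. -/
noncomputable def hcut (L x : ℝ) : ℝ :=
  if x ≤ -(2 * L) then 0
  else if x ≤ -L then Real.exp (1 - 1 / (1 - (x / L + 1) ^ 2))
  else if x ≤ L then 1
  else if x ≤ 2 * L then Real.exp (1 - 1 / (1 - (x / L - 1) ^ 2))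
  else 0

lemma aux_g (t : ℝ) (h1 : -1 < t) (h2 : t < 1) :
    ∃ d, HasDerivAt (fun t : ℝ => Real.exp (1 - 1 / (1 - t ^ 2))) d t ∧ |d| ≤ 12 := by
  have hp : 0 < 1 - t ^ 2 := by nlinarith
  have hd : HasDerivAt (fun t : ℝ => 1 - t ^ 2) (-(2 * t)) t := by
    simpa using (hasDerivAt_pow 2 t).const_sub 1
  have h3 := ((hd.inv hp.ne').const_sub 1).exp
  refine ⟨_, by simpa [one_div] using h3, ?_⟩
  set s := (1 - t ^ 2)⁻¹ with hs
  have hs0 : 0 < s := inv_pos.2 hp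
  have e1 : -(2 * t) * -1 / (1 - t ^ 2) ^ 2 = 2 * t * s ^ 2 := by
    rw [hs]; field_simp
  have hq : s ^ 2 * Real.exp (1 - s) ≤ 6 := by
    have := Real.quadratic_le_exp_of_nonneg hs0.le
    have he := Real.exp_one_lt_d9
    rw [Real.exp_sub, ← mul_div_assoc, div_le_iff₀ (Real.exp_pos s)]
    have : s ^ 2 * Real.exp 1 ≤ s ^ 2 * 3 := by gcongr; linarith
    nlinarith
  have ht : |t| ≤ 1 := abs_le.2 ⟨h1.le, h2.le⟩
  have : ∀ z, z = Real.exp (1 - s) * (2 * t * s ^ 2) → |z| ≤ 12 := by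
    intro z hz
    have : |z| = 2 * |t| * (s ^ 2 * Real.exp (1 - s)) := by
      rw [hz]; simp only [abs_mul, abs_of_pos (Real.exp_pos _), abs_pow, abs_of_pos hs0]
      norm_num; ring
    rw [this]
    have h0 : 0 ≤ s ^ 2 * Real.exp (1 - s) := by positivity
    nlinarith [abs_nonneg t]
  rw [abs_neg]
  apply this
  rw [hs]; field_simp

lemma aux_g_le (t : ℝ) (h1 : -1 < t) (h2 : t < 1) :
    Real.exp (1 - 1 / (1 - t ^ 2)) ≤ 1 := by
  have hp : 0 < 1 - t ^ 2 := by nlinarith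
  rw [Real.exp_le_one_iff, sub_nonpos, le_div_iff₀ hp]
  nlinarith [sq_nonneg t]

lemma hcut_bd (L x : ℝ) (hL : 0 < L) (hx : x ≠ 2 * L) : 0 ≤ hcut L x ∧ hcut L x ≤ 1 := by
  unfold hcut
  split_ifs with h1 h2 h3 h4
  · simp
  · refine ⟨(Real.exp_pos _).le, aux_g_le _ ?_ ?_⟩
    · have : -2 < x / L := by rw [lt_div_iff₀ hL]; linarith
      linarith
    · have : x / L ≤ -1 := by rw [div_le_iff₀ hL]; linarith
      linarith
  · simp
  · refine ⟨(Real.exp_pos _).le, aux_g_le _ ?_ ?_⟩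
    · have : 1 < x / L := by rw [lt_div_iff₀ hL]; linarith
      linarith
    · have : x / L < 2 := by rw [div_lt_iff₀ hL]; exact lt_of_le_of_ne h4 hx
      linarith
  · simp

lemma hcut_in (L x : ℝ) (hL : 0 < L) (hx : |x| < L) : hcut L x = 1 := by
  obtain ⟨h1, h2⟩ := abs_lt.1 hx
  unfold hcut
  rw [if_neg (by linarith), if_neg (by linarith), if_pos h2.le]

lemma hcut_in_deriv (L x : ℝ) (hL : 0 < L) (hx : |x| < L) : HasDerivAt (hcut L) 0 x := by
  have : (hcut L) =ᶠ[nhds x] fun _ => 1 := by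
    filter_upwards [(isOpen_lt continuous_abs continuous_const).mem_nhds hx] with y hy
    exact hcut_in L y hL hy
  exact (hasDerivAt_const x (1:ℝ)).congr_of_eventuallyEq this

lemma hcut_deriv (L x : ℝ) (hL : 1 ≤ L) (h1 : x ≠ L) (h2 : x ≠ -L) (h3 : x ≠ 2 * L)
    (h4 : x ≠ -(2 * L)) : ∃ d, HasDerivAt (hcut L) d x ∧ |d| ≤ 12 := by
  have hL0 : 0 < L := by linarith
  have key : ∀ e : ℝ, -1 < x / L + e → x / L + e < 1 →
      (hcut L =ᶠ[nhds x] fun y => Real.exp (1 - 1 / (1 - (y / L + e) ^ 2))) →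
      ∃ d, HasDerivAt (hcut L) d x ∧ |d| ≤ 12 := by
    intro e g1 g2 g3
    obtain ⟨d, hd, hd'⟩ := aux_g _ g1 g2
    have hl : HasDerivAt (fun y : ℝ => y / L + e) (1 / L) x :=
      ((hasDerivAt_id x).div_const L).add_const e
    refine ⟨d * (1 / L), (HasDerivAt.comp (h₂ := fun t : ℝ => Real.exp (1 - 1 / (1 - t ^ 2))) x hd hl).congr_of_eventuallyEq g3, ?_⟩
    rw [abs_mul, abs_of_pos (by positivity : 0 < 1 / L)]
    have : 1 / L ≤ 1 := by rw [div_le_one hL0]; exact hL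
    nlinarith [abs_nonneg d, (by positivity : 0 < 1 / L)]
  rcases lt_or_gt_of_ne h4 with g | g
  · refine ⟨0, (hasDerivAt_const x (0:ℝ)).congr_of_eventuallyEq ?_, by norm_num⟩
    filter_upwards [Iio_mem_nhds g] with y hy
    unfold hcut
    rw [if_pos (le_of_lt hy)]
  rcases lt_or_gt_of_ne h2 with g' | g'
  · refine key 1 ?_ ?_ ?_
    · have : -2 < x / L := by rw [lt_div_iff₀ hL0]; linarith
      linarith
    · have : x / L ≤ -1 := by rw [div_le_iff₀ hL0]; linarith
      linarith
    · filter_upwards [Ioo_mem_nhds g g'] with y hy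
      unfold hcut
      rw [if_neg (not_le.2 hy.1), if_pos hy.2.le]
  rcases lt_or_gt_of_ne h1 with k | k
  · exact ⟨0, hcut_in_deriv L x hL0 (abs_lt.2 ⟨g', k⟩), by norm_num⟩
  rcases lt_or_gt_of_ne h3 with k' | k'
  · refine key (-1) ?_ ?_ ?_
    · have : 1 < x / L := by rw [lt_div_iff₀ hL0]; linarith
      linarith
    · have : x / L < 2 := by rw [div_lt_iff₀ hL0]; exact k'
      linarith
    · filter_upwards [Ioo_mem_nhds k k'] with y hy
      have := hy.1
      have := hy.2
      unfold hcut
      rw [if_neg (by linarith), if_neg (by linarith), if_neg (by linarith), if_pos hy.2.le,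
        sub_eq_add_neg (y / L)]
  · refine ⟨0, (hasDerivAt_const x (0:ℝ)).congr_of_eventuallyEq ?_, by norm_num⟩
    filter_upwards [Ioi_mem_nhds k'] with y hy
    have : 2 * L < y := hy
    unfold hcut
    rw [if_neg (by linarith), if_neg (by linarith), if_neg (by linarith), if_neg (by linarith)]

lemma exp_int (a : ℝ) (ha : 0 < a) (L : ℝ) (hL : 0 ≤ L) :
    Integrable (fun x : ℝ => (Set.Ioi L).indicator (fun y => Real.exp (-2 * a * y)) |x|) ∧
    ∫ x : ℝ, (Set.Ioi L).indicator (fun y => Real.exp (-2 * a * y)) |x|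
      = Real.exp (-2 * a * L) / a := by
  have hneg : -2 * a < 0 := by linarith
  have : ∫ x : ℝ, (Set.Ioi L).indicator (fun y => Real.exp (-2 * a * y)) |x|
      = Real.exp (-2 * a * L) / a := by
    rw [integral_comp_abs, setIntegral_indicator measurableSet_Ioi, Set.Ioi_inter_Ioi,
      sup_of_le_right hL, integral_exp_mul_Ioi hneg]
    field_simp
  refine ⟨?_, this⟩
  by_contra h
  rw [integral_undef h] at this
  have : 0 < Real.exp (-2 * a * L) / a := by positivity
  linarith

lemma exp_int0 (a : ℝ) (ha : 0 < a) :
    Integrable (fun x : ℝ => Real.exp (-2 * a * |x|)) ∧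
    ∫ x : ℝ, Real.exp (-2 * a * |x|) = 1 / a := by
  have hneg : -2 * a < 0 := by linarith
  have : ∫ x : ℝ, Real.exp (-2 * a * |x|) = 1 / a := by
    rw [integral_comp_abs (f := fun y => Real.exp (-2 * a * y)), integral_exp_mul_Ioi hneg]
    simp; field_simp
  refine ⟨?_, this⟩
  by_contra h
  rw [integral_undef h] at this
  have : 0 < 1 / a := by positivity
  linarith

lemma w_bound {j : ℕ} (f : Fin j → ℂ) (α : Fin j → ℂ) (M : ℝ) (h : ∀ k, ‖f k‖ ≤ M) :
    ‖∑ k, α k * f k‖ ≤ (∑ k, ‖α k‖) * M := by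
  refine (norm_sum_le _ _).trans ?_
  rw [Finset.sum_mul]
  refine Finset.sum_le_sum fun k _ => ?_
  rw [norm_mul]
  exact mul_le_mul_of_nonneg_left (h k) (norm_nonneg _)

lemma A_sq {j : ℕ} (α : Fin j → ℂ) : (∑ k, ‖α k‖) ^ 2 ≤ j * ∑ k, ‖α k‖ ^ 2 := by
  simpa using sq_sum_le_card_mul_sum_sq (s := Finset.univ) (f := fun k => ‖α k‖)

lemma exp_sq (a x : ℝ) : Real.exp (-a * |x|) ^ 2 = Real.exp (-2 * a * |x|) := by
  rw [← Real.exp_nat_mul]; congr 1; push_cast; ring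

lemma w_norm {j : ℕ} (ψ : Fin j → ℝ → ℂ) (hcont : ∀ k, Continuous (ψ k))
    (hON : ∀ k l, ∫ x : ℝ, (starRingEnd ℂ) (ψ k x) * ψ l x
            = if k = l then (1 : ℂ) else 0)
    (c a : ℝ) (ha : 0 < a) (hdec : ∀ k, ∀ x : ℝ, ‖ψ k x‖ ≤ c * Real.exp (-a * |x|))
    (α : Fin j → ℂ) :
    Integrable (fun x => ‖∑ k, α k * ψ k x‖ ^ 2) ∧
    ∫ x, ‖∑ k, α k * ψ k x‖ ^ 2 = ∑ k, ‖α k‖ ^ 2 := by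
  have hint : ∀ k l, Integrable (fun x => (starRingEnd ℂ) (ψ k x) * ψ l x) := by
    intro k l
    refine ((exp_int0 a ha).1.const_mul (c ^ 2)).mono'
      (Continuous.aestronglyMeasurable (by
        have := hcont k; have := hcont l; fun_prop)) (Filter.Eventually.of_forall fun x => ?_)
    rw [norm_mul, RCLike.norm_conj, ← exp_sq]
    calc _ ≤ (c * Real.exp (-a * |x|)) * (c * Real.exp (-a * |x|)) :=
          mul_le_mul (hdec k x) (hdec l x) (norm_nonneg _) ((norm_nonneg _).trans (hdec k x))
      _ = _ := by ring
  have hpt : ∀ x, ((‖∑ k, α k * ψ k x‖ ^ 2 : ℝ) : ℂ)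
      = ∑ k, ∑ l, ((starRingEnd ℂ) (α k) * α l) * ((starRingEnd ℂ) (ψ k x) * ψ l x) := by
    intro x
    rw [Complex.ofReal_pow, ← Complex.conj_mul', map_sum, Finset.sum_mul_sum]
    refine Finset.sum_congr rfl fun k _ => Finset.sum_congr rfl fun l _ => ?_
    rw [map_mul]; ring
  have hI : Integrable (fun x => ∑ k, ∑ l, ((starRingEnd ℂ) (α k) * α l) *
      ((starRingEnd ℂ) (ψ k x) * ψ l x)) :=
    integrable_finsetSum _ fun k _ => integrable_finsetSum _ fun l _ => (hint k l).const_mul _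
  constructor
  · have := hI.re
    refine this.congr (Filter.Eventually.of_forall fun x => ?_)
    simp only [← hpt]
    simp only [RCLike.re_to_complex, Complex.ofReal_re]
  · have : ((∫ x, ‖∑ k, α k * ψ k x‖ ^ 2 : ℝ) : ℂ) = ((∑ k, ‖α k‖ ^ 2 : ℝ) : ℂ) := by
      rw [← integral_complex_ofReal]
      simp only [hpt]
      rw [integral_finsetSum _ fun k _ => integrable_finsetSum _ fun l _ => (hint k l).const_mul _]
      simp only [integral_finsetSum _ fun l _ => (hint _ l).const_mul _, integral_const_mul, hON]
      simp [Complex.conj_mul']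
    exact_mod_cast this

/-- The mass lost by the cutoff. -/
lemma mass {j : ℕ} (ψ : Fin j → ℝ → ℂ) (hcont : ∀ k, Continuous (ψ k))
    (hON : ∀ k l, ∫ x : ℝ, (starRingEnd ℂ) (ψ k x) * ψ l x
            = if k = l then (1 : ℂ) else 0)
    (c a : ℝ) (ha : 0 < a) (hdec : ∀ k, ∀ x : ℝ, ‖ψ k x‖ ≤ c * Real.exp (-a * |x|))
    (α : Fin j → ℂ) (L : ℝ) (hL : 0 < L)
    (hv : Integrable (fun x => ‖(hcut L x : ℂ) * ∑ k, α k * ψ k x‖ ^ 2)) :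
    (∫ x, ‖(hcut L x : ℂ) * ∑ k, α k * ψ k x‖ ^ 2) ≤ ∑ k, ‖α k‖ ^ 2 ∧
    ∑ k, ‖α k‖ ^ 2 - ∫ x, ‖(hcut L x : ℂ) * ∑ k, α k * ψ k x‖ ^ 2
      ≤ (∑ k, ‖α k‖ ^ 2) * (j * c ^ 2 / a * Real.exp (-2 * a * L)) := by
  obtain ⟨h1, h2⟩ := w_norm ψ hcont hON c a ha hdec α
  have hne : ∀ y : ℝ, ∀ᵐ x : ℝ, x ≠ y := fun y => by
    simp [ae_iff]
  have hle : ∀ᵐ x : ℝ, ‖(hcut L x : ℂ) * ∑ k, α k * ψ k x‖ ^ 2 ≤ ‖∑ k, α k * ψ k x‖ ^ 2 := by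
    filter_upwards [hne (2 * L)] with x hx
    obtain ⟨g1, g2⟩ := hcut_bd L x hL hx
    rw [norm_mul, Complex.norm_real, Real.norm_of_nonneg g1]
    gcongr
    nlinarith [norm_nonneg (∑ k, α k * ψ k x)]
  rw [← h2]
  refine ⟨integral_mono_ae hv h1 hle, ?_⟩
  rw [← integral_sub h1 hv]
  obtain ⟨i1, i2⟩ := exp_int a ha L hL.le
  calc _ ≤ ∫ x : ℝ, ((∑ k, ‖α k‖ ^ 2) * (j * c ^ 2)) *
        (Set.Ioi L).indicator (fun y => Real.exp (-2 * a * y)) |x| := by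
        refine integral_mono_of_nonneg ?_ (i1.const_mul _) ?_
        · filter_upwards [hle] with x hx
          simpa using hx
        · filter_upwards [hne L, hne (-L)] with x hx hx'
          rcases lt_or_ge L |x| with h | h
          · rw [Set.indicator_of_mem (by exact h)]
            have b1 := w_bound (fun k => ψ k x) α _ (fun k => hdec k x)
            have b2 := A_sq α
            have : ‖∑ k, α k * ψ k x‖ ^ 2 ≤
              ((∑ k, ‖α k‖) * (c * Real.exp (-a * |x|))) ^ 2 := by gcongr
            rw [mul_pow, mul_pow, exp_sq] at this
            have h5 : (∑ k, ‖α k‖) ^ 2 * (c ^ 2 * Real.exp (-2 * a * |x|)) ≤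
              (j * ∑ k, ‖α k‖ ^ 2) * (c ^ 2 * Real.exp (-2 * a * |x|)) := by gcongr
            have := sq_nonneg ‖(hcut L x : ℂ) * ∑ k, α k * ψ k x‖
            nlinarith
          · have h' : |x| < L := by
              refine lt_of_le_of_ne h fun h => ?_
              rcases abs_choice x with g | g <;> rw [g] at h
              · exact hx h
              · exact hx' (by linarith)
            rw [hcut_in L x hL h', Set.indicator_of_notMem (by simpa using h)]
            simp
    _ = _ := by
      rw [integral_const_mul, i2, h2]; ring

lemma mem_span_form {j : ℕ} (f : Fin j → ℝ → ℂ) (v : ℝ → ℂ)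
    (hv : v ∈ Submodule.span ℂ (Set.range f)) : ∃ α : Fin j → ℂ, ∀ x, v x = ∑ k, α k * f k x := by
  obtain ⟨α, rfl⟩ := (Submodule.mem_span_range_iff_exists_fun ℂ).1 hv
  exact ⟨α, fun x => by simp⟩

/-- with `ψ_k^L = h_L ψ_k` and `U_j(L) = span{ψ_1^L, …, ψ_j^L}`, for `L`
large: (1) `dim U_j(L) = j`; (2) every `L²`-normalized `v ∈ U_j(L)` is exponentially close,
in the energy form `𝔞¹`, to some normalized `φ ∈ span{ψ_1, …, ψ_j}`. -/
theorem cutoff_span_approximation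
    (V : ℝ → ℝ) (b₀ : ℝ) (hb₀ : 0 < b₀) (hVlb : ∀ x, b₀ ≤ V x)
    (hVc : Continuous V)
    (hVinf : Filter.Tendsto V (Filter.cocompact ℝ) Filter.atTop)
    (hVgrow : ∀ b > (0 : ℝ), ∃ k > (0 : ℝ), ∀ x : ℝ, |V x| ≤ k * Real.exp (b * |x|))
    (j : ℕ) (hj : 0 < j)
    (ψ : Fin j → ℝ → ℂ) (lam : Fin j → ℝ)
    (hsm : ∀ k, ContDiff ℝ 2 (ψ k))
    (hON : ∀ k l, ∫ x : ℝ, (starRingEnd ℂ) (ψ k x) * ψ l x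
            = if k = l then (1 : ℂ) else 0)
    (heq : ∀ k, ∀ x : ℝ,
      -(deriv (deriv (ψ k)) x) + (V x : ℂ) * ψ k x = ((lam k : ℝ) : ℂ) * ψ k x)
    (c a : ℝ) (hc : 0 < c) (ha : 0 < a)
    (hdec : ∀ k, ∀ x : ℝ, ‖ψ k x‖ ≤ c * Real.exp (-a * |x|)
      ∧ ‖deriv (ψ k) x‖ ≤ c * Real.exp (-a * |x|)
      ∧ ‖deriv (deriv (ψ k)) x‖ ≤ c * Real.exp (-a * |x|)) :
    ∃ Lj > (0 : ℝ), ∃ cj > (0 : ℝ), ∀ L : ℝ, Lj < L →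
      (Module.finrank ℂ
        (Submodule.span ℂ
          (Set.range (fun k : Fin j => fun x : ℝ => (hcut L x : ℂ) * ψ k x))) = j)
      ∧ ∀ v : ℝ → ℂ,
          v ∈ Submodule.span ℂ
            (Set.range (fun k : Fin j => fun x : ℝ => (hcut L x : ℂ) * ψ k x)) →
          (∫ x : ℝ, ‖v x‖ ^ 2) = 1 →
          ∃ φ ∈ Submodule.span ℂ (Set.range ψ),
            (∫ x : ℝ, ‖φ x‖ ^ 2) = 1 ∧
            (∫ x : ℝ, (‖deriv (fun y => v y - φ y) x‖ ^ 2 + V x * ‖v x - φ x‖ ^ 2))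
              ≤ cj * Real.exp (-2 * a * L) := by
  have hcont : ∀ k, Continuous (ψ k) := fun k => (hsm k).continuous
  have hd0 : ∀ k, ∀ x : ℝ, ‖ψ k x‖ ≤ c * Real.exp (-a * |x|) := fun k x => (hdec k x).1
  have hj' : (0 : ℝ) < j := by exact_mod_cast hj
  set D : ℝ := j * c ^ 2 / a with hD
  have hD0 : 0 < D := by positivity
  set Λ : ℝ := ∑ k, |lam k| with hΛ
  have hΛ0 : 0 ≤ Λ := Finset.sum_nonneg fun k _ => abs_nonneg _
  set B : ℝ := 2 * j * c ^ 2 with hB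
  have hB0 : 0 < B := by positivity
  have hV0 : ∀ x, 0 < V x := fun x => hb₀.trans_le (hVlb x)
  have hVψ : ∀ k x, ‖(V x : ℂ) * ψ k x‖ ≤ (Λ + 1) * (c * Real.exp (-a * |x|)) := by
    intro k x
    have h1 : (V x : ℂ) * ψ k x = ((lam k : ℝ) : ℂ) * ψ k x + deriv (deriv (ψ k)) x := by
      rw [← heq k x]; ring
    have h2 : |lam k| ≤ Λ :=
      Finset.single_le_sum (f := fun k => |lam k|) (fun k _ => abs_nonneg _) (Finset.mem_univ k)
    rw [h1]
    refine (norm_add_le _ _).trans ?_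
    rw [norm_mul, Complex.norm_real, Real.norm_eq_abs, add_mul, one_mul]
    exact add_le_add (mul_le_mul h2 (hd0 k x) (norm_nonneg _) hΛ0) (hdec k x).2.2
  have hne : ∀ y : ℝ, ∀ᵐ x : ℝ, x ≠ y := fun y => by simp [ae_iff]
  refine ⟨1 + D / a, by positivity,
    (2 * D * (B * (Λ + 2)) + B * (Λ + 170)) / a, by positivity, fun L hL => ?_⟩
  have hDa : 0 < D / a := by positivity
  have hL1 : 1 ≤ L := by linarith
  have hL0 : 0 < L := by linarith
  have hε : D * Real.exp (-2 * a * L) ≤ 1 / 2 := by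
    have h1 := Real.add_one_le_exp (2 * a * L)
    have h2 : D < a * L := by
      have : D / a < L := by linarith
      rw [div_lt_iff₀ ha] at this; linarith
    have h3 : Real.exp (-2 * a * L) = (Real.exp (2 * a * L))⁻¹ := by
      rw [← Real.exp_neg]; congr 1; ring
    rw [h3, ← div_eq_mul_inv, div_le_iff₀ (Real.exp_pos _)]
    linarith
  have hform : ∀ (α : Fin j → ℂ) x, ∑ k, α k * ((hcut L x : ℂ) * ψ k x)
      = (hcut L x : ℂ) * ∑ k, α k * ψ k x := by
    intro α x
    rw [Finset.mul_sum]
    exact Finset.sum_congr rfl fun k _ => by ring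
  constructor
  · rw [finrank_span_eq_card, Fintype.card_fin]
    rw [Fintype.linearIndependent_iff]
    intro α hα
    have hz : ∀ x, (hcut L x : ℂ) * ∑ k, α k * ψ k x = 0 := by
      intro x
      rw [← hform]
      simpa using congrFun hα x
    have hm := (mass ψ hcont hON c a ha hd0 α L hL0 (by simp [hz])).2
    simp only [hz] at hm
    have hs : ∑ k, ‖α k‖ ^ 2 = 0 := by
      have h0 : 0 ≤ ∑ k, ‖α k‖ ^ 2 := by positivity
      simp only [norm_zero, ne_eq, OfNat.ofNat_ne_zero, not_false_eq_true, zero_pow,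
        integral_zero, sub_zero] at hm
      nlinarith
    rw [Finset.sum_eq_zero_iff_of_nonneg (fun k _ => by positivity)] at hs
    intro k
    simpa using hs k (Finset.mem_univ k)
  · intro v hv hv1
    obtain ⟨α, hα⟩ := mem_span_form _ v hv
    simp only [hform] at hα
    obtain rfl : v = fun x => (hcut L x : ℂ) * ∑ k, α k * ψ k x := funext hα
    have hvi : Integrable (fun x => ‖(hcut L x : ℂ) * ∑ k, α k * ψ k x‖ ^ 2) := by
      by_contra h
      rw [integral_undef h] at hv1
      norm_num at hv1
    obtain ⟨m1, m2⟩ := mass ψ hcont hON c a ha hd0 α L hL0 hvi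
    rw [hv1] at m1 m2
    have hw := (w_norm ψ hcont hON c a ha hd0 α).2
    rw [← hD] at m2
    set ε := D * Real.exp (-2 * a * L) with hεd
    set S := ∑ k, ‖α k‖ ^ 2 with hS
    have hS2 : S ≤ 2 := by nlinarith
    have hε0 : 0 < ε := by positivity
    have hSε : S - 1 ≤ 2 * ε := by nlinarith
    set s := Real.sqrt S with hs
    have hss : s ^ 2 = S := Real.sq_sqrt (by linarith)
    have hs1 : 1 ≤ s := Real.one_le_sqrt.2 m1
    have hs0 : 0 < s := by linarith
    set r := 1 / s with hr
    have hr0 : 0 < r := by positivity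
    have hr1 : r ≤ 1 := by rw [hr, div_le_one hs0]; exact hs1
    have hrs : r * s = 1 := by rw [hr]; field_simp
    have hre : (1 - r) ^ 2 ≤ 2 * ε := by
      have : 1 - r ≤ s ^ 2 - 1 := by nlinarith
      nlinarith
    have hA : (∑ k, ‖α k‖) ^ 2 * c ^ 2 ≤ B := by
      have := A_sq α
      have h5 : (j : ℝ) * ∑ k, ‖α k‖ ^ 2 ≤ j * 2 := by gcongr
      have : (∑ k, ‖α k‖) ^ 2 * c ^ 2 ≤ (j * 2) * c ^ 2 := by gcongr; linarith
      rw [hB]; linarith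
    have hA0 : 0 ≤ ∑ k, ‖α k‖ := by positivity
    set A := ∑ k, ‖α k‖ with hAd
    set w : ℝ → ℂ := fun x => ∑ k, α k * ψ k x with hwd
    set w' : ℝ → ℂ := fun x => ∑ k, α k * deriv (ψ k) x with hwd'
    have hder : ∀ x, HasDerivAt w (w' x) x := by
      intro x
      refine HasDerivAt.fun_sum fun k _ => ?_
      exact (((hsm k).differentiable (by norm_num)) x).hasDerivAt.const_mul (α k)
    have bw : ∀ x, ‖w x‖ ≤ A * (c * Real.exp (-a * |x|)) := fun x =>
      w_bound (fun k => ψ k x) α _ (fun k => hd0 k x)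
    have bw' : ∀ x, ‖w' x‖ ≤ A * (c * Real.exp (-a * |x|)) := fun x =>
      w_bound (fun k => deriv (ψ k) x) α _ (fun k => (hdec k x).2.1)
    have bV : ∀ x, V x * ‖w x‖ ^ 2 ≤ B * (Λ + 1) * Real.exp (-2 * a * |x|) := by
      intro x
      have h1 := w_bound (fun k => (V x : ℂ) * ψ k x) α _ (fun k => hVψ k x)
      have h2 : ∑ k, α k * ((V x : ℂ) * ψ k x) = (V x : ℂ) * w x := by
        rw [hwd, Finset.mul_sum]
        exact Finset.sum_congr rfl fun k _ => by ring
      rw [h2, norm_mul, Complex.norm_real, Real.norm_of_nonneg (hV0 x).le] at h1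
      rw [← exp_sq]
      have hE := Real.exp_pos (-a * |x|)
      calc V x * ‖w x‖ ^ 2 = (V x * ‖w x‖) * ‖w x‖ := by ring
        _ ≤ (A * ((Λ + 1) * (c * Real.exp (-a * |x|)))) * (A * (c * Real.exp (-a * |x|))) := by
            refine mul_le_mul h1 (bw x) (norm_nonneg _) (by positivity)
        _ = (A ^ 2 * c ^ 2) * (Λ + 1) * Real.exp (-a * |x|) ^ 2 := by ring
        _ ≤ _ := by gcongr
    have bsq : ∀ x, (A * (c * Real.exp (-a * |x|))) ^ 2 ≤ B * Real.exp (-2 * a * |x|) := by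
      intro x
      rw [← exp_sq]
      calc _ = (A ^ 2 * c ^ 2) * Real.exp (-a * |x|) ^ 2 := by ring
        _ ≤ _ := by gcongr
    refine ⟨fun x => (r : ℂ) * w x, ?_, ?_, ?_⟩
    · refine (Submodule.mem_span_range_iff_exists_fun ℂ).2 ⟨fun k => (r : ℂ) * α k, ?_⟩
      funext x
      simp [hwd, Finset.mul_sum, mul_assoc]
    · simp only [norm_mul, Complex.norm_real, Real.norm_of_nonneg hr0.le, mul_pow]
      rw [integral_const_mul, hwd, hw, ← hss, ← mul_pow, hrs, one_pow]
    · have hfac : ∀ x, (hcut L x : ℂ) * w x - (r : ℂ) * w x = ((hcut L x - r : ℝ) : ℂ) * w x := by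
        intro x; push_cast; ring
      have hdv : ∀ x d, HasDerivAt (hcut L) d x →
          deriv (fun y => (hcut L y : ℂ) * w y - (r : ℂ) * w y) x
            = (d : ℂ) * w x + ((hcut L x - r : ℝ) : ℂ) * w' x := by
        intro x d hd
        simp only [hfac]
        exact ((hd.sub_const r).ofReal_comp.mul (hder x)).deriv
      obtain ⟨i1, i2⟩ := exp_int a ha L hL0.le
      obtain ⟨k1, k2⟩ := exp_int0 a ha
      calc _ ≤ ∫ x : ℝ, ((2 * ε * (B * (Λ + 2))) * Real.exp (-2 * a * |x|) +
            (B * (Λ + 170)) *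
            (Set.Ioi L).indicator (fun y => Real.exp (-2 * a * y)) |x|) := by
            refine integral_mono_of_nonneg ?_ ((k1.const_mul _).add (i1.const_mul _)) ?_
            · refine Filter.Eventually.of_forall fun x => ?_
              have := (hV0 x).le
              simp only [Pi.zero_apply]
              positivity
            · filter_upwards [hne L, hne (-L), hne (2 * L), hne (-(2 * L))] with x n1 n2 n3 n4
              have hE := Real.exp_pos (-2 * a * |x|)
              rw [hfac, norm_mul, Complex.norm_real, Real.norm_eq_abs, mul_pow, sq_abs]
              rcases lt_or_ge L |x| with h | h
              · rw [Set.indicator_of_mem (by exact h)]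
                obtain ⟨d, hd, hd'⟩ := hcut_deriv L x hL1 n1 n2 n3 n4
                obtain ⟨g1, g2⟩ := hcut_bd L x hL0 n3
                have hab : |hcut L x - r| ≤ 1 := abs_le.2 ⟨by linarith, by linarith⟩
                have hab2 : (hcut L x - r) ^ 2 ≤ 1 := by
                  rw [← sq_abs]; exact pow_le_one₀ (abs_nonneg _) hab
                rw [hdv x d hd]
                have q1 : ‖(d : ℂ) * w x + ((hcut L x - r : ℝ) : ℂ) * w' x‖ ≤
                    13 * (A * (c * Real.exp (-a * |x|))) := by
                  refine (norm_add_le _ _).trans ?_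
                  rw [norm_mul, norm_mul, Complex.norm_real, Complex.norm_real,
                    Real.norm_eq_abs, Real.norm_eq_abs]
                  have e1 : |d| * ‖w x‖ ≤ 12 * (A * (c * Real.exp (-a * |x|))) :=
                    mul_le_mul hd' (bw x) (norm_nonneg _) (by norm_num)
                  have e2 : |hcut L x - r| * ‖w' x‖ ≤ 1 * (A * (c * Real.exp (-a * |x|))) :=
                    mul_le_mul hab (bw' x) (norm_nonneg _) (by norm_num)
                  linarith
                have q2 : ‖(d : ℂ) * w x + ((hcut L x - r : ℝ) : ℂ) * w' x‖ ^ 2 ≤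
                    169 * (B * Real.exp (-2 * a * |x|)) := by
                  calc _ ≤ (13 * (A * (c * Real.exp (-a * |x|)))) ^ 2 := by gcongr
                    _ = 169 * (A * (c * Real.exp (-a * |x|))) ^ 2 := by ring
                    _ ≤ _ := by gcongr; exact bsq x
                have q3 : V x * ((hcut L x - r) ^ 2 * ‖w x‖ ^ 2) ≤
                    B * (Λ + 1) * Real.exp (-2 * a * |x|) := by
                  calc _ = (hcut L x - r) ^ 2 * (V x * ‖w x‖ ^ 2) := by ring
                    _ ≤ 1 * (V x * ‖w x‖ ^ 2) := by
                      have := (hV0 x).le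
                      gcongr
                    _ ≤ _ := by rw [one_mul]; exact bV x
                have q4 : 0 ≤ 2 * ε * (B * (Λ + 2)) * Real.exp (-2 * a * |x|) := by positivity
                linarith
              · have h' : |x| < L := by
                  refine lt_of_le_of_ne h fun h => ?_
                  rcases abs_choice x with g | g <;> rw [g] at h
                  · exact n1 h
                  · exact n2 (by linarith)
                rw [Set.indicator_of_notMem (by simpa using h), hdv x 0 (hcut_in_deriv L x hL0 h'),
                  hcut_in L x hL0 h']
                simp only [Complex.ofReal_zero, zero_mul, zero_add, norm_mul, Complex.norm_real,
                  Real.norm_eq_abs, mul_pow, sq_abs, mul_zero, add_zero]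
                have q2 : ‖w' x‖ ^ 2 ≤ B * Real.exp (-2 * a * |x|) := by
                  refine le_trans ?_ (bsq x)
                  have := bw' x
                  gcongr
                have q3 := bV x
                calc _ = (1 - r) ^ 2 * (‖w' x‖ ^ 2 + V x * ‖w x‖ ^ 2) := by ring
                  _ ≤ (2 * ε) * (‖w' x‖ ^ 2 + V x * ‖w x‖ ^ 2) := by
                    have := (hV0 x).le
                    gcongr
                  _ ≤ (2 * ε) * (B * Real.exp (-2 * a * |x|) +
                        B * (Λ + 1) * Real.exp (-2 * a * |x|)) := by gcongr
                  _ = _ := by ring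
        _ = _ := by
          rw [integral_add (k1.const_mul _) (i1.const_mul _), integral_const_mul,
            integral_const_mul, i2, k2, hεd]
          ring
end

section
/- Let V : ℝ → ℝ be continuous, bounded below by b₀ > 0, with V(x) → ∞ as |x| → ∞ and |V(x)| ≤ k_b e^{b|x|} for every b > 0 and suitable k_b > 0. For j ≥ 1 let λ_j be the j-th eigenvalue of H u = −u'' + Vu on L²(ℝ), characterized by the min-max principle λ_j = min over j-dimensional subspaces 𝑉 of the form domain D(𝔞¹) of max_{u ∈ 𝑉, u ≠ 0} 𝔞¹(u,u)/⟨u,u⟩, and let λ_j^L be the j-th eigenvalue of the Dirichlet restriction H_L on (−L, L), characterized by λ_j^L = min over j-dimensional subspaces 𝑉 of W^{1,2}_0(−L,L) of max_{u ∈ 𝑉, u ≠ 0} 𝔞^{1,L}(u,u)/⟨u,u⟩. Then for all sufficiently large L there exist constants c_j > 0 and a > 0, independent of L, such that λ_j < λ_j^L < λ_j + c_j e^{−2aL}. -/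
open MeasureTheory

/-- Membership in (a core of) the form domain `D(𝔞¹) = W^{1,2}(ℝ) ∩ {u : ‖V^{1/2}u‖ < ∞}`
of the Schrödinger operator `Hu = −u'' + Vu` on `L²(ℝ)`. -/
def InFormDomain (V : ℝ → ℝ) (u : ℝ → ℂ) : Prop :=
  Differentiable ℝ u ∧ MemLp u 2 ∧ MemLp (deriv u) 2 ∧
    Integrable (fun x => V x * ‖u x‖ ^ 2)

/-- Membership in (a core of) `W^{1,2}_0(−L, L)`, functions extended by zero to `ℝ`. -/
def InDirichletDomain (L : ℝ) (u : ℝ → ℂ) : Prop :=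
  Differentiable ℝ u ∧ (∀ x : ℝ, L ≤ |x| → u x = 0) ∧ MemLp u 2 ∧ MemLp (deriv u) 2

/-- The quadratic form `𝔞¹(u,u) = ∫ (|u'|² + V|u|²)`. -/
noncomputable def schForm (V : ℝ → ℝ) (u : ℝ → ℂ) : ℝ :=
  ∫ x : ℝ, (‖deriv u x‖ ^ 2 + V x * ‖u x‖ ^ 2)

/-- The `j`-th min-max value of the form `𝔞¹` over subspaces contained in the class `P`. -/
noncomputable def minmax (V : ℝ → ℝ) (P : (ℝ → ℂ) → Prop) (j : ℕ) : ℝ :=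
  sInf {r : ℝ | ∃ W : Submodule ℂ (ℝ → ℂ),
    (∀ u ∈ W, P u) ∧ Module.finrank ℂ W = j ∧
    r = sSup {q : ℝ | ∃ u ∈ W, u ≠ 0 ∧
      q = schForm V u / (∫ x : ℝ, ‖u x‖ ^ 2)}}

/-- The right-hand side of the Pruefer angle equation. -/
noncomputable def prF (q : ℝ → ℝ) (t y : ℝ) : ℝ := Real.cos y ^ 2 - q t * Real.sin y ^ 2

lemma prF_lip (q : ℝ → ℝ) (t x y K : ℝ) (hK : |q t| ≤ K) :
    |prF q t x - prF q t y| ≤ (1 + K) * |x - y| := by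
  have h1 : prF q t x - prF q t y = -(1 + q t) * (Real.sin (x - y) * Real.sin (x + y)) := by
    have e1 := Real.sin_sq_add_cos_sq x
    have e2 := Real.sin_sq_add_cos_sq y
    have : Real.sin (x - y) * Real.sin (x + y) = Real.sin x ^ 2 - Real.sin y ^ 2 := by
      rw [Real.sin_sub, Real.sin_add]
      linear_combination Real.sin x ^ 2 * e2 - Real.sin y ^ 2 * e1
    rw [this]
    unfold prF
    linear_combination e1 - e2
  rw [h1, abs_mul, abs_mul, abs_neg]
  have h2 : |1 + q t| ≤ 1 + K := (abs_add_le _ _).trans (by simpa using hK)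
  have h3 : |Real.sin (x - y)| * |Real.sin (x + y)| ≤ |x - y| * 1 :=
    mul_le_mul (Real.abs_sin_le_abs) (Real.abs_sin_le_one _) (abs_nonneg _) (abs_nonneg _)
  rw [mul_one] at h3
  exact mul_le_mul h2 h3 (by positivity) (by linarith [abs_nonneg (1 + q t)])

lemma exists_bound (q : ℝ → ℝ) (hq : Continuous q) (a b : ℝ) :
    ∃ K : ℝ, 0 ≤ K ∧ ∀ t ∈ Set.Icc a b, |q t| ≤ K := by
  obtain ⟨C, hC⟩ := isCompact_Icc.exists_bound_of_continuousOn (s := Set.Icc a b) hq.continuousOn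
  exact ⟨max C 0, le_max_right _ _, fun t ht => (hC t ht).trans (le_max_left _ _)⟩

lemma ode_exists (q : ℝ → ℝ) (hq : Continuous q) (a b t0 y0 : ℝ) (ht0 : t0 ∈ Set.Icc a b) :
    ∃ θ : ℝ → ℝ, θ t0 = y0 ∧ ∀ t ∈ Set.Icc a b, HasDerivAt θ (prF q t (θ t)) t := by
  obtain ⟨K, hK0, hK⟩ := exists_bound q hq (a - 1) (b + 1)
  have ht0' : t0 ∈ Set.Icc (a - 1) (b + 1) := ⟨by linarith [ht0.1], by linarith [ht0.2]⟩
  have hab : a ≤ b := ht0.1.trans ht0.2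
  have hpl : IsPicardLindelof (prF q) (tmin := a - 1) (tmax := b + 1) ⟨t0, ht0'⟩ y0
      (Real.toNNReal ((1 + K) * (b - a + 2))) 0 (Real.toNNReal (1 + K)) (Real.toNNReal (1 + K)) := by
    constructor
    · intro t ht
      apply LipschitzWith.lipschitzOnWith
      apply LipschitzWith.of_dist_le_mul
      intro x y
      rw [Real.dist_eq, Real.dist_eq, Real.coe_toNNReal _ (by linarith)]
      exact prF_lip q t x y K (hK t ht)
    · intro x _
      unfold prF
      exact Continuous.continuousOn (by fun_prop)
    · intro t ht x _
      rw [Real.coe_toNNReal _ (by linarith), Real.norm_eq_abs]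
      unfold prF
      have h1 := hK t ht
      rw [abs_le] at h1 ⊢
      have e1 := Real.sin_sq_add_cos_sq x
      constructor <;> nlinarith [sq_nonneg (Real.sin x), sq_nonneg (Real.cos x)]
    · rw [Real.coe_toNNReal _ (by linarith), Real.coe_toNNReal _ (by nlinarith)]
      simp only [NNReal.coe_zero, sub_zero]
      apply mul_le_mul_of_nonneg_left _ (by linarith)
      apply max_le <;> linarith [ht0.1, ht0.2]
  obtain ⟨θ, h0, h1⟩ := hpl.exists_eq_forall_mem_Icc_hasDerivWithinAt₀
  refine ⟨θ, h0, fun t ht => ?_⟩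
  exact (h1 t ⟨by linarith [ht.1], by linarith [ht.2]⟩).hasDerivAt
    (Icc_mem_nhds (by linarith [ht.1]) (by linarith [ht.2]))

lemma crossing (h h' : ℝ → ℝ) (a b : ℝ) (hab : a < b)
    (hd : ∀ x ∈ Set.Icc a b, HasDerivAt h (h' x) x)
    (hpos : ∀ x ∈ Set.Icc a b, h x = 0 → 0 < h' x) (ha : 0 ≤ h a) : 0 < h b := by
  have h1 : 0 ≤ h b := by
    have := image_le_of_deriv_right_lt_deriv_boundary (f := fun x => - h x) (f' := fun x => - h' x)
      (a := a) (b := b) (B := fun _ => 0) (B' := fun _ => 0)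
      (fun x hx => (hd x hx).continuousAt.neg.continuousWithinAt)
      (fun x hx => (hd x ⟨hx.1, hx.2.le⟩).neg.hasDerivWithinAt) (by simpa using ha)
      (fun x => hasDerivAt_const _ _)
      (fun x hx he => by
        have := hpos x ⟨hx.1, hx.2.le⟩ (by simpa using he)
        simpa using this) (x := b) ⟨hab.le, le_rfl⟩
    simpa using this
  rcases h1.lt_or_eq with h2 | h2
  · exact h2
  exfalso
  have hbm : b ∈ Set.Icc a b := ⟨hab.le, le_rfl⟩
  have hp := hpos b hbm h2.symm
  -- left of b, h is negative
  have hs := (hasDerivAt_iff_tendsto_slope.1 (hd b hbm))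
  have hev := hs.eventually (lt_mem_nhds hp)
  have hev2 : ∀ᶠ x in nhdsWithin b (Set.Iio b), 0 < slope h b x :=
    hev.filter_mono (nhdsWithin_mono _ (fun x hx => ne_of_lt hx))
  have hev3 : ∀ᶠ x in nhdsWithin b (Set.Iio b), x ∈ Set.Ioo a b := Ioo_mem_nhdsLT hab
  obtain ⟨x, hx1, hx2⟩ := (hev2.and hev3).exists
  rw [slope_def_field, ← h2, sub_zero] at hx1
  have hx3 : h x < 0 := by
    by_contra hc
    have : h x / (x - b) ≤ 0 := div_nonpos_of_nonneg_of_nonpos (not_lt.1 hc) (by linarith [hx2.2])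
    linarith
  have := image_le_of_deriv_right_lt_deriv_boundary (f := fun x => - h x) (f' := fun x => - h' x)
      (a := a) (b := b) (B := fun _ => 0) (B' := fun _ => 0)
      (fun x hx => (hd x hx).continuousAt.neg.continuousWithinAt)
      (fun x hx => (hd x ⟨hx.1, hx.2.le⟩).neg.hasDerivWithinAt) (by simpa using ha)
      (fun x => hasDerivAt_const _ _)
      (fun x hx he => by
        have := hpos x ⟨hx.1, hx.2.le⟩ (by simpa using he)
        simpa using this) (x := x) ⟨hx2.1.le, hx2.2.le⟩
  simp at this
  linarith

/-- The angle crosses multiples of `π` only upwards. -/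
lemma angle_crossing (q θ : ℝ → ℝ) (a b : ℝ) (hab : a < b) (k : ℕ)
    (hd : ∀ t ∈ Set.Icc a b, HasDerivAt θ (prF q t (θ t)) t)
    (ha : k * Real.pi ≤ θ a) : k * Real.pi < θ b := by
  have := crossing (fun x => θ x - k * Real.pi) (fun x => prF q x (θ x)) a b hab
    (fun x hx => (hd x hx).sub_const _) (fun x hx h0 => by
      have h1 : θ x = k * Real.pi := by linarith
      simp [prF, h1, Real.sin_nat_mul_pi, ← Real.abs_cos_eq_sqrt_one_sub_sin_sq]
      have := Real.sin_sq_add_cos_sq (k * Real.pi)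
      rw [Real.sin_nat_mul_pi] at this
      nlinarith) (by linarith)
  linarith

lemma angle_compare (q θ η : ℝ → ℝ) (hq : Continuous q) (a b : ℝ) (hab : a < b)
    (hd : ∀ t ∈ Set.Icc a b, HasDerivAt θ (prF q t (θ t)) t)
    (he : ∀ t ∈ Set.Icc a b, HasDerivAt η (prF q t (η t)) t)
    (h0 : θ a < η a) : θ b < η b := by
  obtain ⟨K, hK0, hK⟩ := exists_bound q hq a b
  set w0 := η a - θ a with hw0
  have hw0p : 0 < w0 := by linarith
  have hder : ∀ x ∈ Set.Icc a b, HasDerivAt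
      (fun x => η x - θ x - w0 * Real.exp (-(K + 2) * (x - a)))
      (prF q x (η x) - prF q x (θ x) - w0 * (Real.exp (-(K + 2) * (x - a)) * (-(K + 2) * 1))) x := by
    intro x hx
    exact ((he x hx).sub (hd x hx)).sub
      (((((hasDerivAt_id x).sub_const a).const_mul (-(K + 2))).exp).const_mul w0)
  have := crossing _ _ a b hab hder (fun x hx h0 => by
    have h1 := prF_lip q x (η x) (θ x) K (hK x hx)
    have h2 : η x - θ x = w0 * Real.exp (-(K + 2) * (x - a)) := by linarith
    have h3 : 0 < w0 * Real.exp (-(K + 2) * (x - a)) := by positivity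
    rw [← h2] at h3
    rw [abs_of_pos h3] at h1
    have h4 := (abs_le.1 h1).1
    have h5 : w0 * (Real.exp (-(K + 2) * (x - a)) * (-(K + 2) * 1)) = -(K + 2) * (η x - θ x) := by
      rw [h2]; ring
    rw [h5]
    nlinarith) (by simp [hw0])
  have h3 : 0 < w0 * Real.exp (-(K + 2) * (b - a)) := by positivity
  linarith

lemma angle_cont (V : ℝ → ℝ) (hV : Continuous V) (lam a b : ℝ) (hab : a < b) (θ : ℝ → ℝ)
    (hd : ∀ t ∈ Set.Icc a b, HasDerivAt θ (prF (fun x => V x - lam) t (θ t)) t)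
    (ε : ℝ) (hε : 0 < ε) :
    ∃ δ > 0, ∀ mu η, |mu - lam| ≤ δ → η a = θ a →
      (∀ t ∈ Set.Icc a b, HasDerivAt η (prF (fun x => V x - mu) t (η t)) t) →
      |η b - θ b| < ε := by
  obtain ⟨K, hK0, hK⟩ := exists_bound (fun x => V x - lam) (by fun_prop) a b
  have hc := (gronwallBound_continuous_ε 0 (Real.toNNReal (1 + K)) (b - a)).tendsto 0
  rw [gronwallBound_ε0_δ0] at hc
  have hev := hc.eventually (gt_mem_nhds hε)
  obtain ⟨δ, hδ, hδ2⟩ := Metric.eventually_nhds_iff.1 hev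
  refine ⟨δ / 2, by positivity, fun mu η hmu h0 hη => ?_⟩
  have := dist_le_of_approx_trajectories_ODE_of_mem (v := prF (fun x => V x - lam))
    (s := fun _ => Set.univ) (K := Real.toNNReal (1 + K)) (f := η) (g := θ) (a := a) (b := b)
    (f' := fun t => prF (fun x => V x - mu) t (η t))
    (g' := fun t => prF (fun x => V x - lam) t (θ t))
    (εf := δ / 2) (εg := 0) (δ := 0)
    (fun t ht => by
      apply LipschitzWith.lipschitzOnWith
      apply LipschitzWith.of_dist_le_mul
      intro x y
      rw [Real.dist_eq, Real.dist_eq, Real.coe_toNNReal _ (by linarith)]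
      exact prF_lip _ t x y K (hK t ⟨ht.1, ht.2.le⟩))
    (fun t ht => (hη t ht).continuousAt.continuousWithinAt)
    (fun t ht => (hη t ⟨ht.1, ht.2.le⟩).hasDerivWithinAt)
    (fun t ht => by
      rw [Real.dist_eq]
      have : prF (fun x => V x - mu) t (η t) - prF (fun x => V x - lam) t (η t)
        = (mu - lam) * Real.sin (η t) ^ 2 := by unfold prF; ring
      rw [this, abs_mul, abs_of_nonneg (sq_nonneg (Real.sin (η t)))]
      have h1 := Real.sin_sq_le_one (η t)
      have h2 := abs_nonneg (mu - lam)
      nlinarith [sq_nonneg (Real.sin (η t))])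
    (fun t _ => Set.mem_univ _)
    (fun t ht => (hd t ht).continuousAt.continuousWithinAt)
    (fun t ht => (hd t ⟨ht.1, ht.2.le⟩).hasDerivWithinAt)
    (fun t ht => by simp)
    (fun t _ => Set.mem_univ _) (by simp [h0]) b ⟨hab.le, le_rfl⟩
  rw [Real.dist_eq] at this
  refine this.trans_lt ?_
  apply hδ2
  rw [Real.dist_eq]
  rw [abs_of_nonneg] <;> linarith

lemma sol_exists (q : ℝ → ℝ) (hq : Continuous q) (a b t0 y0 : ℝ) (ht0 : t0 ∈ Set.Icc a b) :
    ∃ θ r : ℝ → ℝ, θ t0 = y0 ∧ (∀ t, 0 < r t) ∧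
      (∀ t ∈ Set.Icc a b, HasDerivAt θ (prF q t (θ t)) t) ∧
      (∀ t ∈ Set.Icc a b, HasDerivAt (fun t => r t * Real.sin (θ t)) (r t * Real.cos (θ t)) t) ∧
      (∀ t ∈ Set.Icc a b, HasDerivAt (fun t => r t * Real.cos (θ t))
        (q t * (r t * Real.sin (θ t))) t) := by
  obtain ⟨θ, h0, hd⟩ := ode_exists q hq (a - 1) (b + 1) t0 y0
    ⟨by linarith [ht0.1], by linarith [ht0.2]⟩
  set ρ : ℝ → ℝ := fun t => (1 + q t) * Real.sin (θ t) * Real.cos (θ t) with hρ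
  have hθc : ContinuousOn θ (Set.Icc (a - 1) (b + 1)) :=
    fun t ht => (hd t ht).continuousAt.continuousWithinAt
  have hρc : ContinuousOn ρ (Set.Icc (a - 1) (b + 1)) := by
    apply ContinuousOn.mul
    · exact ((continuous_const.add hq).continuousOn).mul (Real.continuous_sin.comp_continuousOn hθc)
    · exact Real.continuous_cos.comp_continuousOn hθc
  have hr : ∀ t ∈ Set.Icc a b, HasDerivAt (fun t => Real.exp (∫ s in a..t, ρ s))
      (Real.exp (∫ s in a..t, ρ s) * ρ t) t := by
    intro t ht
    apply HasDerivAt.exp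
    apply intervalIntegral.integral_hasDerivAt_right
    · apply ContinuousOn.intervalIntegrable
      apply hρc.mono
      rw [Set.uIcc_of_le ht.1]
      exact Set.Icc_subset_Icc (by linarith) (by linarith [ht.2])
    · apply (hρc.mono Set.Ioo_subset_Icc_self).stronglyMeasurableAtFilter isOpen_Ioo
      exact ⟨by linarith [ht.1], by linarith [ht.2]⟩
    · exact hρc.continuousAt (Icc_mem_nhds (by linarith [ht.1]) (by linarith [ht.2]))
  have hd' : ∀ t ∈ Set.Icc a b, HasDerivAt θ (prF q t (θ t)) t := fun t ht =>
    hd t ⟨by linarith [ht.1], by linarith [ht.2]⟩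
  refine ⟨θ, fun t => Real.exp (∫ s in a..t, ρ s), h0, fun t => Real.exp_pos _, hd', ?_, ?_⟩
  · intro t ht
    refine ((hr t ht).mul (hd' t ht).sin).congr_deriv ?_
    have := Real.sin_sq_add_cos_sq (θ t)
    simp only [hρ, prF]
    linear_combination (Real.exp (∫ s in a..t, ρ s) * Real.cos (θ t)) * this
  · intro t ht
    refine ((hr t ht).mul (hd' t ht).cos).congr_deriv ?_
    have := Real.sin_sq_add_cos_sq (θ t)
    simp only [hρ, prF]
    linear_combination (Real.exp (∫ s in a..t, ρ s) * q t * Real.sin (θ t)) * this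

lemma memLp_sq {f : ℝ → ℂ} (h : MemLp f 2) : Integrable (fun x => ‖f x‖ ^ 2) :=
  (memLp_two_iff_integrable_sq_norm h.1).1 h

lemma compact_integrable (V : ℝ → ℝ) (hV : Continuous V) (L : ℝ) (u : ℝ → ℂ) (hu : Continuous u)
    (h0 : ∀ x, L ≤ |x| → u x = 0) : Integrable (fun x => V x * ‖u x‖ ^ 2) := by
  apply Continuous.integrable_of_hasCompactSupport (by fun_prop)
  apply HasCompactSupport.of_support_subset_isCompact (isCompact_Icc (a := -L) (b := L))
  intro x hx
  by_contra hc
  apply hx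
  have : L ≤ |x| := by
    by_contra h2
    exact hc (abs_le.1 (not_le.1 h2).le)
  simp [h0 x this]

lemma dir_form (V : ℝ → ℝ) (hV : Continuous V) (L : ℝ) (u : ℝ → ℂ) (hu : InDirichletDomain L u) :
    InFormDomain V u :=
  ⟨hu.1, hu.2.2.1, hu.2.2.2, compact_integrable V hV L u hu.1.continuous hu.2.1⟩

lemma form_split (V : ℝ → ℝ) (lam : ℝ) (u : ℝ → ℂ) (h1 : Integrable (fun x => ‖u x‖ ^ 2))
    (h2 : MemLp (deriv u) 2) (h3 : Integrable (fun x => V x * ‖u x‖ ^ 2)) :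
    schForm V u - lam * (∫ x, ‖u x‖ ^ 2) =
      ∫ x, (‖deriv u x‖ ^ 2 + (V x - lam) * ‖u x‖ ^ 2) := by
  unfold schForm
  have h4 : Integrable (fun x => ‖deriv u x‖ ^ 2 + V x * ‖u x‖ ^ 2) := (memLp_sq h2).add h3
  rw [← integral_const_mul, ← integral_sub h4 (h1.const_mul lam)]
  congr 1; ext x; ring

lemma form_split_int (V : ℝ → ℝ) (lam : ℝ) (u : ℝ → ℂ) (h1 : Integrable (fun x => ‖u x‖ ^ 2))
    (h2 : MemLp (deriv u) 2) (h3 : Integrable (fun x => V x * ‖u x‖ ^ 2)) :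
    Integrable (fun x => (‖deriv u x‖ ^ 2 + (V x - lam) * ‖u x‖ ^ 2)) := by
  have := (memLp_sq h2).add (h3.sub (h1.const_mul lam))
  refine this.congr (Filter.Eventually.of_forall fun x => ?_)
  simp only [Pi.add_apply, Pi.sub_apply]
  ring

/-- pointwise Picone inequality -/
lemma picone_pt (u v : ℂ) (g q : ℝ) :
    2 * inner ℝ u v * g + ‖u‖ ^ 2 * (q - g ^ 2) ≤ ‖v‖ ^ 2 + q * ‖u‖ ^ 2 := by
  have h : 0 ≤ ‖v - g • u‖ ^ 2 := sq_nonneg _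
  rw [norm_sub_sq_real, inner_smul_right, norm_smul, real_inner_comm, mul_pow, Real.norm_eq_abs,
    sq_abs] at h
  nlinarith

lemma G_deriv_ne (q θ : ℝ → ℝ) (u : ℝ → ℂ) (x : ℝ) (hu : DifferentiableAt ℝ u x)
    (hθ : HasDerivAt θ (prF q x (θ x)) x) (hs : Real.sin (θ x) ≠ 0) :
    ∃ d, HasDerivAt (fun x => ‖u x‖ ^ 2 * (Real.cos (θ x) / Real.sin (θ x))) d x ∧
      d ≤ ‖deriv u x‖ ^ 2 + q x * ‖u x‖ ^ 2 := by
  have h1 := (hu.hasDerivAt.norm_sq).mul ((hθ.cos).div (hθ.sin) hs)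
  refine ⟨_, h1, ?_⟩
  refine le_trans (le_of_eq ?_) (picone_pt (u x) (deriv u x) (Real.cos (θ x) / Real.sin (θ x)) (q x))
  congr 2
  have := Real.sin_sq_add_cos_sq (θ x)
  simp only [prF]
  field_simp
  linear_combination (-(Real.cos (θ x)^2 - q x * Real.sin (θ x)^2)) * this

lemma G_deriv_zero (q θ : ℝ → ℝ) (u : ℝ → ℂ) (x : ℝ) (hu : DifferentiableAt ℝ u x)
    (hθ : HasDerivAt θ (prF q x (θ x)) x) (hs : Real.sin (θ x) = 0) (h0 : u x = 0) :
    ∃ d, HasDerivAt (fun x => ‖u x‖ ^ 2 * (Real.cos (θ x) / Real.sin (θ x))) d x ∧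
      d ≤ ‖deriv u x‖ ^ 2 + q x * ‖u x‖ ^ 2 := by
  refine ⟨‖deriv u x‖ ^ 2, ?_, by simp [h0]⟩
  have hc : Real.cos (θ x) ^ 2 = 1 := by
    have := Real.sin_sq_add_cos_sq (θ x)
    rw [hs] at this; linarith
  have hcne : Real.cos (θ x) ≠ 0 := by
    intro h; rw [h] at hc; norm_num at hc
  have hsd : HasDerivAt (fun x => Real.sin (θ x)) (Real.cos (θ x)) x := by
    convert hθ.sin using 1
    simp [prF, hs, hc]
  rw [hasDerivAt_iff_tendsto_slope]
  have t1 := (hasDerivAt_iff_tendsto_slope.1 hu.hasDerivAt).norm.pow 2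
  have t2 := hasDerivAt_iff_tendsto_slope.1 hsd
  have t3 : Filter.Tendsto (fun x => Real.cos (θ x)) (nhdsWithin x {x}ᶜ) (nhds (Real.cos (θ x))) :=
    (hθ.cos.continuousAt).tendsto.mono_left nhdsWithin_le_nhds
  have t4 := t1.mul (t3.div t2 hcne)
  rw [div_self hcne, mul_one] at t4
  refine t4.congr' ?_
  filter_upwards [self_mem_nhdsWithin] with y hy
  have hy' : y - x ≠ 0 := sub_ne_zero.2 hy
  simp only [slope, vsub_eq_sub, h0, hs, sub_zero, smul_eq_mul, norm_smul, norm_zero, Pi.div_apply]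
  rw [Real.norm_eq_abs, mul_pow, sq_abs]
  by_cases hsy : Real.sin (θ y) = 0
  · simp [hsy]
  · field_simp
    ring

lemma deriv_eq_zero_of_dir (L : ℝ) (u : ℝ → ℂ) (hu : InDirichletDomain L u) (x : ℝ)
    (hx : L ≤ |x|) : deriv u x = 0 := by
  have hd := (hu.1 x).hasDerivAt
  have h0 := hu.2.1 x hx
  rcases le_abs.1 hx with h | h
  · have h1 : HasDerivWithinAt u 0 (Set.Ici x) x :=
      (hasDerivWithinAt_const x _ (0 : ℂ)).congr
        (fun y hy => hu.2.1 y (le_abs.2 (Or.inl (h.trans hy)))) h0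
    exact (uniqueDiffOn_Ici x x Set.self_mem_Ici).eq_deriv _ hd.hasDerivWithinAt h1
  · have h1 : HasDerivWithinAt u 0 (Set.Iic x) x :=
      (hasDerivWithinAt_const x _ (0 : ℂ)).congr
        (fun y hy => hu.2.1 y (le_abs.2 (Or.inr (by simp at hy; linarith)))) h0
    exact (uniqueDiffOn_Iic x x Set.self_mem_Iic).eq_deriv _ hd.hasDerivWithinAt h1

lemma exists_vanish (W : Submodule ℂ (ℝ → ℂ)) (j : ℕ) (hj : 1 ≤ j) (hW : Module.finrank ℂ W = j)
    (z : Fin (j - 1) → ℝ) : ∃ u ∈ W, u ≠ 0 ∧ ∀ i, u (z i) = 0 := by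
  have : FiniteDimensional ℂ W := Module.finite_of_finrank_pos (by omega)
  let T : W →ₗ[ℂ] (Fin (j - 1) → ℂ) :=
    { toFun := fun u i => (u : ℝ → ℂ) (z i)
      map_add' := fun u v => rfl
      map_smul' := fun c u => rfl }
  have hk : LinearMap.ker T ≠ ⊥ := by
    apply LinearMap.ker_ne_bot_of_finrank_lt
    simp [hW]; omega
  obtain ⟨u, hu, hne⟩ := Submodule.exists_mem_ne_zero_of_ne_bot hk
  refine ⟨u, u.2, fun h => hne (Subtype.ext h), fun i => congrFun (LinearMap.mem_ker.1 hu) i⟩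

lemma lemA (V : ℝ → ℝ) (hV : Continuous V) (lam L : ℝ) (hL : 0 < L) (j : ℕ) (hj : 1 ≤ j)
    (θ : ℝ → ℝ) (h0 : θ (-L) = 0)
    (hd : ∀ t ∈ Set.Icc (-L) L, HasDerivAt θ (prF (fun x => V x - lam) t (θ t)) t)
    (hθL : θ L ≤ j * Real.pi) (W : Submodule ℂ (ℝ → ℂ)) (hW : ∀ u ∈ W, InDirichletDomain L u)
    (hWj : Module.finrank ℂ W = j) :
    ∃ u ∈ W, u ≠ 0 ∧ lam * (∫ x, ‖u x‖ ^ 2) ≤ schForm V u := by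
  classical
  set z : Fin (j - 1) → ℝ := fun i =>
    if h : ∃ x ∈ Set.Icc (-L) L, θ x = ((i : ℕ) + 1 : ℕ) * Real.pi then h.choose else L with hz
  obtain ⟨u, huW, hune, huz⟩ := exists_vanish W j hj hWj z
  refine ⟨u, huW, hune, ?_⟩
  have hu := hW u huW
  have hf := dir_form V hV L u hu
  have hvan : ∀ x ∈ Set.Icc (-L) L, Real.sin (θ x) = 0 → u x = 0 := by
    intro x hx hs
    rcases eq_or_lt_of_le hx.1 with h1 | h1
    · exact hu.2.1 x (by rw [← h1]; simp [abs_of_pos hL])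
    rcases eq_or_lt_of_le hx.2 with h2 | h2
    · exact hu.2.1 x (by rw [h2]; simp [abs_of_pos hL])
    obtain ⟨n, hn⟩ := Real.sin_eq_zero_iff.1 hs
    have p1 : (0 : ℕ) * Real.pi < θ x := angle_crossing _ θ (-L) x h1 0
      (fun t ht => hd t ⟨ht.1, ht.2.trans hx.2⟩) (by simp [h0])
    have p2 : θ x < j * Real.pi := by
      by_contra hc
      have := angle_crossing _ θ x L h2 j (fun t ht => hd t ⟨hx.1.trans ht.1, ht.2⟩) (not_lt.1 hc)
      linarith
    rw [← hn] at p1 p2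
    have hn0 : 0 < n := by
      have : (0 : ℝ) < n := by
        by_contra hc
        have := mul_nonpos_of_nonpos_of_nonneg (not_lt.1 hc) Real.pi_pos.le
        simp at p1; linarith
      exact_mod_cast this
    have hnj : n < j := by
      have : (n : ℝ) < j := lt_of_mul_lt_mul_right p2 Real.pi_pos.le
      exact_mod_cast this
    obtain ⟨m, rfl⟩ : ∃ m : ℕ, n = m + 1 := ⟨(n - 1).toNat, by omega⟩
    have hm : m < j - 1 := by omega
    have hex : ∃ x ∈ Set.Icc (-L) L, θ x = ((m : ℕ) + 1 : ℕ) * Real.pi :=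
      ⟨x, hx, by rw [← hn]; push_cast; ring⟩
    have hzx : z ⟨m, hm⟩ = hex.choose := by simp only [hz]; rw [dif_pos hex]
    have hsp := hex.choose_spec
    have hxz : x = hex.choose := by
      set y := hex.choose
      have hxθ : θ x = ((m : ℕ) + 1 : ℕ) * Real.pi := by rw [← hn]; push_cast; ring
      rcases lt_trichotomy x y with h | h | h
      · have := angle_crossing _ θ x y h (m + 1)
          (fun t ht => hd t ⟨hx.1.trans ht.1, ht.2.trans hsp.1.2⟩) hxθ.ge
        linarith [hsp.2]
      · exact h
      · have := angle_crossing _ θ y x h (m + 1)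
          (fun t ht => hd t ⟨hsp.1.1.trans ht.1, ht.2.trans hx.2⟩) hsp.2.ge
        linarith
    rw [hxz, ← hzx]
    exact huz _
  have hG : ∀ x ∈ Set.Icc (-L) L, ∃ d,
      HasDerivAt (fun x => ‖u x‖ ^ 2 * (Real.cos (θ x) / Real.sin (θ x))) d x ∧
      d ≤ ‖deriv u x‖ ^ 2 + (V x - lam) * ‖u x‖ ^ 2 := by
    intro x hx
    by_cases hs : Real.sin (θ x) = 0
    · exact G_deriv_zero (fun x => V x - lam) θ u x (hu.1 x) (hd x hx) hs (hvan x hx hs)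
    · exact G_deriv_ne (fun x => V x - lam) θ u x (hu.1 x) (hd x hx) hs
  choose! d hd1 hd2 using hG
  have hInt := form_split_int V lam u (memLp_sq hf.2.1) hf.2.2.1 hf.2.2.2
  have key := intervalIntegral.sub_le_integral_of_hasDeriv_right_of_le (a := -L) (b := L)
    (g := fun x => ‖u x‖ ^ 2 * (Real.cos (θ x) / Real.sin (θ x))) (g' := d)
    (φ := fun x => ‖deriv u x‖ ^ 2 + (V x - lam) * ‖u x‖ ^ 2) (by linarith)
    (fun x hx => (hd1 x hx).continuousAt.continuousWithinAt)
    (fun x hx => (hd1 x ⟨hx.1.le, hx.2.le⟩).hasDerivWithinAt)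
    hInt.integrableOn (fun x hx => hd2 x ⟨hx.1.le, hx.2.le⟩)
  have e1 : u L = 0 := hu.2.1 L (le_abs_self L)
  have e2 : u (-L) = 0 := hu.2.1 (-L) (by simp [abs_of_pos hL])
  simp only [e1, e2, norm_zero] at key
  rw [intervalIntegral.integral_eq_integral_of_support_subset,
    ← form_split V lam u (memLp_sq hf.2.1) hf.2.2.1 hf.2.2.2] at key
  · norm_num at key
    linarith
  · intro x hx
    by_contra hc
    apply hx
    have : L ≤ |x| := by
      by_contra h2
      have := abs_lt.1 (not_le.1 h2)
      exact hc ⟨this.1, this.2.le⟩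
    simp [hu.2.1 x this, deriv_eq_zero_of_dir L u hu x this]

lemma norm_toLp_sq {f : ℝ → ℂ} (hf : MemLp f 2) : ‖hf.toLp f‖ ^ 2 = ∫ x, ‖f x‖ ^ 2 := by
  rw [Lp.norm_toLp, hf.eLpNorm_eq_integral_rpow_norm (by norm_num) (by norm_num)]
  have h : 0 ≤ ∫ x, ‖f x‖ ^ 2 := integral_nonneg fun x => by positivity
  simp only [ENNReal.toReal_ofNat, Real.rpow_ofNat]
  rw [ENNReal.toReal_ofReal (by positivity), ← Real.rpow_natCast, ← Real.rpow_mul h]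
  norm_num

lemma fin_bound {W E : Type*} [AddCommGroup W] [Module ℂ W] [FiniteDimensional ℂ W]
    [NormedAddCommGroup E] [NormedSpace ℂ E] (ι T : W →ₗ[ℂ] E) (hι : Function.Injective ι) :
    ∃ C : ℝ, 0 ≤ C ∧ ∀ u, ‖T u‖ ^ 2 ≤ C * ‖ι u‖ ^ 2 := by
  let e := LinearEquiv.ofInjective ι hι
  let S : LinearMap.range ι →L[ℂ] E := LinearMap.toContinuousLinearMap (T ∘ₗ e.symm.toLinearMap)
  refine ⟨‖S‖ ^ 2, by positivity, fun u => ?_⟩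
  have h1 := S.le_opNorm (e u)
  have h2 : S (e u) = T u := by simp [S]
  have h3 : ‖e u‖ = ‖ι u‖ := rfl
  rw [h2, h3] at h1
  rw [← mul_pow]
  exact pow_le_pow_left₀ (norm_nonneg _) h1 2

lemma L2_pos (u : ℝ → ℂ) (hu : Continuous u) (h2 : Integrable (fun x => ‖u x‖ ^ 2)) (hne : u ≠ 0) :
    0 < ∫ x, ‖u x‖ ^ 2 := by
  rw [integral_pos_iff_support_of_nonneg (fun x => by positivity) h2]
  have hc : Continuous (fun x => ‖u x‖ ^ 2) := by fun_prop
  apply hc.isOpen_support.measure_pos volume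
  obtain ⟨x, hx⟩ := Function.ne_iff.1 hne
  exact ⟨x, by simpa using hx⟩

lemma sqrtV_memLp (V : ℝ → ℝ) (hVc : Continuous V) (hV : ∀ x, 0 ≤ V x) (u : ℝ → ℂ)
    (hu : InFormDomain V u) : MemLp (fun x => (Real.sqrt (V x) : ℂ) * u x) 2 := by
  rw [memLp_two_iff_integrable_sq_norm]
  · refine hu.2.2.2.congr (Filter.Eventually.of_forall fun x => ?_)
    simp only [norm_mul, mul_pow, Complex.norm_real, Real.norm_eq_abs, sq_abs]
    rw [Real.sq_sqrt (hV x)]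
  · have := hu.1.continuous
    apply Continuous.aestronglyMeasurable
    fun_prop

lemma rayleigh_bdd (V : ℝ → ℝ) (hVc : Continuous V) (hV : ∀ x, 0 ≤ V x)
    (W : Submodule ℂ (ℝ → ℂ)) (hfin : FiniteDimensional ℂ W) (hW : ∀ u ∈ W, InFormDomain V u) :
    ∃ C : ℝ, ∀ u ∈ W, schForm V u ≤ C * ∫ x, ‖u x‖ ^ 2 := by
  let ι : W →ₗ[ℂ] Lp ℂ 2 (volume : Measure ℝ) :=
    { toFun := fun u => (hW u u.2).2.1.toLp _
      map_add' := fun u v => MemLp.toLp_add _ _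
      map_smul' := fun c u => MemLp.toLp_const_smul _ _ }
  let D : W →ₗ[ℂ] Lp ℂ 2 (volume : Measure ℝ) :=
    { toFun := fun u => (hW u u.2).2.2.1.toLp _
      map_add' := fun u v => by
        rw [← MemLp.toLp_add]
        congr 1
        ext x
        exact deriv_add ((hW u u.2).1 x) ((hW v v.2).1 x)
      map_smul' := fun c u => by
        simp only [RingHom.id_apply]
        rw [← MemLp.toLp_const_smul]
        congr 1
        ext x
        exact deriv_const_smul c ((hW u u.2).1 x) }
  let S : W →ₗ[ℂ] Lp ℂ 2 (volume : Measure ℝ) :=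
    { toFun := fun u => (sqrtV_memLp V hVc hV _ (hW u u.2)).toLp _
      map_add' := fun u v => by
        rw [← MemLp.toLp_add]
        congr 1
        ext x
        simp [mul_add]
      map_smul' := fun c u => by
        simp only [RingHom.id_apply]
        rw [← MemLp.toLp_const_smul]
        congr 1
        ext x
        simp
        ring }
  have hι : Function.Injective ι := by
    rw [← LinearMap.ker_eq_bot, LinearMap.ker_eq_bot']
    intro u hu
    by_contra hne
    have h1 := L2_pos u (hW u u.2).1.continuous (memLp_sq (hW u u.2).2.1)
      (fun h => hne (Subtype.ext h))
    rw [← norm_toLp_sq (hW u u.2).2.1] at h1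
    have h2 : MemLp.toLp _ (hW u u.2).2.1 = 0 := hu
    rw [h2] at h1
    simp at h1
  obtain ⟨C1, hC1, h1⟩ := fin_bound ι D hι
  obtain ⟨C2, hC2, h2⟩ := fin_bound ι S hι
  refine ⟨C1 + C2, fun u hu => ?_⟩
  have e1 := h1 ⟨u, hu⟩
  have e2 := h2 ⟨u, hu⟩
  have d0 : ‖ι ⟨u, hu⟩‖ ^ 2 = ∫ x, ‖u x‖ ^ 2 := norm_toLp_sq (hW u hu).2.1
  have d1 : ‖D ⟨u, hu⟩‖ ^ 2 = ∫ x, ‖deriv u x‖ ^ 2 := norm_toLp_sq (hW u hu).2.2.1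
  have d2 : ‖S ⟨u, hu⟩‖ ^ 2 = ∫ x, V x * ‖u x‖ ^ 2 := by
    refine (norm_toLp_sq (sqrtV_memLp V hVc hV _ (hW u hu))).trans ?_
    congr 1
    ext x
    simp only [norm_mul, mul_pow, Complex.norm_real, Real.norm_eq_abs, sq_abs]
    rw [Real.sq_sqrt (hV x)]
  rw [d0] at e1 e2
  rw [d1] at e1
  rw [d2] at e2
  unfold schForm
  rw [integral_add (memLp_sq (hW u hu).2.2.1) (hW u hu).2.2.2]
  linarith

lemma exists_nonzero (W : Submodule ℂ (ℝ → ℂ)) (j : ℕ) (hj : 1 ≤ j) (hW : Module.finrank ℂ W = j) :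
    ∃ u ∈ W, u ≠ 0 := by
  have h : Nontrivial W := Module.nontrivial_of_finrank_pos (R := ℂ) (by omega)
  obtain ⟨u, hu⟩ := exists_ne (0 : W)
  exact ⟨u, u.2, fun h => hu (Subtype.ext h)⟩

lemma schForm_nonneg (V : ℝ → ℝ) (hV : ∀ x, 0 ≤ V x) (u : ℝ → ℂ) : 0 ≤ schForm V u :=
  integral_nonneg fun x => by have := hV x; positivity

lemma minmax_bddBelow (V : ℝ → ℝ) (hV : ∀ x, 0 ≤ V x) (P : (ℝ → ℂ) → Prop) (j : ℕ) :
    BddBelow {r : ℝ | ∃ W : Submodule ℂ (ℝ → ℂ),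
    (∀ u ∈ W, P u) ∧ Module.finrank ℂ W = j ∧
    r = sSup {q : ℝ | ∃ u ∈ W, u ≠ 0 ∧
      q = schForm V u / (∫ x : ℝ, ‖u x‖ ^ 2)}} := by
  refine ⟨0, ?_⟩
  rintro r ⟨W, _, _, rfl⟩
  apply Real.sSup_nonneg
  rintro q ⟨u, _, _, rfl⟩
  exact div_nonneg (schForm_nonneg V hV u) (integral_nonneg fun x => by positivity)

lemma minmax_le (V : ℝ → ℝ) (hVc : Continuous V) (hV : ∀ x, 0 ≤ V x) (P : (ℝ → ℂ) → Prop)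
    (hP : ∀ u, P u → InFormDomain V u) (j : ℕ)
    (hj : 1 ≤ j) (W : Submodule ℂ (ℝ → ℂ)) (hW : ∀ u ∈ W, P u) (hWj : Module.finrank ℂ W = j)
    (c : ℝ) (hc : ∀ u ∈ W, schForm V u ≤ c * ∫ x, ‖u x‖ ^ 2) : minmax V P j ≤ c := by
  refine (csInf_le (minmax_bddBelow V hV P j) ⟨W, hW, hWj, rfl⟩).trans ?_
  apply csSup_le
  · obtain ⟨u, hu, hne⟩ := exists_nonzero W j hj hWj
    exact ⟨_, u, hu, hne, rfl⟩
  · rintro q ⟨u, hu, hne, rfl⟩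
    have h := hP u (hW u hu)
    rw [div_le_iff₀ (L2_pos u h.1.continuous (memLp_sq h.2.1) hne)]
    exact hc u hu

lemma sSup_bound (V : ℝ → ℝ) (hVc : Continuous V) (hV : ∀ x, 0 ≤ V x)
    (j : ℕ) (hj : 1 ≤ j) (W : Submodule ℂ (ℝ → ℂ)) (hW : ∀ u ∈ W, InFormDomain V u)
    (hWj : Module.finrank ℂ W = j) (u : ℝ → ℂ) (hu : u ∈ W) (hne : u ≠ 0) :
    schForm V u / (∫ x : ℝ, ‖u x‖ ^ 2) ≤ sSup {q : ℝ | ∃ u ∈ W, u ≠ 0 ∧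
      q = schForm V u / (∫ x : ℝ, ‖u x‖ ^ 2)} := by
  have hfin : FiniteDimensional ℂ W := Module.finite_of_finrank_pos (by omega)
  obtain ⟨C, hC⟩ := rayleigh_bdd V hVc hV W hfin hW
  apply le_csSup
  · refine ⟨C, ?_⟩
    rintro q ⟨u, hu, hne, rfl⟩
    have h := hW u hu
    rw [div_le_iff₀ (L2_pos u h.1.continuous (memLp_sq h.2.1) hne)]
    exact hC u hu
  · exact ⟨u, hu, hne, rfl⟩

/-- explicit `j`-dimensional test spaces -/
lemma exists_space (L : ℝ) (hL : 0 < L) (j : ℕ) : ∃ W : Submodule ℂ (ℝ → ℂ),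
    (∀ u ∈ W, InDirichletDomain L u) ∧ Module.finrank ℂ W = j := by
  let b : ContDiffBump (0 : ℝ) := ⟨L / 2, L, by linarith, by linarith⟩
  let T : Polynomial.degreeLT ℂ j →ₗ[ℂ] (ℝ → ℂ) :=
    { toFun := fun p x => (b x : ℂ) * (p : Polynomial ℂ).eval (x : ℂ)
      map_add' := fun p q => by ext x; simp [mul_add]
      map_smul' := fun c p => by ext x; simp; ring }
  have hT : Function.Injective T := by
    rw [← LinearMap.ker_eq_bot, LinearMap.ker_eq_bot']
    intro p hp
    apply Subtype.ext
    apply Polynomial.eq_zero_of_infinite_isRoot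
    apply Set.Infinite.mono (s := (fun x : ℝ => (x : ℂ)) '' Set.Ioo (-L) L)
    · rintro _ ⟨x, hx, rfl⟩
      have h1 := congrFun hp x
      have h2 : b x ≠ 0 := by
        have : x ∈ Function.support b := by
          rw [b.support_eq]
          simp only [Metric.mem_ball, dist_zero_right, Real.norm_eq_abs]
          exact abs_lt.2 hx
        exact this
      have h3 : (b x : ℂ) * (p : Polynomial ℂ).eval (x : ℂ) = 0 := h1
      rcases mul_eq_zero.1 h3 with h | h
      · exact absurd (by exact_mod_cast h) h2
      · exact h
    · exact (Set.Ioo_infinite (by linarith)).image Complex.ofReal_injective.injOn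
  refine ⟨LinearMap.range T, ?_, ?_⟩
  · rintro _ ⟨p, rfl⟩
    have hcd : ContDiff ℝ 1 (T p) := by
      have h1 : ContDiff ℝ 1 (fun x : ℝ => (b x : ℂ)) := Complex.ofRealCLM.contDiff.comp b.contDiff
      have h2 : ContDiff ℝ 1 (fun x : ℝ => (p : Polynomial ℂ).eval (x : ℂ)) := by
        have : ContDiff ℂ 1 (fun z : ℂ => (p : Polynomial ℂ).eval z) := by
          simpa using (p : Polynomial ℂ).contDiff_aeval (𝕜 := ℂ) 1
        exact (this.restrict_scalars ℝ).comp Complex.ofRealCLM.contDiff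
      exact h1.mul h2
    have hz : ∀ x : ℝ, L ≤ |x| → T p x = 0 := by
      intro x hx
      have : b x = 0 := b.zero_of_le_dist (by simpa using hx)
      show (b x : ℂ) * (p : Polynomial ℂ).eval (x : ℂ) = 0
      simp [this]
    have hcs : HasCompactSupport (T p) := by
      apply HasCompactSupport.of_support_subset_isCompact (isCompact_Icc (a := -L) (b := L))
      intro x hx
      by_contra hc
      apply hx
      apply hz
      by_contra h2
      exact hc (abs_le.1 (not_le.1 h2).le)
    refine ⟨hcd.differentiable (by norm_num), hz, ?_, ?_⟩
    · exact hcd.continuous.memLp_of_hasCompactSupport hcs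
    · exact (hcd.continuous_deriv (by norm_num)).memLp_of_hasCompactSupport hcs.deriv
  · rw [LinearMap.finrank_range_of_inj hT, (Polynomial.degreeLTEquiv ℂ j).finrank_eq]
    simp

lemma minmax_nonempty (V : ℝ → ℝ) (P : (ℝ → ℂ) → Prop) (L : ℝ) (hL : 0 < L)
    (hP : ∀ u, InDirichletDomain L u → P u) (j : ℕ) :
    {r : ℝ | ∃ W : Submodule ℂ (ℝ → ℂ),
    (∀ u ∈ W, P u) ∧ Module.finrank ℂ W = j ∧
    r = sSup {q : ℝ | ∃ u ∈ W, u ≠ 0 ∧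
      q = schForm V u / (∫ x : ℝ, ‖u x‖ ^ 2)}}.Nonempty := by
  obtain ⟨W, h1, h2⟩ := exists_space L hL j
  exact ⟨_, W, fun u hu => hP u (h1 u hu), h2, rfl⟩

lemma le_minmax (V : ℝ → ℝ) (hVc : Continuous V) (hV : ∀ x, 0 ≤ V x) (L : ℝ) (hL : 0 < L) (j : ℕ)
    (hj : 1 ≤ j) (c : ℝ)
    (hc : ∀ W : Submodule ℂ (ℝ → ℂ), (∀ u ∈ W, InDirichletDomain L u) → Module.finrank ℂ W = j →
      ∃ u ∈ W, u ≠ 0 ∧ c * (∫ x, ‖u x‖ ^ 2) ≤ schForm V u) :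
    c ≤ minmax V (InDirichletDomain L) j := by
  apply le_csInf (minmax_nonempty V _ L hL (fun u hu => hu) j)
  rintro r ⟨W, hW, hWj, rfl⟩
  obtain ⟨u, hu, hne, h⟩ := hc W hW hWj
  have hW' : ∀ u ∈ W, InFormDomain V u := fun u hu => dir_form V hVc L u (hW u hu)
  refine le_trans ?_ (sSup_bound V hVc hV j hj W hW' hWj u hu hne)
  rw [le_div_iff₀ (L2_pos u (hW' u hu).1.continuous (memLp_sq (hW' u hu).2.1) hne)]
  exact h

lemma exists_near (V : ℝ → ℝ) (hVc : Continuous V) (hV : ∀ x, 0 ≤ V x) (j : ℕ)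
    (hj : 1 ≤ j) (c : ℝ) (hc : minmax V (InFormDomain V) j < c) :
    ∃ W : Submodule ℂ (ℝ → ℂ), (∀ u ∈ W, InFormDomain V u) ∧ Module.finrank ℂ W = j ∧
      ∀ u ∈ W, schForm V u ≤ c * ∫ x, ‖u x‖ ^ 2 := by
  obtain ⟨r, ⟨W, hW, hWj, rfl⟩, hr⟩ := exists_lt_of_csInf_lt
    (minmax_nonempty V (InFormDomain V) 1 one_pos (fun u hu => dir_form V hVc 1 u hu) j) hc
  refine ⟨W, hW, hWj, fun u hu => ?_⟩
  by_cases hne : u = 0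
  · subst hne
    simp [schForm]
  have h1 := sSup_bound V hVc hV j hj W hW hWj u hu hne
  have h := hW u hu
  rw [← div_le_iff₀ (L2_pos u h.1.continuous (memLp_sq h.2.1) hne)]
  exact h1.trans hr.le

lemma minmax_mono (V : ℝ → ℝ) (hVc : Continuous V) (hV : ∀ x, 0 ≤ V x) (L : ℝ) (hL : 0 < L)
    (j : ℕ) : minmax V (InFormDomain V) j ≤ minmax V (InDirichletDomain L) j := by
  apply csInf_le_csInf (minmax_bddBelow V hV _ j) (minmax_nonempty V _ L hL (fun u hu => hu) j)
  rintro r ⟨W, hW, hWj, hr⟩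
  exact ⟨W, fun u hu => dir_form V hVc L u (hW u hu), hWj, hr⟩

/-- Continuous functions, differentiable off a countable set, with square integrable derivative. -/
def InH (u : ℝ → ℂ) : Prop :=
  Continuous u ∧ (∃ s : Set ℝ, s.Countable ∧ ∀ x, x ∉ s → DifferentiableAt ℝ u x) ∧
    MemLp (deriv u) 2

lemma ii_of_memLp {v : ℝ → ℂ} (hv : MemLp v 2) (x y : ℝ) : IntervalIntegrable v volume x y :=
  intervalIntegrable_iff.2 (((hv.locallyIntegrable (by norm_num)).integrableOn_isCompact
    isCompact_uIcc).mono_set Set.uIoc_subset_uIcc)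

lemma InH.ftc {u : ℝ → ℂ} (hu : InH u) (x y : ℝ) : ∫ t in x..y, deriv u t = u y - u x := by
  obtain ⟨hc, ⟨s, hs, hd⟩, h2⟩ := hu
  exact integral_eq_of_hasDerivAt_off_countable u (deriv u) hs hc.continuousOn
    (fun t ht => (hd t ht.2).hasDerivAt) (ii_of_memLp h2 x y)

lemma cs_interval {v : ℝ → ℂ} (hv : MemLp v 2) (x y : ℝ) (hxy : x ≤ y) :
    ‖∫ t in x..y, v t‖ ^ 2 ≤ (y - x) * ∫ t in x..y, ‖v t‖ ^ 2 := by
  rcases hxy.eq_or_lt with rfl | hlt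
  · simp
  have i1 := (ii_of_memLp hv x y).norm
  have i2 : IntervalIntegrable (fun t => ‖v t‖ ^ 2) volume x y := (memLp_sq hv).intervalIntegrable
  have h1 := intervalIntegral.norm_integral_le_integral_norm (f := v) (μ := volume) hxy
  set S := ∫ t in x..y, ‖v t‖ with hS
  set Q := ∫ t in x..y, ‖v t‖ ^ 2 with hQ
  have hp : 0 < y - x := by linarith
  set c := S / (y - x) with hc
  have h2 : 0 ≤ ∫ t in x..y, (‖v t‖ ^ 2 - 2 * c * ‖v t‖ + c ^ 2) := by
    apply intervalIntegral.integral_nonneg hxy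
    intro t _
    nlinarith [sq_nonneg (‖v t‖ - c)]
  have i3 : IntervalIntegrable (fun t => 2 * c * ‖v t‖) volume x y := i1.const_mul _
  rw [intervalIntegral.integral_add (i2.sub i3) (by simp),
    intervalIntegral.integral_sub i2 i3, intervalIntegral.integral_const_mul,
    intervalIntegral.integral_const, smul_eq_mul, ← hS, ← hQ] at h2
  have h3 : S = c * (y - x) := by rw [hc]; field_simp
  have h4 : S ^ 2 ≤ (y - x) * Q := by
    rw [h3] at h2 ⊢
    nlinarith
  exact (pow_le_pow_left₀ (norm_nonneg _) h1 2).trans h4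

lemma interval_le_full {p : ℝ → ℝ} (hp : Integrable p) (h0 : ∀ x, 0 ≤ p x) (x y : ℝ) (hxy : x ≤ y) :
    ∫ t in x..y, p t ≤ ∫ t, p t := by
  rw [intervalIntegral.integral_of_le hxy]
  exact setIntegral_le_integral hp (Filter.Eventually.of_forall h0)

lemma InH.holder {u : ℝ → ℂ} (hu : InH u) (x y : ℝ) (hxy : x ≤ y) :
    ‖u y - u x‖ ^ 2 ≤ (y - x) * ∫ t, ‖deriv u t‖ ^ 2 := by
  rw [← hu.ftc x y]
  refine (cs_interval hu.2.2 x y hxy).trans ?_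
  apply mul_le_mul_of_nonneg_left _ (by linarith)
  exact interval_le_full (memLp_sq hu.2.2) (fun x => by positivity) x y hxy

lemma average_integral {p : ℝ → ℝ} (hp : Integrable p) (h : ℝ) (hh : 0 < h) :
    Integrable (fun x => ∫ t in x..(x + h), p t) ∧
      ∫ x, (∫ t in x..(x + h), p t) = h * ∫ t, p t := by
  set g : ℝ → ℝ := Set.indicator (Set.Ico (-h) 0) (fun _ => 1) with hg
  have hgi : Integrable g := by
    rw [hg, integrable_indicator_iff measurableSet_Ico]
    simp
  have hconv : (fun x => ∫ t in x..(x + h), p t) =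
      convolution p g (ContinuousLinearMap.mul ℝ ℝ) volume := by
    ext x
    rw [convolution_def, intervalIntegral.integral_of_le (by linarith),
      ← integral_indicator measurableSet_Ioc]
    congr 1
    ext t
    simp only [ContinuousLinearMap.mul_apply', hg, Set.indicator_apply, Set.mem_Ioc, Set.mem_Ico]
    by_cases ht : x < t ∧ t ≤ x + h
    · rw [if_pos ht, if_pos ⟨by linarith [ht.2], by linarith [ht.1]⟩, mul_one]
    · rw [if_neg ht, if_neg, mul_zero]
      rintro ⟨h1, h2⟩
      exact ht ⟨by linarith, by linarith⟩
  rw [hconv]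
  refine ⟨hp.integrable_convolution _ hgi, ?_⟩
  rw [integral_convolution _ hp hgi]
  simp only [ContinuousLinearMap.mul_apply', hg]
  rw [integral_indicator measurableSet_Ico]
  simp [hh.le, mul_comm]

noncomputable def stek (h : ℝ) (u : ℝ → ℂ) (x : ℝ) : ℂ := h⁻¹ • ∫ t in x..(x + h), u t

lemma stek_deriv (h : ℝ) (u : ℝ → ℂ) (hu : Continuous u) (x : ℝ) :
    HasDerivAt (stek h u) (h⁻¹ • (u (x + h) - u x)) x := by
  have h1 : HasDerivAt (fun x => ∫ t in (0 : ℝ)..x, u t) (u x) x :=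
    intervalIntegral.integral_hasDerivAt_right (hu.intervalIntegrable _ _)
      hu.stronglyMeasurable.stronglyMeasurableAtFilter hu.continuousAt
  have h2 : HasDerivAt (fun x => ∫ t in (0 : ℝ)..x, u t) (u (x + h)) (x + h) :=
    intervalIntegral.integral_hasDerivAt_right (hu.intervalIntegrable _ _)
      hu.stronglyMeasurable.stronglyMeasurableAtFilter hu.continuousAt
  have h3 := (h2.comp_add_const x h).sub h1
  have h4 : stek h u = fun x => h⁻¹ • ((∫ t in (0 : ℝ)..(x + h), u t) - ∫ t in (0 : ℝ)..x, u t) := by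
    ext x
    rw [stek, intervalIntegral.integral_interval_sub_left (hu.intervalIntegrable _ _)
      (hu.intervalIntegrable _ _)]
  rw [h4]
  exact h3.const_smul h⁻¹

lemma stek_dir (M L h : ℝ) (hh : 0 < h) (hML : M + h ≤ L) (u : ℝ → ℂ) (hu : Continuous u)
    (h0 : ∀ x, M ≤ |x| → u x = 0) : InDirichletDomain L (stek h u) := by
  have hz : ∀ x, L ≤ |x| → stek h u x = 0 := by
    intro x hx
    have : ∫ t in x..(x + h), u t = 0 := by
      rw [intervalIntegral.integral_congr (g := fun _ => (0 : ℂ)), intervalIntegral.integral_zero]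
      intro t ht
      rw [Set.uIcc_of_le (by linarith)] at ht
      apply h0
      rcases le_abs.1 hx with h1 | h1
      · exact le_abs.2 (Or.inl (by linarith [ht.1]))
      · exact le_abs.2 (Or.inr (by linarith [ht.2]))
    simp [stek, this]
  have hd : Differentiable ℝ (stek h u) := fun x => (stek_deriv h u hu x).differentiableAt
  have hde : deriv (stek h u) = fun x => h⁻¹ • (u (x + h) - u x) :=
    funext fun x => (stek_deriv h u hu x).deriv
  have hcs : HasCompactSupport (stek h u) := by
    apply HasCompactSupport.of_support_subset_isCompact (isCompact_Icc (a := -L) (b := L))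
    intro x hx
    by_contra hc
    apply hx
    apply hz
    by_contra h2
    exact hc (abs_le.1 (not_le.1 h2).le)
  refine ⟨hd, hz, hd.continuous.memLp_of_hasCompactSupport hcs, ?_⟩
  apply Continuous.memLp_of_hasCompactSupport _ hcs.deriv
  rw [hde]
  fun_prop

lemma stek_energy (h : ℝ) (hh : 0 < h) (u : ℝ → ℂ) (hu : InH u)
    (h2 : MemLp (deriv (stek h u)) 2) :
    ∫ x, ‖deriv (stek h u) x‖ ^ 2 ≤ ∫ x, ‖deriv u x‖ ^ 2 := by
  obtain ⟨i1, e1⟩ := average_integral (memLp_sq hu.2.2) h hh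
  have : ∫ x, ‖deriv u x‖ ^ 2 = ∫ x, h⁻¹ * ∫ t in x..(x + h), ‖deriv u t‖ ^ 2 := by
    rw [integral_const_mul, e1]; field_simp
  rw [this]
  apply integral_mono (memLp_sq h2) (i1.const_mul _)
  intro x
  simp only
  rw [(stek_deriv h u hu.1 x).deriv, ← hu.ftc, norm_smul, mul_pow]
  have h3 := cs_interval hu.2.2 x (x + h) (by linarith)
  rw [add_sub_cancel_left] at h3
  rw [Real.norm_eq_abs, sq_abs]
  calc h⁻¹ ^ 2 * _ ≤ h⁻¹ ^ 2 * _ := mul_le_mul_of_nonneg_left h3 (by positivity)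
    _ = _ := by field_simp

lemma stek_pt (M h : ℝ) (hM : 0 ≤ M) (hh : 0 < h) (u : ℝ → ℂ) (hu : InH u)
    (h0 : ∀ x, M ≤ |x| → u x = 0) (x : ℝ) :
    |‖stek h u x‖ ^ 2 - ‖u x‖ ^ 2| ≤
      2 * Real.sqrt (2 * M) * Real.sqrt h * ∫ t, ‖deriv u t‖ ^ 2 := by
  set I := ∫ t, ‖deriv u t‖ ^ 2 with hI
  have hI0 : 0 ≤ I := integral_nonneg fun x => by positivity
  have hsup : ∀ y, ‖u y‖ ≤ Real.sqrt (2 * M * I) := by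
    intro y
    by_cases hy : M ≤ |y|
    · rw [h0 y hy]; simp [Real.sqrt_nonneg]
    · have hy := abs_lt.1 (not_le.1 hy)
      apply Real.le_sqrt_of_sq_le
      have h1 := hu.holder (-M) y hy.1.le
      rw [h0 (-M) (by simp [abs_of_nonneg hM]), sub_zero] at h1
      refine h1.trans ?_
      apply mul_le_mul_of_nonneg_right _ hI0
      linarith
  have hi : ∀ y, IntervalIntegrable u volume y (y + h) := fun y => hu.1.intervalIntegrable _ _
  have hdiff : ‖stek h u x - u x‖ ≤ Real.sqrt (h * I) := by
    have e : stek h u x - u x = h⁻¹ • ∫ t in x..(x + h), (u t - u x) := by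
      rw [intervalIntegral.integral_sub (hi x) (by simp), intervalIntegral.integral_const,
        add_sub_cancel_left, smul_sub, smul_smul, inv_mul_cancel₀ hh.ne', one_smul]
      rfl
    rw [e, norm_smul, norm_inv, Real.norm_of_nonneg hh.le]
    have := intervalIntegral.norm_integral_le_of_norm_le_const (a := x) (b := x + h)
      (C := Real.sqrt (h * I)) (f := fun t => u t - u x) (by
        intro t ht
        rw [Set.uIoc_of_le (by linarith)] at ht
        apply Real.le_sqrt_of_sq_le
        refine (hu.holder x t ht.1.le).trans ?_
        apply mul_le_mul_of_nonneg_right _ hI0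
        linarith [ht.2])
    rw [add_sub_cancel_left, abs_of_pos hh] at this
    rw [inv_mul_le_iff₀ hh]
    linarith
  have hsup2 : ‖stek h u x‖ ≤ Real.sqrt (2 * M * I) := by
    rw [stek, norm_smul, norm_inv, Real.norm_of_nonneg hh.le]
    have := intervalIntegral.norm_integral_le_of_norm_le_const (a := x) (b := x + h)
      (C := Real.sqrt (2 * M * I)) (f := u) (fun t _ => hsup t)
    rw [add_sub_cancel_left, abs_of_pos hh] at this
    rw [inv_mul_le_iff₀ hh]
    linarith
  have e1 : ‖stek h u x‖ ^ 2 - ‖u x‖ ^ 2 =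
    (‖stek h u x‖ - ‖u x‖) * (‖stek h u x‖ + ‖u x‖) := by ring
  rw [e1, abs_mul, abs_of_nonneg (a := ‖stek h u x‖ + ‖u x‖) (by positivity)]
  have e2 : |‖stek h u x‖ - ‖u x‖| ≤ Real.sqrt (h * I) := (abs_norm_sub_norm_le _ _).trans hdiff
  have e3 : ‖stek h u x‖ + ‖u x‖ ≤ 2 * Real.sqrt (2 * M * I) := by linarith [hsup x]
  refine (mul_le_mul e2 e3 (by positivity) (Real.sqrt_nonneg _)).trans (le_of_eq ?_)
  rw [Real.sqrt_mul hh.le, Real.sqrt_mul (by positivity)]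
  have := Real.mul_self_sqrt hI0
  linear_combination (2 * Real.sqrt h * Real.sqrt (2 * M)) * this

/-- integral of a bounded function supported in `[-L,L]` -/
lemma supp_bound (L c : ℝ) (hL : 0 ≤ L) (f : ℝ → ℝ) (hf : Integrable f)
    (h0 : ∀ x, L ≤ |x| → f x = 0) (hc : ∀ x ∈ Set.Icc (-L) L, |f x| ≤ c) :
    |∫ x, f x| ≤ 2 * L * c := by
  rw [← intervalIntegral.integral_eq_integral_of_support_subset (a := -L) (b := L)]
  · have := intervalIntegral.norm_integral_le_of_norm_le_const (a := -L) (b := L) (C := c) (f := f)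
      (fun t ht => by
        rw [Set.uIoc_of_le (by linarith)] at ht
        exact hc t ⟨ht.1.le, ht.2⟩)
    rw [Real.norm_eq_abs, abs_of_nonneg (by linarith : 0 ≤ L - -L)] at this
    linarith
  · intro x hx
    by_contra hc
    apply hx
    apply h0
    by_contra h2
    have := abs_lt.1 (not_le.1 h2)
    exact hc ⟨this.1, this.2.le⟩

lemma stek_main (V : ℝ → ℝ) (hVc : Continuous V) (hV : ∀ x, 0 ≤ V x) (M L h K lam : ℝ)
    (hM : 0 ≤ M) (hh : 0 < h) (hML : M + h ≤ L) (hK : ∀ x ∈ Set.Icc (-L) L, |V x| ≤ K)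
    (u : ℝ → ℂ) (hu : InH u) (h0 : ∀ x, M ≤ |x| → u x = 0)
    (hlam : schForm V u ≤ lam * ∫ x, ‖u x‖ ^ 2) :
    (1 - 2 * L * (2 * Real.sqrt (2 * M)) * lam * Real.sqrt h) * (∫ x, ‖u x‖ ^ 2) ≤
      (∫ x, ‖stek h u x‖ ^ 2) ∧
    schForm V (stek h u) ≤
      (lam + K * (2 * L * (2 * Real.sqrt (2 * M)) * lam * Real.sqrt h)) * ∫ x, ‖u x‖ ^ 2 := by
  have hdir := stek_dir M L h hh hML u hu.1 h0
  have hL : 0 ≤ L := by linarith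
  have hu0 : ∀ x, L ≤ |x| → u x = 0 := fun x hx => h0 x (by linarith)
  have iu : Integrable (fun x => ‖u x‖ ^ 2) := by
    simpa using compact_integrable (fun _ => 1) continuous_const M u hu.1 h0
  have iVu := compact_integrable V hVc M u hu.1 h0
  have is := memLp_sq hdir.2.2.1
  have iVs := compact_integrable V hVc L _ hdir.1.continuous hdir.2.1
  set I := ∫ t, ‖deriv u t‖ ^ 2 with hI
  have hI0 : 0 ≤ I := integral_nonneg fun x => by positivity
  have hK0 : 0 ≤ K := (abs_nonneg _).trans (hK 0 ⟨by linarith, hL⟩)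
  have hsplit : schForm V u = I + ∫ x, V x * ‖u x‖ ^ 2 := integral_add (memLp_sq hu.2.2) iVu
  have hsplit2 : schForm V (stek h u) =
      (∫ x, ‖deriv (stek h u) x‖ ^ 2) + ∫ x, V x * ‖stek h u x‖ ^ 2 :=
    integral_add (memLp_sq hdir.2.2.2) iVs
  have hpos : 0 ≤ ∫ x, V x * ‖u x‖ ^ 2 := integral_nonneg fun x => by have := hV x; positivity
  have hIle : I ≤ lam * ∫ x, ‖u x‖ ^ 2 := by linarith
  set c := 2 * Real.sqrt (2 * M) * Real.sqrt h with hc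
  have hc0 : 0 ≤ c := by positivity
  have hpt := stek_pt M h hM hh u hu h0
  have b1 := supp_bound L (c * I) hL (fun x => ‖stek h u x‖ ^ 2 - ‖u x‖ ^ 2) (is.sub iu)
    (fun x hx => by simp [hdir.2.1 x hx, hu0 x hx]) (fun x _ => hpt x)
  have b2 := supp_bound L (K * (c * I)) hL (fun x => V x * ‖stek h u x‖ ^ 2 - V x * ‖u x‖ ^ 2)
    (iVs.sub iVu) (fun x hx => by simp [hdir.2.1 x hx, hu0 x hx]) (fun x hx => by
      rw [← mul_sub, abs_mul]
      exact mul_le_mul (hK x hx) (hpt x) (abs_nonneg _) hK0)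
  rw [integral_sub is iu] at b1
  rw [integral_sub iVs iVu] at b2
  have b3 := stek_energy h hh u hu hdir.2.2.2
  have b1' := (abs_le.1 b1).1
  have b2' := (abs_le.1 b2).2
  have hIc : 2 * L * (c * I) ≤ 2 * L * (c * (lam * ∫ x, ‖u x‖ ^ 2)) := by gcongr
  have hIK : 2 * L * (K * (c * I)) ≤ 2 * L * (K * (c * (lam * ∫ x, ‖u x‖ ^ 2))) := by gcongr
  constructor
  · have : (1 - 2 * L * (2 * Real.sqrt (2 * M)) * lam * Real.sqrt h) * (∫ x, ‖u x‖ ^ 2) =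
      (∫ x, ‖u x‖ ^ 2) - 2 * L * (c * (lam * ∫ x, ‖u x‖ ^ 2)) := by rw [hc]; ring
    rw [this]; linarith
  · have : (lam + K * (2 * L * (2 * Real.sqrt (2 * M)) * lam * Real.sqrt h)) * (∫ x, ‖u x‖ ^ 2) =
      lam * (∫ x, ‖u x‖ ^ 2) + 2 * L * (K * (c * (lam * ∫ x, ‖u x‖ ^ 2))) := by rw [hc]; ring
    rw [this, hsplit2]; linarith

lemma lemS (V : ℝ → ℝ) (hVc : Continuous V) (hV : ∀ x, 0 ≤ V x) (M L lam : ℝ)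
    (hM : 0 ≤ M) (hML : M < L) (j : ℕ) (hj : 1 ≤ j) (W : Submodule ℂ (ℝ → ℂ))
    (hW : ∀ u ∈ W, InH u ∧ ∀ x, M ≤ |x| → u x = 0) (hWj : Module.finrank ℂ W = j)
    (hlam : ∀ u ∈ W, schForm V u ≤ lam * ∫ x, ‖u x‖ ^ 2) :
    minmax V (InDirichletDomain L) j ≤ lam := by
  obtain ⟨K, hK0, hK⟩ := exists_bound V hVc (-L) L
  have hfin : FiniteDimensional ℂ W := Module.finite_of_finrank_pos (by omega)
  have iu : ∀ u ∈ W, Integrable (fun x => ‖u x‖ ^ 2) := fun u hu => by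
    simpa using compact_integrable (fun _ => 1) continuous_const M u (hW u hu).1.1 (hW u hu).2
  have hlam0 : 0 ≤ lam := by
    obtain ⟨u, hu, hne⟩ := exists_nonzero W j hj hWj
    have h1 := L2_pos u (hW u hu).1.1 (iu u hu) hne
    have h2 := (schForm_nonneg V hV u).trans (hlam u hu)
    exact nonneg_of_mul_nonneg_left h2 h1
  set κ : ℝ → ℝ := fun h => 2 * L * (2 * Real.sqrt (2 * M)) * lam * Real.sqrt h with hκ
  have hκc : Continuous κ := by fun_prop
  have hκ0 : κ 0 = 0 := by simp [hκ]
  have hlim : Filter.Tendsto (fun h => (lam + K * κ h) / (1 - κ h)) (nhdsWithin 0 (Set.Ioi 0))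
      (nhds lam) := by
    have h1 : Filter.Tendsto κ (nhdsWithin 0 (Set.Ioi 0)) (nhds 0) := by
      have := hκc.tendsto 0
      rw [hκ0] at this
      exact this.mono_left nhdsWithin_le_nhds
    have := ((h1.const_mul K).const_add lam).div (h1.const_sub 1) (by norm_num)
    simp only [mul_zero, add_zero, sub_zero, div_one] at this
    exact this
  apply ge_of_tendsto hlim
  have hev1 : ∀ᶠ h in nhdsWithin (0 : ℝ) (Set.Ioi 0), κ h < 1 := by
    have := hκc.tendsto 0
    rw [hκ0] at this
    exact (this.mono_left nhdsWithin_le_nhds).eventually (gt_mem_nhds one_pos)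
  have hev2 : ∀ᶠ h in nhdsWithin (0 : ℝ) (Set.Ioi 0), h ∈ Set.Ioo 0 (L - M) :=
    Ioo_mem_nhdsGT (by linarith)
  filter_upwards [hev1, hev2] with h hh1 hh2
  have hh : 0 < h := hh2.1
  have hMh : M + h ≤ L := by linarith [hh2.2]
  let T : W →ₗ[ℂ] (ℝ → ℂ) :=
    { toFun := fun u => stek h u
      map_add' := fun u v => by
        ext x
        simp only [stek, Submodule.coe_add, Pi.add_apply]
        rw [intervalIntegral.integral_add ((hW u u.2).1.1.intervalIntegrable _ _)
          ((hW v v.2).1.1.intervalIntegrable _ _), smul_add]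
      map_smul' := fun c u => by
        ext x
        simp only [stek, Submodule.coe_smul, Pi.smul_apply, RingHom.id_apply]
        rw [intervalIntegral.integral_smul, smul_comm] }
  have hmain := fun u (hu : u ∈ W) => stek_main V hVc hV M L h K lam hM hh hMh hK u (hW u hu).1
    (hW u hu).2 (hlam u hu)
  have hT : Function.Injective T := by
    rw [← LinearMap.ker_eq_bot, LinearMap.ker_eq_bot']
    intro u hu
    by_contra hne
    have h1 := L2_pos u (hW u u.2).1.1 (iu u u.2) (fun h => hne (Subtype.ext h))
    have h2 := (hmain u u.2).1
    have h3 : stek h (u : ℝ → ℂ) = 0 := hu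
    rw [h3] at h2
    simp only [Pi.zero_apply, norm_zero, ne_eq, OfNat.ofNat_ne_zero, not_false_eq_true, zero_pow,
      integral_zero] at h2
    have h4 : 0 < (1 - κ h) * ∫ x, ‖(u : ℝ → ℂ) x‖ ^ 2 := mul_pos (by linarith) h1
    simp only [hκ] at h4
    linarith
  apply minmax_le V hVc hV _ (fun u hu => dir_form V hVc L u hu) j hj (LinearMap.range T)
  · rintro _ ⟨u, rfl⟩
    exact stek_dir M L h hh hMh _ (hW u u.2).1.1 (hW u u.2).2
  · rw [LinearMap.finrank_range_of_inj hT, hWj]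
  · rintro _ ⟨u, rfl⟩
    obtain ⟨m1, m2⟩ := hmain u u.2
    show schForm V (stek h u) ≤ _ * ∫ x, ‖stek h u x‖ ^ 2
    rw [div_mul_eq_mul_div, le_div_iff₀ (by linarith)]
    have hκ' : 0 ≤ κ h := by
      have : 0 ≤ L := by linarith
      simp only [hκ]; positivity
    have h5 : 0 ≤ lam + K * κ h := by positivity
    calc schForm V (stek h u) * (1 - κ h)
        ≤ ((lam + K * κ h) * ∫ x, ‖(u : ℝ → ℂ) x‖ ^ 2) * (1 - κ h) :=
          mul_le_mul_of_nonneg_right m2 (by linarith)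
      _ = (lam + K * κ h) * ((1 - κ h) * ∫ x, ‖(u : ℝ → ℂ) x‖ ^ 2) := by ring
      _ ≤ _ := mul_le_mul_of_nonneg_left m1 h5

/-- Piecewise constant multiples of a solution, with jumps at zeros only. -/
lemma piece (V : ℝ → ℝ) (hVc : Continuous V) (lam a b : ℝ) (hab : a < b) (f g : ℝ → ℝ)
    (hf : ∀ t ∈ Set.Icc a b, HasDerivAt f (g t) t)
    (hg : ∀ t ∈ Set.Icc a b, HasDerivAt g ((V t - lam) * f t) t)
    (C : ℝ → ℂ) (Z : Set ℝ) (K : ℝ) (hZ : Z.Countable) (hZf : ∀ x ∈ Z, x ∈ Set.Icc a b ∧ f x = 0)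
    (hCK : ∀ x, ‖C x‖ ≤ K) (hC0 : ∀ x, x ∉ Set.Icc a b → C x = 0)
    (hCl : ∀ x, x ∉ Z → ∃ c, ∀ᶠ y in nhds x, C y = c) :
    InH (fun x => C x * f x) ∧
      schForm V (fun x => C x * f x) = lam * ∫ x, ‖C x * f x‖ ^ 2 := by
  set u : ℝ → ℂ := fun x => C x * f x with hu
  have hK : 0 ≤ K := (norm_nonneg _).trans (hCK 0)
  -- derivative away from the jumps
  have hder : ∀ x, x ∉ Z → HasDerivAt u (C x * g x) x := by
    intro x hx
    obtain ⟨c, hc⟩ := hCl x hx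
    have hcx : C x = c := hc.self_of_nhds
    by_cases hxI : x ∈ Set.Icc a b
    · rw [hcx]
      have h1 : HasDerivAt (fun y => c * (f y : ℂ)) (c * g x) x :=
        ((hf x hxI).ofReal_comp).const_mul c
      refine h1.congr_of_eventuallyEq ?_
      filter_upwards [hc] with y hy
      simp [hu, hy]
    · have h0 : c = 0 := by rw [← hcx]; exact hC0 x hxI
      rw [hcx, h0, zero_mul]
      refine (hasDerivAt_const x (0 : ℂ)).congr_of_eventuallyEq ?_
      filter_upwards [hc] with y hy
      simp [hu, hy, h0]
  have hcontZ : ∀ x ∈ Z, ContinuousAt u x := by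
    intro x hx
    obtain ⟨hxI, hfx⟩ := hZf x hx
    have hc : Filter.Tendsto (fun y => K * |f y|) (nhds x) (nhds 0) := by
      have := ((hf x hxI).continuousAt.abs).const_mul K
      simpa [ContinuousAt, hfx] using this
    have hu0 : u x = 0 := by simp [hu, hfx]
    rw [ContinuousAt, hu0]
    apply squeeze_zero_norm _ hc
    intro y
    simp only [hu, norm_mul, Complex.norm_real, Real.norm_eq_abs]
    exact mul_le_mul_of_nonneg_right (hCK y) (abs_nonneg _)
  have hcont : Continuous u := by
    rw [continuous_iff_continuousAt]
    intro x
    by_cases hx : x ∈ Z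
    · exact hcontZ x hx
    · exact (hder x hx).continuousAt
  have hgc : ContinuousOn g (Set.Icc a b) := fun t ht => (hg t ht).continuousAt.continuousWithinAt
  obtain ⟨Kg, hKg⟩ := isCompact_Icc.exists_bound_of_continuousOn hgc
  have haeZ : ∀ᵐ x : ℝ, x ∉ Z := by
    exact measure_eq_zero_iff_ae_notMem.1 (hZ.measure_zero volume)
  have hmem : MemLp (deriv u) 2 := by
    have h1 : MemLp (Set.indicator (Set.Icc a b) (fun _ => (K * Kg : ℝ))) 2 (volume : Measure ℝ) :=
      memLp_indicator_const 2 measurableSet_Icc _ (Or.inr (by simp))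
    refine h1.mono (stronglyMeasurable_deriv u).aestronglyMeasurable ?_
    filter_upwards [haeZ] with x hx
    rw [(hder x hx).deriv]
    by_cases hxI : x ∈ Set.Icc a b
    · rw [Set.indicator_of_mem hxI, norm_mul, Complex.norm_real]
      refine le_trans ?_ (le_abs_self _)
      exact mul_le_mul (hCK x) (hKg x hxI) (norm_nonneg _) hK
    · rw [Set.indicator_of_notMem hxI, hC0 x hxI]; simp
  have hInH : InH u := ⟨hcont, ⟨Z, hZ, fun x hx => (hder x hx).differentiableAt⟩, hmem⟩
  refine ⟨hInH, ?_⟩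
  set M := max |a| |b| + 1 with hM
  have ha1 : -M < a := by have := neg_abs_le a; have := le_max_left |a| |b|; linarith
  have hb1 : b < M := by have := le_abs_self b; have := le_max_right |a| |b|; linarith
  have hCM : ∀ x, M ≤ |x| → C x = 0 := by
    intro x hx
    apply hC0
    intro h
    have : |x| < M := abs_lt.2 ⟨by linarith [h.1], by linarith [h.2]⟩
    linarith
  have huM : ∀ x, M ≤ |x| → u x = 0 := fun x hx => by simp [hu, hCM x hx]
  have i1 : Integrable (fun x => ‖u x‖ ^ 2) := by
    simpa using compact_integrable (fun _ => 1) continuous_const M u hcont huM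
  have i2 := compact_integrable V hVc M u hcont huM
  have hs := form_split V lam u i1 hmem i2
  have hsi := form_split_int V lam u i1 hmem i2
  have key : ∫ x, (‖deriv u x‖ ^ 2 + (V x - lam) * ‖u x‖ ^ 2) = 0 := by
    have e1 : ∫ x, (‖deriv u x‖ ^ 2 + (V x - lam) * ‖u x‖ ^ 2) =
        ∫ x in (-M)..M, (‖deriv u x‖ ^ 2 + (V x - lam) * ‖u x‖ ^ 2) := by
      symm
      have e2 : ∀ x, x ∉ Set.Ioc (-M) M → (‖deriv u x‖ ^ 2 + (V x - lam) * ‖u x‖ ^ 2) = 0 := by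
        intro x hx
        have hxM : M ≤ |x| := by
          by_contra h
          push Not at h
          exact hx ⟨(abs_lt.1 h).1, (abs_lt.1 h).2.le⟩
        have hxZ : x ∉ Z := by
          intro h
          have := (hZf x h).1
          exact hx ⟨by linarith [this.1], by linarith [this.2]⟩
        rw [(hder x hxZ).deriv, huM x hxM, hCM x hxM]; simp
      apply intervalIntegral.integral_eq_integral_of_support_subset
      intro x hx
      by_contra h
      exact hx (e2 x h)
    rw [e1]
    set G : ℝ → ℝ := fun x => ‖C x‖ ^ 2 * (f x * g x) with hG
    have hGd : ∀ x, x ∉ Z → HasDerivAt G (‖deriv u x‖ ^ 2 + (V x - lam) * ‖u x‖ ^ 2) x := by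
      intro x hx
      rw [(hder x hx).deriv]
      obtain ⟨c, hc⟩ := hCl x hx
      have hcx : C x = c := hc.self_of_nhds
      by_cases hxI : x ∈ Set.Icc a b
      · have h1 : HasDerivAt (fun y => ‖c‖ ^ 2 * (f y * g y))
            (‖c‖ ^ 2 * (g x * g x + f x * ((V x - lam) * f x))) x :=
          ((hf x hxI).mul (hg x hxI)).const_mul _
        have h2 := h1.congr_of_eventuallyEq (f₁ := G) (by
          filter_upwards [hc] with y hy
          simp [hG, hy])
        refine h2.congr_deriv ?_
        simp only [hu, norm_mul, Complex.norm_real, Real.norm_eq_abs, mul_pow, sq_abs, hcx]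
        ring
      · have h0 : c = 0 := by rw [← hcx]; exact hC0 x hxI
        have h2 := (hasDerivAt_const x (0 : ℝ)).congr_of_eventuallyEq (f₁ := G) (by
          filter_upwards [hc] with y hy
          simp [hG, hy, h0])
        refine h2.congr_deriv ?_
        simp [hu, hcx, h0]
    have hGc : Continuous G := by
      rw [continuous_iff_continuousAt]
      intro x
      by_cases hx : x ∈ Z
      · obtain ⟨hxI, hfx⟩ := hZf x hx
        have hc : Filter.Tendsto (fun y => K ^ 2 * |f y * g y|) (nhds x) (nhds 0) := by
          have := (((hf x hxI).continuousAt.mul (hg x hxI).continuousAt).abs).const_mul (K ^ 2)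
          simpa [ContinuousAt, hfx] using this
        have hu0 : G x = 0 := by simp [hG, hfx]
        rw [ContinuousAt, hu0]
        apply squeeze_zero_norm _ hc
        intro y
        simp only [hG, norm_mul, Real.norm_eq_abs, abs_mul, abs_pow, abs_norm]
        apply mul_le_mul_of_nonneg_right _ (by positivity)
        exact pow_le_pow_left₀ (norm_nonneg _) (hCK y) 2
      · exact (hGd x hx).continuousAt
    have h3 := integral_eq_of_hasDerivAt_off_countable (a := -M) (b := M) G _ hZ hGc.continuousOn
      (fun t ht => hGd t ht.2) hsi.intervalIntegrable
    rw [h3]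
    simp [hG, hCM M (le_abs_self M), hCM (-M) (by rw [abs_neg]; exact le_abs_self M)]
  rw [key] at hs
  linarith

lemma lemB (V : ℝ → ℝ) (hVc : Continuous V) (hV : ∀ x, 0 ≤ V x) (lam a b : ℝ) (hab : a < b)
    (j : ℕ) (hj : 1 ≤ j) (θ r : ℝ → ℝ) (h0 : θ a = 0) (hr : ∀ t, 0 < r t)
    (hd : ∀ t ∈ Set.Icc a b, HasDerivAt θ (prF (fun x => V x - lam) t (θ t)) t)
    (hf : ∀ t ∈ Set.Icc a b, HasDerivAt (fun t => r t * Real.sin (θ t)) (r t * Real.cos (θ t)) t)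
    (hg : ∀ t ∈ Set.Icc a b, HasDerivAt (fun t => r t * Real.cos (θ t))
        ((V t - lam) * (r t * Real.sin (θ t))) t)
    (hb : j * Real.pi = θ b) :
    minmax V (InFormDomain V) j ≤ lam := by
  have hpi := Real.pi_pos
  have hθc : ContinuousOn θ (Set.Icc a b) := fun t ht => (hd t ht).continuousAt.continuousWithinAt
  set Z : Set ℝ := {x | x ∈ Set.Icc a b ∧ Real.sin (θ x) = 0} with hZ
  -- the angle is nonnegative
  have hθ0 : ∀ x ∈ Set.Icc a b, 0 ≤ θ x := by
    intro x hx
    rcases hx.1.eq_or_lt with h | h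
    · rw [← h, h0]
    · have := angle_crossing _ θ a x h 0 (fun t ht => hd t ⟨ht.1, ht.2.trans hx.2⟩) (by simp [h0])
      simpa using this.le
  have hcr : ∀ x ∈ Set.Icc a b, ∀ y ∈ Set.Icc a b, x < y → ∀ k : ℕ, k * Real.pi ≤ θ x →
      k * Real.pi < θ y := fun x hx y hy hxy k hk =>
    angle_crossing _ θ x y hxy k (fun t ht => hd t ⟨hx.1.trans ht.1, ht.2.trans hy.2⟩) hk
  have hZn : ∀ x ∈ Z, ∃ n : ℕ, θ x = n * Real.pi := by
    rintro x ⟨hx, hs⟩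
    obtain ⟨n, hn⟩ := Real.sin_eq_zero_iff.1 hs
    have : 0 ≤ n := by
      have h1 := hθ0 x hx
      rw [← hn] at h1
      have h2 : (0 : ℝ) ≤ n := nonneg_of_mul_nonneg_left h1 hpi
      exact_mod_cast h2
    lift n to ℕ using this
    exact ⟨n, by rw [← hn]; simp⟩
  have hZc : Z.Countable := by
    have hinj : Set.InjOn θ Z := by
      intro x hx y hy hxy
      obtain ⟨n, hn⟩ := hZn x hx
      rcases lt_trichotomy x y with h | h | h
      · have := hcr x hx.1 y hy.1 h n hn.ge
        linarith
      · exact h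
      · have := hcr y hy.1 x hx.1 h n (by linarith)
        linarith
    refine Set.MapsTo.countable_of_injOn (t := Set.range (fun n : ℕ => n * Real.pi)) (f := θ) ?_ hinj
      (Set.countable_range _)
    intro x hx
    obtain ⟨n, hn⟩ := hZn x hx
    exact ⟨n, hn.symm⟩
  classical
  let ext : (Fin j → ℂ) → ℕ → ℂ := fun c n => if h : n < j then c ⟨n, h⟩ else 0
  let C : (Fin j → ℂ) → ℝ → ℂ := fun c x =>
    if x ∈ Set.Icc a b then ext c ⌊θ x / Real.pi⌋₊ else 0
  have hpiece : ∀ c, InH (fun x => C c x * ((r x * Real.sin (θ x) : ℝ) : ℂ)) ∧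
      schForm V (fun x => C c x * ((r x * Real.sin (θ x) : ℝ) : ℂ)) =
        lam * ∫ x, ‖C c x * ((r x * Real.sin (θ x) : ℝ) : ℂ)‖ ^ 2 := by
    intro c
    apply piece V hVc lam a b hab (fun t => r t * Real.sin (θ t)) (fun t => r t * Real.cos (θ t))
      hf hg (C c) Z (‖c‖) hZc
    · rintro x ⟨hx, hs⟩
      exact ⟨hx, by simp [hs]⟩
    · intro x
      simp only [C, ext]
      split_ifs
      · exact norm_le_pi_norm c _
      · simp
      · simp
    · intro x hx
      simp only [C, if_neg hx]
    · intro x hx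
      by_cases hxI : x ∈ Set.Icc a b
      · have hs : Real.sin (θ x) ≠ 0 := fun h => hx ⟨hxI, h⟩
        have hxa : x ≠ a := fun h => hs (by rw [h, h0]; simp)
        have hxb : x ≠ b := fun h => hs (by rw [h, ← hb]; exact Real.sin_nat_mul_pi j)
        have hxo : x ∈ Set.Ioo a b := ⟨lt_of_le_of_ne hxI.1 (Ne.symm hxa), lt_of_le_of_ne hxI.2 hxb⟩
        set n := ⌊θ x / Real.pi⌋₊ with hn
        have hfl := Nat.floor_le (div_nonneg (hθ0 x hxI) hpi.le)
        have hfu := Nat.lt_floor_add_one (θ x / Real.pi)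
        rw [← hn, le_div_iff₀ hpi] at hfl
        rw [← hn, div_lt_iff₀ hpi] at hfu
        have hfl' : n * Real.pi < θ x := lt_of_le_of_ne hfl (fun h => hs (by
          rw [← h]; exact Real.sin_nat_mul_pi n))
        refine ⟨ext c n, ?_⟩
        have hct := (hd x hxI).continuousAt
        filter_upwards [isOpen_Ioo.mem_nhds hxo, hct.eventually (lt_mem_nhds hfl'),
          hct.eventually (gt_mem_nhds hfu)] with y hy1 hy2 hy3
        have hfy : ⌊θ y / Real.pi⌋₊ = n := by
          rw [Nat.floor_eq_iff (div_nonneg (hθ0 y ⟨hy1.1.le, hy1.2.le⟩) hpi.le), le_div_iff₀ hpi,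
            div_lt_iff₀ hpi]
          exact ⟨hy2.le, hy3⟩
        simp only [C, if_pos (show y ∈ Set.Icc a b from ⟨hy1.1.le, hy1.2.le⟩), hfy]
      · refine ⟨0, ?_⟩
        filter_upwards [isClosed_Icc.isOpen_compl.mem_nhds hxI] with y hy
        simp only [C, if_neg hy]
  let T : (Fin j → ℂ) →ₗ[ℂ] (ℝ → ℂ) :=
    { toFun := fun c x => C c x * ((r x * Real.sin (θ x) : ℝ) : ℂ)
      map_add' := fun c d => by
        ext x
        simp only [C, ext, Pi.add_apply]
        split_ifs <;> ring
      map_smul' := fun c d => by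
        ext x
        simp only [C, ext, Pi.smul_apply, RingHom.id_apply, smul_eq_mul]
        split_ifs <;> ring }
  have hT : Function.Injective T := by
    rw [← LinearMap.ker_eq_bot, LinearMap.ker_eq_bot']
    intro c hc
    ext k
    have hkj : ((k : ℕ) : ℝ) + 1 ≤ j := by exact_mod_cast k.2
    obtain ⟨x, hx, hxk⟩ : ∃ x ∈ Set.Icc a b, θ x = ((k : ℕ) + 1 / 2) * Real.pi := by
      have := intermediate_value_Icc hab.le hθc
      obtain ⟨x, hx, hxk⟩ := this (show ((k : ℕ) + 1 / 2) * Real.pi ∈ Set.Icc (θ a) (θ b) by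
        rw [h0, ← hb]
        exact ⟨by positivity, by nlinarith⟩)
      exact ⟨x, hx, hxk⟩
    have h1 : C c x * ((r x * Real.sin (θ x) : ℝ) : ℂ) = 0 := congrFun hc x
    have h2 : Real.sin (θ x) ≠ 0 := by
      intro h
      obtain ⟨n, hn⟩ := hZn x ⟨hx, h⟩
      rw [hxk] at hn
      have h3 := mul_right_cancel₀ hpi.ne' hn
      have h4 : 2 * (k : ℕ) + 1 = 2 * n := by
        have : (2 * (k : ℕ) + 1 : ℝ) = 2 * n := by linarith
        exact_mod_cast this
      omega
    have h5 : ⌊θ x / Real.pi⌋₊ = k := by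
      rw [hxk, mul_div_assoc, div_self hpi.ne', mul_one, Nat.floor_eq_iff (by positivity)]
      constructor <;> linarith
    rcases mul_eq_zero.1 h1 with h | h
    · simpa [C, ext, hx.1, hx.2, h5] using h
    · exact absurd h (by exact_mod_cast mul_ne_zero (hr x).ne' h2)
  set M := max |a| |b| + 1 with hM
  have hM0 : 0 ≤ M := by positivity
  refine (minmax_mono V hVc hV (M + 1) (by linarith) j).trans ?_
  apply lemS V hVc hV M (M + 1) lam hM0 (by linarith) j hj (LinearMap.range T)
  · rintro _ ⟨c, rfl⟩
    refine ⟨(hpiece c).1, fun x hx => ?_⟩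
    show C c x * _ = 0
    have hxI : x ∉ Set.Icc a b := by
      intro h
      have h1 := neg_abs_le a
      have h2 := le_max_left |a| |b|
      have h3 := le_abs_self b
      have h4 := le_max_right |a| |b|
      have : |x| < M := abs_lt.2 ⟨by linarith [h.1], by linarith [h.2]⟩
      linarith
    simp only [C, if_neg hxI, zero_mul]
  · rw [LinearMap.finrank_range_of_inj hT]; simp
  · rintro _ ⟨c, rfl⟩
    exact (hpiece c).2.le

/-- Strict inequality. -/
lemma strict_lt (V : ℝ → ℝ) (hVc : Continuous V) (hV : ∀ x, 0 ≤ V x) (L : ℝ) (hL : 0 < L)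
    (j : ℕ) (hj : 1 ≤ j) : minmax V (InFormDomain V) j < minmax V (InDirichletDomain L) j := by
  set lam := minmax V (InDirichletDomain L) j with hlam
  obtain ⟨θ, h0, hd⟩ := ode_exists (fun x => V x - lam) (by fun_prop) (-L) L (-L) 0
    ⟨le_rfl, by linarith⟩
  have hθL : j * Real.pi ≤ θ L := by
    by_contra! hlt
    obtain ⟨δ, hδ, hc⟩ := angle_cont V hVc lam (-L) L (by linarith) θ hd (j * Real.pi - θ L)
      (by linarith)
    obtain ⟨η, e0, ed⟩ := ode_exists (fun x => V x - (lam + δ)) (by fun_prop) (-L) L (-L) 0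
      ⟨le_rfl, by linarith⟩
    have h1 := hc (lam + δ) η (by simp [abs_of_pos hδ]) (by rw [e0, h0]) ed
    have h2 : η L ≤ j * Real.pi := by linarith [(abs_lt.1 h1).2]
    have h3 := le_minmax V hVc hV L hL j hj (lam + δ)
      (fun W hW hWj => lemA V hVc (lam + δ) L hL j hj η e0 ed h2 W hW hWj)
    linarith
  obtain ⟨η, e0, ed⟩ := ode_exists (fun x => V x - lam) (by fun_prop) (-L - 1) L (-L - 1) 0
    ⟨le_rfl, by linarith⟩
  have h1 : θ (-L) < η (-L) := by
    have := angle_crossing _ η (-L - 1) (-L) (by linarith) 0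
      (fun t ht => ed t ⟨ht.1, by linarith [ht.2]⟩) (by simp [e0])
    rw [h0]; simpa using this
  have h2 := angle_compare _ θ η (by fun_prop) (-L) L (by linarith) hd
    (fun t ht => ed t ⟨by linarith [ht.1], ht.2⟩) h1
  obtain ⟨δ, hδ, hc⟩ := angle_cont V hVc lam (-L - 1) L (by linarith) η ed (η L - θ L) (by linarith)
  obtain ⟨φ, r, p0, hr, pd, hf, hg⟩ := sol_exists (fun x => V x - (lam - δ)) (by fun_prop)
    (-L - 1) L (-L - 1) 0 ⟨le_rfl, by linarith⟩
  have h3 := hc (lam - δ) φ (by simp [abs_of_pos hδ]) (by rw [p0, e0]) pd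
  have h4 : j * Real.pi ≤ φ L := by linarith [(abs_lt.1 h3).1]
  have hφc : ContinuousOn φ (Set.Icc (-L - 1) L) :=
    fun t ht => (pd t ht).continuousAt.continuousWithinAt
  obtain ⟨b, hb, hbj⟩ := intermediate_value_Icc (by linarith : -L - 1 ≤ L) hφc
    (show j * Real.pi ∈ Set.Icc (φ (-L - 1)) (φ L) from ⟨by rw [p0]; positivity, h4⟩)
  have hbL : -L - 1 < b := by
    refine lt_of_le_of_ne hb.1 (fun h => ?_)
    rw [← h, p0] at hbj
    have : (0 : ℝ) < j * Real.pi := by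
      have : (1 : ℝ) ≤ j := by exact_mod_cast hj
      positivity
    linarith
  have hsub : ∀ t ∈ Set.Icc (-L - 1) b, t ∈ Set.Icc (-L - 1) L :=
    fun t ht => ⟨ht.1, ht.2.trans hb.2⟩
  have h5 := lemB V hVc hV (lam - δ) (-L - 1) b hbL j hj φ r p0 hr
    (fun t ht => pd t (hsub t ht)) (fun t ht => hf t (hsub t ht)) (fun t ht => hg t (hsub t ht))
    hbj.symm
  linarith

/-- Growth of a nonnegative solution of the equation when the potential is at least one. -/
lemma sol_growth (q f g : ℝ → ℝ) (R L : ℝ) (hRL : R < L) (hq1 : ∀ x ∈ Set.Icc R L, 1 ≤ q x)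
    (hf : ∀ t ∈ Set.Icc R L, HasDerivAt f (g t) t)
    (hg : ∀ t ∈ Set.Icc R L, HasDerivAt g (q t * f t) t)
    (hf0 : ∀ t ∈ Set.Icc R L, 0 ≤ f t) :
    f L * Real.cosh (L - R) - g L * Real.sinh (L - R) ≤ f R := by
  have hder : ∀ t ∈ Set.Icc R L, HasDerivAt
      (fun x => f x * Real.cosh (x - R) - g x * Real.sinh (x - R))
      ((1 - q t) * f t * Real.sinh (t - R)) t := by
    intro t ht
    have h1 : HasDerivAt (fun x => x - R) 1 t := (hasDerivAt_id t).sub_const R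
    have h2 := ((hf t ht).mul h1.cosh).sub ((hg t ht).mul h1.sinh)
    refine h2.congr_deriv ?_
    ring
  have hanti : AntitoneOn (fun x => f x * Real.cosh (x - R) - g x * Real.sinh (x - R))
      (Set.Icc R L) := by
    apply antitoneOn_of_deriv_nonpos (convex_Icc R L)
    · exact fun t ht => (hder t ht).continuousAt.continuousWithinAt
    · intro t ht
      rw [interior_Icc] at ht
      exact (hder t ⟨ht.1.le, ht.2.le⟩).differentiableAt.differentiableWithinAt
    · intro t ht
      rw [interior_Icc] at ht
      have ht' : t ∈ Set.Icc R L := ⟨ht.1.le, ht.2.le⟩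
      rw [(hder t ht').deriv]
      have h1 := hq1 t ht'
      have h2 := hf0 t ht'
      have h3 : 0 ≤ Real.sinh (t - R) := Real.sinh_nonneg_iff.2 (by linarith [ht.1])
      have h4 := mul_nonneg (mul_nonneg (sub_nonneg.2 h1) h2) h3
      nlinarith
  have := hanti (Set.left_mem_Icc.2 hRL.le) (Set.right_mem_Icc.2 hRL.le) hRL.le
  simpa using this

/-- Angles stay in `[π/2, π)` to the left of `L`. -/
lemma angle_range (q θ : ℝ → ℝ) (R L : ℝ) (hq1 : ∀ x ∈ Set.Icc R L, 1 ≤ q x)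
    (hd : ∀ t ∈ Set.Icc R L, HasDerivAt θ (prF q t (θ t)) t)
    (h1 : Real.pi / 2 ≤ θ L) (h2 : θ L ≤ Real.pi) (x : ℝ) (hx : x ∈ Set.Ico R L) :
    0 < Real.sin (θ x) := by
  have hlo : Real.pi / 2 < θ x := by
    by_contra! h
    have := crossing (fun x => Real.pi / 2 - θ x) (fun x => - prF q x (θ x)) x L hx.2
      (fun t ht => (hd t ⟨hx.1.trans ht.1, ht.2⟩).const_sub _) (fun t ht h0 => by
        have h3 : θ t = Real.pi / 2 := by linarith
        have h4 := hq1 t ⟨hx.1.trans ht.1, ht.2⟩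
        simp only [prF, h3, Real.cos_pi_div_two, Real.sin_pi_div_two]
        linarith) (by linarith)
    linarith
  have hup : θ x < Real.pi := by
    by_contra! h
    have := angle_crossing q θ x L hx.2 1 (fun t ht => hd t ⟨hx.1.trans ht.1, ht.2⟩) (by simpa using h)
    simp only [Nat.cast_one, one_mul] at this
    linarith
  have := Real.pi_pos
  exact Real.sin_pos_of_pos_of_lt_pi (by linarith) hup

lemma lemN (q : ℝ → ℝ) (hq : Continuous q) (R L : ℝ) (hRL : R < L)
    (hq1 : ∀ x ∈ Set.Icc R L, 1 ≤ q x) :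
    ∃ φ φ' : ℝ → ℝ, φ R = 1 ∧ φ L = 0 ∧ (∀ t ∈ Set.Icc R L, HasDerivAt φ (φ' t) t) ∧
      (∀ t ∈ Set.Icc R L, HasDerivAt φ' (q t * φ t) t) ∧
      ∀ u : ℝ → ℂ, (∀ x ∈ Set.Icc R L, DifferentiableAt ℝ u x) →
        IntervalIntegrable (fun x => ‖deriv u x‖ ^ 2 + q x * ‖u x‖ ^ 2) volume R L →
        -φ' R * ‖u R‖ ^ 2 ≤ (∫ x in R..L, (‖deriv u x‖ ^ 2 + q x * ‖u x‖ ^ 2)) +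
          (1 / (Real.sinh (L - R) * Real.cosh (L - R))) * ‖u R‖ ^ 2 := by
  have hpi := Real.pi_pos
  have hLm : L ∈ Set.Icc R L := ⟨hRL.le, le_rfl⟩
  have hRm : R ∈ Set.Icc R L := ⟨le_rfl, hRL.le⟩
  obtain ⟨θ, r, t0, hr, hd, hf, hg⟩ := sol_exists q hq R L L (Real.pi / 2) hLm
  obtain ⟨η, s, e0, hs, he, hF, hG⟩ := sol_exists q hq R L L Real.pi hLm
  have hN : ∀ x ∈ Set.Icc R L, 0 < Real.sin (θ x) := by
    intro x hx
    rcases hx.2.eq_or_lt with h | h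
    · rw [h, t0]; simp
    · exact angle_range q θ R L hq1 hd (by rw [t0]) (by rw [t0]; linarith) x ⟨hx.1, h⟩
  have hD : ∀ x ∈ Set.Ico R L, 0 < Real.sin (η x) :=
    fun x hx => angle_range q η R L hq1 he (by rw [e0]; linarith) (by rw [e0]) x hx
  have hD' : ∀ x ∈ Set.Icc R L, 0 ≤ Real.sin (η x) := by
    intro x hx
    rcases hx.2.eq_or_lt with h | h
    · rw [h, e0]; simp
    · exact (hD x ⟨hx.1, h⟩).le
  have gN := sol_growth q _ _ R L hRL hq1 hf hg (fun t ht => mul_nonneg (hr t).le (hN t ht).le)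
  have gD := sol_growth q _ _ R L hRL hq1 hF hG (fun t ht => mul_nonneg (hs t).le (hD' t ht))
  simp only [t0, e0, Real.sin_pi_div_two, Real.cos_pi_div_two, Real.sin_pi, Real.cos_pi] at gN gD
  have hsh : 0 < Real.sinh (L - R) := Real.sinh_pos_iff.2 (by linarith)
  have hch := Real.cosh_pos (L - R)
  set fN : ℝ → ℝ := fun t => r t * Real.sin (θ t) with hfN
  set gN' : ℝ → ℝ := fun t => r t * Real.cos (θ t) with hgN
  set fD : ℝ → ℝ := fun t => s t * Real.sin (η t) with hfD
  set gD' : ℝ → ℝ := fun t => s t * Real.cos (η t) with hgD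
  have hwr : fN R * gD' R - gN' R * fD R = fN L * gD' L - gN' L * fD L := by
    have hder : ∀ x ∈ Set.Icc R L, HasDerivAt (fun x => fN x * gD' x - gN' x * fD x) 0 x := by
      intro x hx
      have := ((hf x hx).mul (hG x hx)).sub ((hg x hx).mul (hF x hx))
      refine this.congr_deriv ?_
      simp only [hfN, hgN, hfD, hgD]
      ring
    exact (constant_of_has_deriv_right_zero
      (fun x hx => (hder x hx).continuousAt.continuousWithinAt)
      (fun x hx => (hder x ⟨hx.1, hx.2.le⟩).hasDerivWithinAt) L hLm).symm
  have hwL : fN L * gD' L - gN' L * fD L = - (r L * s L) := by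
    simp only [hfN, hgN, hfD, hgD, t0, e0, Real.sin_pi_div_two, Real.cos_pi_div_two, Real.sin_pi,
      Real.cos_pi]
    ring
  have hfNR : 0 < fN R := mul_pos (hr R) (hN R hRm)
  have hfDR : 0 < fD R := mul_pos (hs R) (hD R ⟨le_rfl, hRL⟩)
  refine ⟨fun t => fD t / fD R, fun t => gD' t / fD R, div_self hfDR.ne', ?_, ?_, ?_, ?_⟩
  · simp [hfD, e0]
  · exact fun t ht => (hF t ht).div_const _
  · intro t ht
    refine ((hG t ht).div_const _).congr_deriv ?_
    simp only [hfD]; ring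
  intro u hu hui
  have hpic : ‖u L‖ ^ 2 * (Real.cos (θ L) / Real.sin (θ L)) -
      ‖u R‖ ^ 2 * (Real.cos (θ R) / Real.sin (θ R)) ≤
      ∫ x in R..L, (‖deriv u x‖ ^ 2 + q x * ‖u x‖ ^ 2) := by
    choose! d hd1 hd2 using fun x (hx : x ∈ Set.Icc R L) =>
      G_deriv_ne q θ u x (hu x hx) (hd x hx) (hN x hx).ne'
    exact intervalIntegral.sub_le_integral_of_hasDeriv_right_of_le hRL.le
      (fun x hx => (hd1 x hx).continuousAt.continuousWithinAt)
      (fun x hx => (hd1 x ⟨hx.1.le, hx.2.le⟩).hasDerivWithinAt)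
      ((intervalIntegrable_iff_integrableOn_Icc_of_le hRL.le).1 hui)
      (fun x hx => hd2 x ⟨hx.1.le, hx.2.le⟩)
  rw [t0, Real.cos_pi_div_two, zero_div, mul_zero, zero_sub] at hpic
  have hcot : Real.cos (θ R) / Real.sin (θ R) = gN' R / fN R := by
    simp only [hfN, hgN]
    rw [mul_div_mul_left _ _ (hr R).ne']
  rw [hcot] at hpic
  have hdiff : -(gD' R / fD R) + gN' R / fN R ≤ 1 / (Real.sinh (L - R) * Real.cosh (L - R)) := by
    have e1 : -(gD' R / fD R) + gN' R / fN R = (r L * s L) / (fN R * fD R) := by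
      rw [hwL] at hwr
      field_simp
      linarith
    rw [e1, div_le_div_iff₀ (by positivity) (by positivity)]
    have h1 : r L * Real.cosh (L - R) ≤ fN R := by linarith
    have h2 : s L * Real.sinh (L - R) ≤ fD R := by linarith
    have h3 := mul_le_mul h1 h2 (mul_nonneg (hs L).le hsh.le) hfNR.le
    nlinarith
  have hsq : 0 ≤ ‖u R‖ ^ 2 := by positivity
  have h4 := mul_le_mul_of_nonneg_right hdiff hsq
  simp only [hgD] at h4 ⊢
  nlinarith

/-- The shifted energy. -/
noncomputable def eng (V : ℝ → ℝ) (lam : ℝ) (u : ℝ → ℂ) : ℝ :=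
  ∫ x, (‖deriv u x‖ ^ 2 + (V x - lam) * ‖u x‖ ^ 2)

/-- Energy class. -/
def InE (V : ℝ → ℝ) (u : ℝ → ℂ) : Prop :=
  InH u ∧ Integrable (fun x => ‖u x‖ ^ 2) ∧ Integrable (fun x => V x * ‖u x‖ ^ 2)

/-- Replace the right tail of `u` by a multiple of `ψ`. -/
noncomputable def cutR (R : ℝ) (ψ : ℝ → ℝ) (u : ℝ → ℂ) (x : ℝ) : ℂ :=
  if x ≤ R then u x else u R * ψ x

lemma lemTr (V : ℝ → ℝ) (hVc : Continuous V) (lam R L : ℝ) (hRL : R < L)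
    (hq1 : ∀ x, R ≤ x → 1 ≤ V x - lam) :
    ∃ ψ : ℝ → ℝ, (∀ x, L ≤ x → ψ x = 0) ∧ ∀ u, InE V u → (∀ x, R ≤ x → DifferentiableAt ℝ u x) →
      InE V (cutR R ψ u) ∧ eng V lam (cutR R ψ u) ≤ eng V lam u +
        (1 / (Real.sinh (L - R) * Real.cosh (L - R))) * ‖u R‖ ^ 2 := by
  have hqc : Continuous (fun x => V x - lam) := by fun_prop
  obtain ⟨φ, φ', hφR, hφL, hφd, hφd', hφu⟩ := lemN (fun x => V x - lam) hqc R L hRL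
    (fun x hx => hq1 x hx.1)
  have hφc : ContinuousOn φ (Set.Icc R L) :=
    fun t ht => (hφd t ht).continuousAt.continuousWithinAt
  have hφc' : ContinuousOn φ' (Set.Icc R L) :=
    fun t ht => (hφd' t ht).continuousAt.continuousWithinAt
  obtain ⟨K1, hK1⟩ := isCompact_Icc.exists_bound_of_continuousOn hφc
  obtain ⟨K2, hK2⟩ := isCompact_Icc.exists_bound_of_continuousOn hφc'
  classical
  refine ⟨fun x => if x ≤ L then φ x else 0, ?_, ?_⟩
  · intro x hx
    rcases hx.eq_or_lt with h | h
    · simp [← h, hφL]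
    · simp [not_le.2 h]
  intro u hu hud
  obtain ⟨huH, iu, iVu⟩ := hu
  set v := cutR R (fun x => if x ≤ L then φ x else 0) u with hv
  have v1 : ∀ x, x ≤ R → v x = u x := fun x hx => by simp [hv, cutR, hx]
  have v2 : ∀ x ∈ Set.Icc R L, v x = u R * φ x := by
    intro x hx
    rcases hx.1.eq_or_lt with h | h
    · simp [hv, cutR, ← h, hφR]
    · simp [hv, cutR, not_le.2 h, hx.2]
  have v3 : ∀ x, L ≤ x → v x = 0 := by
    intro x hx
    rcases hx.eq_or_lt with h | h
    · rw [← h, v2 L ⟨hRL.le, le_rfl⟩, hφL]; simp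
    · simp [hv, cutR, not_le.2 h, not_le.2 (hRL.trans h)]
  have d1 : ∀ x, x < R → v =ᶠ[nhds x] u := by
    intro x hx
    filter_upwards [gt_mem_nhds hx] with y hy using v1 y hy.le
  have d2 : ∀ x ∈ Set.Ioo R L, HasDerivAt v (u R * φ' x) x := by
    intro x hx
    have h1 : HasDerivAt (fun y => u R * (φ y : ℂ)) (u R * φ' x) x :=
      ((hφd x ⟨hx.1.le, hx.2.le⟩).ofReal_comp).const_mul _
    refine h1.congr_of_eventuallyEq ?_
    filter_upwards [isOpen_Ioo.mem_nhds hx] with y hy using v2 y ⟨hy.1.le, hy.2.le⟩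
  have d3 : ∀ x, L < x → HasDerivAt v 0 x := by
    intro x hx
    refine (hasDerivAt_const x (0 : ℂ)).congr_of_eventuallyEq ?_
    filter_upwards [lt_mem_nhds hx] with y hy using v3 y hy.le
  have hvc : Continuous v := by
    have hcl : ContinuousOn v (Set.Icc R L) := by
      have : ContinuousOn (fun x => u R * (φ x : ℂ)) (Set.Icc R L) :=
        continuousOn_const.mul (Complex.continuous_ofReal.comp_continuousOn hφc)
      exact this.congr v2
    have hcl1 : ContinuousOn v (Set.Iic R) := huH.1.continuousOn.congr v1
    have hcl3 : ContinuousOn v (Set.Ici L) := continuousOn_const.congr v3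
    have h12 := hcl1.union_of_isClosed hcl isClosed_Iic isClosed_Icc
    have h123 := h12.union_of_isClosed hcl3 (isClosed_Iic.union isClosed_Icc) isClosed_Ici
    rw [← continuousOn_univ]
    convert h123 using 1
    symm
    rw [Set.eq_univ_iff_forall]
    intro x
    by_cases h1 : x ≤ R
    · exact Or.inl (Or.inl h1)
    · by_cases h2 : x ≤ L
      · exact Or.inl (Or.inr ⟨(not_le.1 h1).le, h2⟩)
      · exact Or.inr (not_le.1 h2).le
  obtain ⟨s, hs, hsd⟩ := huH.2.1
  have hsc : (s ∪ {R, L}).Countable := hs.union (Set.toFinite _).countable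
  have hvd : ∀ x, x ∉ s ∪ {R, L} → DifferentiableAt ℝ v x := by
    intro x hx
    simp only [Set.mem_union, Set.mem_insert_iff, Set.mem_singleton_iff, not_or] at hx
    rcases lt_or_gt_of_ne hx.2.1 with h | h
    · exact (d1 x h).differentiableAt_iff.2 (hsd x hx.1)
    · rcases lt_or_gt_of_ne hx.2.2 with h' | h'
      · exact (d2 x ⟨h, h'⟩).differentiableAt
      · exact (d3 x h').differentiableAt
  have hae : ∀ᵐ x : ℝ, x ≠ R ∧ x ≠ L := by
    have h1 : ∀ᵐ x : ℝ, x ≠ R := by simp [ae_iff]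
    have h2 : ∀ᵐ x : ℝ, x ≠ L := by simp [ae_iff]
    filter_upwards [h1, h2] with x a b using ⟨a, b⟩
  have icst : ∀ c : ℝ, Integrable (Set.indicator (Set.Icc R L) (fun _ => c)) := fun c => by
    rw [integrable_indicator_iff measurableSet_Icc]
    simp
  have hdv2 : Integrable (fun x => ‖deriv v x‖ ^ 2) := by
    refine Integrable.mono' ((memLp_sq huH.2.2).add (icst ((‖u R‖ * K2) ^ 2)))
      ((stronglyMeasurable_deriv v).norm.pow 2).aestronglyMeasurable ?_
    filter_upwards [hae] with x hx
    simp only [Pi.add_apply]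
    rw [Real.norm_of_nonneg (by positivity)]
    rcases lt_or_gt_of_ne hx.1 with h | h
    · rw [(d1 x h).deriv_eq, Set.indicator_of_notMem (fun hh => not_lt.2 hh.1 h), add_zero]
    · rcases lt_or_gt_of_ne hx.2 with h' | h'
      · have hm : x ∈ Set.Icc R L := ⟨h.le, h'.le⟩
        rw [(d2 x ⟨h, h'⟩).deriv, Set.indicator_of_mem hm, norm_mul, Complex.norm_real]
        have h1 : (‖u R‖ * ‖φ' x‖) ^ 2 ≤ (‖u R‖ * K2) ^ 2 :=
          pow_le_pow_left₀ (by positivity) (mul_le_mul_of_nonneg_left (hK2 x hm) (norm_nonneg _)) 2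
        have h2 : 0 ≤ ‖deriv u x‖ ^ 2 := by positivity
        linarith
      · rw [(d3 x h').deriv, Set.indicator_of_notMem (fun hh => not_lt.2 hh.2 h')]
        simp
  have hdv : MemLp (deriv v) 2 :=
    (memLp_two_iff_integrable_sq_norm (stronglyMeasurable_deriv v).aestronglyMeasurable).2 hdv2
  have hVgen : ∀ Q : ℝ → ℝ, Continuous Q → Integrable (fun x => Q x * ‖u x‖ ^ 2) →
      Integrable (fun x => Q x * ‖v x‖ ^ 2) := by
    intro Q hQ hQi
    obtain ⟨K4, hK4, hK4'⟩ := exists_bound Q hQ R L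
    refine Integrable.mono' (hQi.norm.add (icst (K4 * (‖u R‖ * K1) ^ 2)))
      (Continuous.aestronglyMeasurable (by fun_prop)) (Filter.Eventually.of_forall fun x => ?_)
    simp only [Pi.add_apply]
    by_cases hm : x ∈ Set.Icc R L
    · rw [Set.indicator_of_mem hm, v2 x hm, norm_mul (Q x), norm_mul (u R)]
      refine le_trans ?_ (le_add_of_nonneg_left (norm_nonneg _))
      rw [Complex.norm_real, Real.norm_of_nonneg (by positivity : 0 ≤ (‖u R‖ * ‖φ x‖) ^ 2)]
      apply mul_le_mul (hK4' x hm) _ (by positivity) hK4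
      exact pow_le_pow_left₀ (by positivity)
        (mul_le_mul_of_nonneg_left (hK1 x hm) (norm_nonneg _)) 2
    · rw [Set.indicator_of_notMem hm, add_zero]
      by_cases h1 : x ≤ R
      · rw [v1 x h1]
      · have h2 : L ≤ x := by
          by_contra h2
          exact hm ⟨(not_le.1 h1).le, (not_le.1 h2).le⟩
        rw [v3 x h2]
        simpa using by positivity
  have iv : Integrable (fun x => ‖v x‖ ^ 2) := by
    simpa using hVgen (fun _ => 1) continuous_const (by simpa using iu)
  have iVv := hVgen V hVc iVu
  refine ⟨⟨⟨hvc, ⟨_, hsc, hvd⟩, hdv⟩, iv, iVv⟩, ?_⟩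
  have iEu := form_split_int V lam u iu huH.2.2 iVu
  have iEv := form_split_int V lam v iv hdv iVv
  have hsplit : ∀ p : ℝ → ℝ, Integrable p →
      ∫ x, p x = (∫ x in Set.Iic R, p x) + (∫ x in R..L, p x) + ∫ x in Set.Ioi L, p x := by
    intro p hp
    have h1 := intervalIntegral.integral_Iic_sub_Iic (μ := volume) (f := p) (a := R) (b := L)
      hp.integrableOn hp.integrableOn
    have h2 := intervalIntegral.integral_Iic_add_Ioi (μ := volume) (f := p) (b := L)
      hp.integrableOn hp.integrableOn
    linarith
  unfold eng
  rw [hsplit _ iEu, hsplit _ iEv]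
  have p1 : ∫ x in Set.Iic R, (‖deriv v x‖ ^ 2 + (V x - lam) * ‖v x‖ ^ 2) =
      ∫ x in Set.Iic R, (‖deriv u x‖ ^ 2 + (V x - lam) * ‖u x‖ ^ 2) := by
    rw [integral_Iic_eq_integral_Iio, integral_Iic_eq_integral_Iio]
    apply setIntegral_congr_fun measurableSet_Iio
    intro x hx
    simp only
    rw [(d1 x hx).deriv_eq, v1 x (le_of_lt hx)]
  have p3 : ∫ x in Set.Ioi L, (‖deriv v x‖ ^ 2 + (V x - lam) * ‖v x‖ ^ 2) = 0 := by
    rw [setIntegral_congr_fun (g := fun _ => (0 : ℝ)) measurableSet_Ioi, integral_zero]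
    intro x hx
    simp only
    rw [(d3 x hx).deriv, v3 x (le_of_lt hx)]
    simp
  have p3' : 0 ≤ ∫ x in Set.Ioi L, (‖deriv u x‖ ^ 2 + (V x - lam) * ‖u x‖ ^ 2) := by
    apply setIntegral_nonneg measurableSet_Ioi
    intro x hx
    have := hq1 x (hRL.trans hx).le
    positivity
  have p2 : ∫ x in R..L, (‖deriv v x‖ ^ 2 + (V x - lam) * ‖v x‖ ^ 2) = -φ' R * ‖u R‖ ^ 2 := by
    have hder : ∀ x ∈ Set.Icc R L, HasDerivAt (fun x => ‖u R‖ ^ 2 * (φ x * φ' x))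
        (‖u R‖ ^ 2 * (φ' x * φ' x + φ x * ((V x - lam) * φ x))) x :=
      fun x hx => ((hφd x hx).mul (hφd' x hx)).const_mul _
    have h1 := intervalIntegral.integral_eq_sub_of_hasDerivAt_of_le hRL.le
      (f := fun x => ‖u R‖ ^ 2 * (φ x * φ' x))
      (f' := fun x => ‖deriv v x‖ ^ 2 + (V x - lam) * ‖v x‖ ^ 2)
      (fun x hx => (hder x hx).continuousAt.continuousWithinAt)
      (fun x hx => by
        have hm : x ∈ Set.Icc R L := ⟨hx.1.le, hx.2.le⟩
        refine (hder x hm).congr_deriv ?_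
        rw [(d2 x hx).deriv, v2 x hm]
        simp only [norm_mul, Complex.norm_real, Real.norm_eq_abs, mul_pow, sq_abs]
        ring) iEv.intervalIntegrable
    rw [h1, hφL, hφR]
    ring
  have h5 := hφu u (fun x hx => hud x hx.1) iEu.intervalIntegrable
  rw [p1, p2, p3]
  linarith

lemma deriv_refl (u : ℝ → ℂ) (x : ℝ) : deriv (fun y => u (-y)) x = -deriv u (-x) := by
  simpa using deriv_comp_neg (f := u) x

lemma InH.refl {u : ℝ → ℂ} (hu : InH u) : InH (fun x => u (-x)) := by
  obtain ⟨hc, ⟨s, hs, hd⟩, h2⟩ := hu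
  refine ⟨hc.comp continuous_neg, ⟨Neg.neg ⁻¹' s, hs.preimage neg_injective, ?_⟩, ?_⟩
  · intro x hx
    have h1 : DifferentiableAt ℝ u (-x) := hd _ hx
    exact h1.comp x differentiableAt_id.neg
  · have h1 : deriv (fun y => u (-y)) = fun x => -deriv u (-x) := funext (deriv_refl u)
    rw [h1]
    exact (h2.comp_measurePreserving (Measure.measurePreserving_neg (volume : Measure ℝ))).neg

lemma InE.refl {V : ℝ → ℝ} {u : ℝ → ℂ} (hu : InE V u) :
    InE (fun x => V (-x)) (fun x => u (-x)) :=
  ⟨hu.1.refl, hu.2.1.comp_neg, hu.2.2.comp_neg⟩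

lemma eng_refl (V : ℝ → ℝ) (lam : ℝ) (u : ℝ → ℂ) :
    eng (fun x => V (-x)) lam (fun x => u (-x)) = eng V lam u := by
  unfold eng
  rw [← integral_neg_eq_self (fun x => ‖deriv u x‖ ^ 2 + (V x - lam) * ‖u x‖ ^ 2)]
  congr 1
  ext x
  rw [deriv_refl, norm_neg]

/-- Replace both tails. -/
noncomputable def cut2 (R : ℝ) (ψ χ : ℝ → ℝ) (u : ℝ → ℂ) (x : ℝ) : ℂ :=
  if -x ≤ R then (if x ≤ R then u x else u R * ψ x) else u (-R) * χ (-x)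

lemma lemT (V : ℝ → ℝ) (hVc : Continuous V) (lam R L : ℝ) (hR : 0 < R) (hRL : R < L)
    (hq1 : ∀ x, R ≤ |x| → 1 ≤ V x - lam) :
    ∃ ψ χ : ℝ → ℝ, (∀ x, L ≤ x → ψ x = 0) ∧ (∀ x, L ≤ x → χ x = 0) ∧
      ∀ u, InE V u → Differentiable ℝ u →
      InE V (cut2 R ψ χ u) ∧ eng V lam (cut2 R ψ χ u) ≤ eng V lam u +
        (1 / (Real.sinh (L - R) * Real.cosh (L - R))) * (‖u R‖ ^ 2 + ‖u (-R)‖ ^ 2) := by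
  obtain ⟨ψ, hψ, h1⟩ := lemTr V hVc lam R L hRL (fun x hx => hq1 x (hx.trans (le_abs_self x)))
  obtain ⟨χ, hχ, h2⟩ := lemTr (fun x => V (-x)) (by fun_prop) lam R L hRL
    (fun x hx => hq1 (-x) (by rw [abs_neg]; exact hx.trans (le_abs_self x)))
  refine ⟨ψ, χ, hψ, hχ, fun u hu hud => ?_⟩
  obtain ⟨a1, a2⟩ := h1 u hu (fun x _ => hud x)
  set v := cutR R ψ u with hv
  have hvd : ∀ x, R ≤ x → DifferentiableAt ℝ (fun y => v (-y)) x := by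
    intro x hx
    have h3 : v =ᶠ[nhds (-x)] u := by
      filter_upwards [gt_mem_nhds (show -x < R by linarith)] with y hy
      simp [hv, cutR, hy.le]
    have h4 : DifferentiableAt ℝ v (-x) := h3.differentiableAt_iff.2 (hud _)
    exact h4.comp x differentiableAt_id.neg
  obtain ⟨b1, b2⟩ := h2 (fun x => v (-x)) a1.refl hvd
  have e : (fun x => cutR R χ (fun x => v (-x)) (-x)) = cut2 R ψ χ u := by
    ext x
    simp only [cutR, cut2, hv, neg_neg, if_pos (show -R ≤ R by linarith)]
  have c1 := b1.refl
  have c2 := eng_refl (fun x => V (-x)) lam (cutR R χ (fun x => v (-x)))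
  simp only [neg_neg] at c1 c2
  rw [e] at c1 c2
  refine ⟨c1, ?_⟩
  change eng V lam _ = _ at c2
  have c3 := eng_refl V lam v
  have hvR : v (-R) = u (-R) := by simp only [hv, cutR, if_pos (show -R ≤ R by linarith)]
  rw [hvR] at b2
  rw [c2]
  linarith

lemma trace_bound (u : ℝ → ℂ) (hu : InH u) (R : ℝ) (hR : 0 < R) (y : ℝ)
    (hy : y ∈ Set.Icc (-R) R) :
    2 * R * ‖u y‖ ^ 2 ≤ 2 * (∫ x in (-R)..R, ‖u x‖ ^ 2) +
      8 * R ^ 2 * ∫ x in (-R)..R, ‖deriv u x‖ ^ 2 := by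
  set I1 := ∫ x in (-R)..R, ‖deriv u x‖ ^ 2 with hI1
  have hsq := memLp_sq hu.2.2
  have hI0 : 0 ≤ I1 := intervalIntegral.integral_nonneg (by linarith) (fun x _ => by positivity)
  have hsub : ∀ a b, -R ≤ a → a ≤ b → b ≤ R → ‖u b - u a‖ ^ 2 ≤ 2 * R * I1 := by
    intro a b ha hab hb
    have h1 := cs_interval hu.2.2 a b hab
    rw [hu.ftc a b] at h1
    have h2 : ∫ t in a..b, ‖deriv u t‖ ^ 2 ≤ I1 :=
      intervalIntegral.integral_mono_interval ha hab hb
        (Filter.Eventually.of_forall fun x => by positivity) hsq.intervalIntegrable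
    have h3 : 0 ≤ ∫ t in a..b, ‖deriv u t‖ ^ 2 :=
      intervalIntegral.integral_nonneg hab (fun x _ => by positivity)
    refine h1.trans (mul_le_mul (by linarith) h2 h3 (by linarith))
  have hpt : ∀ x ∈ Set.Icc (-R) R, ‖u y‖ ^ 2 ≤ 2 * ‖u x‖ ^ 2 + 4 * R * I1 := by
    intro x hx
    have h1 : ‖u y - u x‖ ^ 2 ≤ 2 * R * I1 := by
      rcases le_total x y with h | h
      · exact hsub x y hx.1 h hy.2
      · rw [norm_sub_rev]; exact hsub y x hy.1 h hx.2
    have h2 : ‖u y‖ ≤ ‖u x‖ + ‖u y - u x‖ := by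
      have := norm_add_le (u x) (u y - u x)
      simpa using this
    have h3 := pow_le_pow_left₀ (norm_nonneg _) h2 2
    nlinarith [sq_nonneg (‖u x‖ - ‖u y - u x‖)]
  have i1 : IntervalIntegrable (fun x => ‖u x‖ ^ 2) volume (-R) R :=
    Continuous.intervalIntegrable (by have := hu.1; fun_prop) _ _
  have h := intervalIntegral.integral_mono_on (by linarith : -R ≤ R)
    (_root_.intervalIntegrable_const (c := ‖u y‖ ^ 2))
    ((i1.const_mul 2).add (_root_.intervalIntegrable_const (c := 4 * R * I1))) hpt
  rw [intervalIntegral.integral_add (i1.const_mul 2) _root_.intervalIntegrable_const,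
    intervalIntegral.integral_const, intervalIntegral.integral_const,
    intervalIntegral.integral_const_mul] at h
  simp only [smul_eq_mul] at h
  nlinarith

/-- One-step upper bound. -/
lemma upper (V : ℝ → ℝ) (hVc : Continuous V) (hV : ∀ x, 0 ≤ V x) (lam R L : ℝ) (hR : 0 < R)
    (hRL : R < L) (hlam : 0 ≤ lam) (hq1 : ∀ x, R ≤ |x| → 1 ≤ V x - lam) (j : ℕ) (hj : 1 ≤ j)
    (hc : minmax V (InFormDomain V) j < lam) (L' : ℝ) (hL' : L < L') :
    minmax V (InDirichletDomain L') j ≤ lam +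
      (1 / (Real.sinh (L - R) * Real.cosh (L - R))) * (2 * (1 / R + 4 * R * lam)) := by
  obtain ⟨W, hW, hWj, hWl⟩ := exists_near V hVc hV j hj lam hc
  obtain ⟨ψ, χ, hψ, hχ, hT⟩ := lemT V hVc lam R L hR hRL hq1
  have hfin : FiniteDimensional ℂ W := Module.finite_of_finrank_pos (by omega)
  set δ := 1 / (Real.sinh (L - R) * Real.cosh (L - R)) with hδ
  have hδ0 : 0 ≤ δ := by
    have h1 : 0 < Real.sinh (L - R) := Real.sinh_pos_iff.2 (by linarith)
    have h2 := Real.cosh_pos (L - R)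
    positivity
  have hWE : ∀ u ∈ W, InE V u := fun u hu => by
    obtain ⟨a1, a2, a3, a4⟩ := hW u hu
    exact ⟨⟨a1.continuous, ⟨∅, Set.countable_empty, fun x _ => a1 x⟩, a3⟩, memLp_sq a2, a4⟩
  have heng : ∀ u, InE V u → eng V lam u = schForm V u - lam * ∫ x, ‖u x‖ ^ 2 :=
    fun u hu => (form_split V lam u hu.2.1 hu.1.2.2 hu.2.2).symm
  have hin : ∀ (u : ℝ → ℂ), ∀ x ∈ Set.Icc (-R) R, cut2 R ψ χ u x = u x := by
    intro u x hx
    simp only [cut2, if_pos (show -x ≤ R by linarith [hx.1]), if_pos hx.2]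
  have hout : ∀ (u : ℝ → ℂ) x, L ≤ |x| → cut2 R ψ χ u x = 0 := by
    intro u x hx
    rcases le_abs.1 hx with h | h
    · simp only [cut2, if_pos (show -x ≤ R by linarith), if_neg (show ¬ x ≤ R by linarith), hψ x h]
      simp
    · simp only [cut2, if_neg (show ¬ -x ≤ R by linarith), hχ _ h]
      simp
  -- the interior bounds
  have hInt : ∀ u ∈ W, ‖u R‖ ^ 2 + ‖u (-R)‖ ^ 2 ≤
      2 * (1 / R + 4 * R * lam) * ∫ x in (-R)..R, ‖u x‖ ^ 2 := by
    intro u hu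
    have hE := hWE u hu
    have hsq := memLp_sq hE.1.2.2
    have h1 : eng V lam u ≤ 0 := by rw [heng u hE]; linarith [hWl u hu]
    have iE := form_split_int V lam u hE.2.1 hE.1.2.2 hE.2.2
    have h2 : ∫ x in (-R)..R, (‖deriv u x‖ ^ 2 - lam * ‖u x‖ ^ 2) ≤ eng V lam u := by
      rw [intervalIntegral.integral_of_le (by linarith), ← integral_indicator measurableSet_Ioc]
      unfold eng
      apply integral_mono ((hsq.sub (hE.2.1.const_mul lam)).indicator measurableSet_Ioc) iE
      intro x
      by_cases hx : x ∈ Set.Ioc (-R) R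
      · simp only [Set.indicator_of_mem hx, Pi.sub_apply]
        have := mul_nonneg (hV x) (sq_nonneg ‖u x‖)
        nlinarith
      · simp only [Set.indicator_of_notMem hx]
        have hxR : R ≤ |x| := by
          by_contra! h
          exact hx ⟨(abs_lt.1 h).1, (abs_lt.1 h).2.le⟩
        have := hq1 x hxR
        positivity
    rw [intervalIntegral.integral_sub hsq.intervalIntegrable
      (hE.2.1.const_mul lam).intervalIntegrable, intervalIntegral.integral_const_mul] at h2
    set I0 := ∫ x in (-R)..R, ‖u x‖ ^ 2 with hI0
    have tr : ∀ y ∈ Set.Icc (-R) R, ‖u y‖ ^ 2 ≤ (1 / R + 4 * R * lam) * I0 := by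
      intro y hy
      have h3 := trace_bound u hE.1 R hR y hy
      have h4 : 8 * R ^ 2 * (∫ x in (-R)..R, ‖deriv u x‖ ^ 2) ≤ 8 * R ^ 2 * (lam * I0) :=
        mul_le_mul_of_nonneg_left (by linarith) (by positivity)
      have h5 : 2 * R * ((1 / R + 4 * R * lam) * I0) = 2 * I0 + 8 * R ^ 2 * (lam * I0) := by
        field_simp
        ring
      have h6 : 2 * R * ‖u y‖ ^ 2 ≤ 2 * R * ((1 / R + 4 * R * lam) * I0) := by linarith
      exact le_of_mul_le_mul_left h6 (by linarith)
    have t1 := tr R ⟨by linarith, le_rfl⟩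
    have t2 := tr (-R) ⟨le_rfl, by linarith⟩
    linarith
  let T : W →ₗ[ℂ] (ℝ → ℂ) :=
    { toFun := fun u => cut2 R ψ χ u
      map_add' := fun u v => by
        ext x
        simp only [cut2, Submodule.coe_add, Pi.add_apply]
        split_ifs <;> ring
      map_smul' := fun c u => by
        ext x
        simp only [cut2, Submodule.coe_smul, Pi.smul_apply, RingHom.id_apply, smul_eq_mul]
        split_ifs <;> ring }
  have hTinj : Function.Injective T := by
    rw [← LinearMap.ker_eq_bot, LinearMap.ker_eq_bot']
    intro u hu
    by_contra hne
    have hE := hWE u u.2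
    have hz : ∀ x ∈ Set.Icc (-R) R, (u : ℝ → ℂ) x = 0 := by
      intro x hx
      rw [← hin u x hx]
      exact congrFun hu x
    have h1 := L2_pos u hE.1.1 hE.2.1 (fun h => hne (Subtype.ext h))
    have h2 : eng V lam u ≤ 0 := by rw [heng _ hE]; linarith [hWl u u.2]
    have h3 : ∫ x, ‖(u : ℝ → ℂ) x‖ ^ 2 ≤ eng V lam u := by
      apply integral_mono hE.2.1 (form_split_int V lam u hE.2.1 hE.1.2.2 hE.2.2)
      intro x
      simp only
      by_cases hx : x ∈ Set.Icc (-R) R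
      · rw [hz x hx]
        simp
      · have hxR : R ≤ |x| := by
          by_contra! h
          exact hx ⟨(abs_lt.1 h).1.le, (abs_lt.1 h).2.le⟩
        have h4 := hq1 x hxR
        have h5 : 0 ≤ ‖(u : ℝ → ℂ) x‖ ^ 2 := by positivity
        have h6 : 0 ≤ ‖deriv (u : ℝ → ℂ) x‖ ^ 2 := by positivity
        nlinarith
    linarith
  apply lemS V hVc hV L L' _ (by linarith) hL' j hj (LinearMap.range T)
  · rintro _ ⟨u, rfl⟩
    exact ⟨(hT u (hWE u u.2) (hW u u.2).1).1.1, hout u⟩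
  · rw [LinearMap.finrank_range_of_inj hTinj, hWj]
  · rintro _ ⟨u, rfl⟩
    obtain ⟨a1, a2⟩ := hT u (hWE u u.2) (hW u u.2).1
    have h1 : eng V lam u ≤ 0 := by rw [heng _ (hWE u u.2)]; linarith [hWl u u.2]
    rw [heng _ a1] at a2
    have h2 := mul_le_mul_of_nonneg_left (hInt u u.2) hδ0
    have h3 : ∫ x in (-R)..R, ‖(u : ℝ → ℂ) x‖ ^ 2 ≤ ∫ x, ‖cut2 R ψ χ u x‖ ^ 2 := by
      rw [intervalIntegral.integral_congr (g := fun x => ‖cut2 R ψ χ u x‖ ^ 2)]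
      · exact interval_le_full a1.2.1 (fun x => by positivity) _ _ (by linarith)
      · intro x hx
        rw [Set.uIcc_of_le (by linarith)] at hx
        simp only
        rw [hin u x hx]
    have h4 : δ * (2 * (1 / R + 4 * R * lam) * ∫ x in (-R)..R, ‖(u : ℝ → ℂ) x‖ ^ 2) ≤
        δ * (2 * (1 / R + 4 * R * lam) * ∫ x, ‖cut2 R ψ χ u x‖ ^ 2) := by
      apply mul_le_mul_of_nonneg_left _ hδ0
      apply mul_le_mul_of_nonneg_left h3
      positivity
    show schForm V (cut2 R ψ χ u) ≤ _ * ∫ x, ‖cut2 R ψ χ u x‖ ^ 2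
    rw [add_mul]
    linarith

/-- the `j`-th Dirichlet eigenvalue `λ_j^L` on `(−L, L)` satisfies
`λ_j < λ_j^L < λ_j + c_j e^{−2aL}` for all sufficiently large `L`. -/
theorem dirichlet_eigenvalue_exponentially_close
    (V : ℝ → ℝ) (b₀ : ℝ) (hb₀ : 0 < b₀) (hVlb : ∀ x, b₀ ≤ V x)
    (hVc : Continuous V)
    (hVinf : Filter.Tendsto V (Filter.cocompact ℝ) Filter.atTop)
    (hVgrow : ∀ b > (0 : ℝ), ∃ k > (0 : ℝ), ∀ x : ℝ, |V x| ≤ k * Real.exp (b * |x|))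
    (j : ℕ) (hj : 1 ≤ j)
    (lamj : ℝ) (hlamj : lamj = minmax V (InFormDomain V) j)
    (lamjL : ℝ → ℝ) (hlamjL : ∀ L > (0 : ℝ), lamjL L = minmax V (InDirichletDomain L) j) :
    ∃ cj > (0 : ℝ), ∃ a > (0 : ℝ), ∃ L₀ > (0 : ℝ), ∀ L : ℝ, L₀ < L →
      lamj < lamjL L ∧ lamjL L < lamj + cj * Real.exp (-2 * a * L) := by
  have hV : ∀ x, 0 ≤ V x := fun x => hb₀.le.trans (hVlb x)
  have hlam0 : 0 ≤ lamj := by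
    rw [hlamj]
    apply Real.sInf_nonneg
    rintro r ⟨W, _, _, rfl⟩
    apply Real.sSup_nonneg
    rintro q ⟨u, _, _, rfl⟩
    exact div_nonneg (schForm_nonneg V hV u) (integral_nonneg fun x => by positivity)
  -- radius beyond which the potential is large
  obtain ⟨R, hR, hRV⟩ : ∃ R : ℝ, 0 < R ∧ ∀ x, R ≤ |x| → lamj + 2 ≤ V x := by
    have h1 := hVinf.eventually (Filter.eventually_ge_atTop (lamj + 2))
    rw [← Metric.cobounded_eq_cocompact,
      (Metric.hasBasis_cobounded_compl_closedBall (0 : ℝ)).eventually_iff] at h1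
    obtain ⟨R, _, hR⟩ := h1
    refine ⟨max R 0 + 1, by positivity, fun x hx => hR ?_⟩
    simp only [Set.mem_compl_iff, Metric.mem_closedBall, dist_zero_right, Real.norm_eq_abs, not_le]
    linarith [le_max_left R 0]
  set B := 2 * (1 / R + 4 * R * (lamj + 1)) with hB
  have hB0 : 0 ≤ B := by positivity
  refine ⟨(1 + 8 * Real.exp (2 * R) * B) * Real.exp 2 + 1, by positivity, 1, one_pos, R + 2,
    by linarith, fun L hL => ?_⟩
  rw [hlamjL L (by linarith)]
  refine ⟨by rw [hlamj]; exact strict_lt V hVc hV L (by linarith) j hj, ?_⟩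
  set M := L - 1 with hM
  set ε := Real.exp (-2 * M) with hε
  have hε0 : 0 < ε := Real.exp_pos _
  have hε1 : ε ≤ 1 := by
    rw [hε, Real.exp_le_one_iff]
    linarith
  have hup := upper V hVc hV (lamj + ε) R M hR (by linarith) (by linarith)
    (fun x hx => by linarith [hRV x hx]) j hj (by rw [← hlamj]; linarith) L (by linarith)
  have hδ : 1 / (Real.sinh (M - R) * Real.cosh (M - R)) ≤ 8 * Real.exp (2 * R) * ε := by
    set y := M - R with hy
    have hy1 : 1 ≤ y := by linarith
    have hs : 0 < Real.sinh y := Real.sinh_pos_iff.2 (by linarith)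
    have hc := Real.cosh_pos y
    have e1 : Real.exp (2 * R) * ε = (Real.exp (2 * y))⁻¹ := by
      rw [hε, ← Real.exp_add, ← Real.exp_neg, hy]
      congr 1
      ring
    rw [mul_assoc, e1, div_le_iff₀ (by positivity)]
    have e2 : Real.sinh y * Real.cosh y = (Real.exp (2 * y) - Real.exp (-(2 * y))) / 4 := by
      rw [Real.sinh_eq, Real.cosh_eq]
      have a1 : Real.exp (2 * y) = Real.exp y * Real.exp y := by
        rw [← Real.exp_add]; congr 1; ring
      have a2 : Real.exp (-(2 * y)) = Real.exp (-y) * Real.exp (-y) := by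
        rw [← Real.exp_add]; congr 1; ring
      rw [a1, a2]
      ring
    have e3 : Real.exp (-(2 * y)) ≤ 1 := by
      rw [Real.exp_le_one_iff]; linarith
    have e4 : 2 ≤ Real.exp (2 * y) := by
      have := Real.add_one_le_exp (2 * y)
      linarith
    have hp := Real.exp_pos (2 * y)
    rw [e2, ← div_eq_mul_inv, div_mul_eq_mul_div, le_div_iff₀ hp]
    linarith
  have hBB : 2 * (1 / R + 4 * R * (lamj + ε)) ≤ B := by
    rw [hB]
    have : 4 * R * (lamj + ε) ≤ 4 * R * (lamj + 1) :=
      mul_le_mul_of_nonneg_left (by linarith) (by linarith)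
    linarith
  have hprod : 1 / (Real.sinh (M - R) * Real.cosh (M - R)) * (2 * (1 / R + 4 * R * (lamj + ε))) ≤
      8 * Real.exp (2 * R) * ε * B :=
    mul_le_mul hδ hBB (by positivity) (by positivity)
  have hεL : ε = Real.exp 2 * Real.exp (-2 * 1 * L) := by
    rw [hε, ← Real.exp_add, hM]
    congr 1
    ring
  have hpos := Real.exp_pos (-2 * 1 * L)
  have hfin : ε + 8 * Real.exp (2 * R) * ε * B =
      (1 + 8 * Real.exp (2 * R) * B) * Real.exp 2 * Real.exp (-2 * 1 * L) := by
    rw [hεL]; ring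
  rw [add_mul]
  linarith
end
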